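/- arXiv:2407.04783 — 2 statements merged into one kernel-verified Lean document; each statement's English description precedes it below -/
import Mathlib

section
/- Let X be a measurable space, F a family of probability measures on X, α ∈ (0,1), β ∈ (0, 1/e], C > 1, and L, m, k positive integers. If there exists a (C, α)-accurate (m, 1−β, L)-stable list decoder for F, then there exists a (C, 5α)-accurate (m₁, 1−2kβ, L₁)-stable list decoder for the class kmix_k(F) of k-mixtures of F, where m₁ = ⌈(2mk + 8k·log(1/β))/α⌉ and L₁ = (L·k/α)^k · (10·e·k·log(1/β)/α)^{mk}. -/
open MeasureTheory ProbabilityTheory Matrix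

/-- Total variation distance between two measures. -/
noncomputable def tvDist {X : Type*} [MeasurableSpace X] (μ ν : Measure X) : ℝ :=
  ⨆ E : {E : Set X // MeasurableSet E}, |(μ E.1).toReal - (ν E.1).toReal|

/-- Total variation distance from a measure to a family of measures. -/
noncomputable def tvDistSet {X : Type*} [MeasurableSpace X] (g : Measure X)
    (F : Set (Measure X)) : ℝ :=
  ⨅ f : F, tvDist g f.1

/-- A `(C, α)`-accurate `(m, ρ, L)`-stable list decoder for `F`. -/
def IsStableListDecoder {X : Type*} [MeasurableSpace X] (F : Set (Measure X))
    (C α : ℝ) (m : ℕ) (ρ : ℝ) (L : ℝ)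
    (A : (Fin m → X) → Set (Measure X)) : Prop :=
  (∀ S, (A S).Finite ∧ ((A S).ncard : ℝ) ≤ L ∧ ∀ μ ∈ A S, IsProbabilityMeasure μ) ∧
  (∀ g : Measure X, IsProbabilityMeasure g →
    ∃ gt : Measure X, IsProbabilityMeasure gt ∧
      MeasurableSet {S : Fin m → X | gt ∈ A S} ∧
      ENNReal.ofReal ρ ≤ Measure.pi (fun _ : Fin m => g) {S | gt ∈ A S} ∧
      tvDist gt g ≤ α + C * tvDistSet g F)

instance {X : Type*} [MeasurableSpace X] : MeasurableSpace (ProbabilityMeasure X) :=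
  inferInstanceAs (MeasurableSpace {μ : Measure X // IsProbabilityMeasure μ})

/-- `(ε, δ)`-differential privacy of a kernel on datasets of size `n`. -/
def IsDPKernel {X Y : Type*} [MeasurableSpace X] [MeasurableSpace Y] {n : ℕ}
    (M : Kernel (Fin n → X) Y) (ε δ : ℝ) : Prop :=
  ∀ D D' : Fin n → X, (∃ i, D i ≠ D' i ∧ ∀ j, j ≠ i → D j = D' j) →
    ∀ E : Set Y, MeasurableSet E →
      M D E ≤ ENNReal.ofReal (Real.exp ε) * M D' E + ENNReal.ofReal δ

/-- `F` is `(ε,δ)`-privately `C`-agnostic `(n,α,β)`-learnable. -/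
def PrivAgnosticLearnable {X : Type*} [MeasurableSpace X] (F : Set (Measure X))
    (ε δ C : ℝ) (n : ℕ) (α β : ℝ) : Prop :=
  ∃ M : Kernel (Fin n → X) (ProbabilityMeasure X), IsMarkovKernel M ∧ IsDPKernel M ε δ ∧
    ∀ g : Measure X, IsProbabilityMeasure g →
      ENNReal.ofReal (1 - β) ≤
        ∫⁻ S, M S {f : ProbabilityMeasure X | tvDist (f : Measure X) g ≤ C * tvDistSet g F + α}
          ∂(Measure.pi fun _ : Fin n => g)

/-- The class of `k`-mixtures of `F`. -/
noncomputable def kmix {X : Type*} [MeasurableSpace X] (k : ℕ) (F : Set (Measure X)) :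
    Set (Measure X) :=
  {ν | ∃ (w : Fin k → ℝ) (f : Fin k → Measure X),
    (∀ i, 0 ≤ w i) ∧ (∑ i, w i = 1) ∧ (∀ i, f i ∈ F) ∧
    ν = ∑ i, ENNReal.ofReal (w i) • f i}

/-- Density of the `d`-dimensional Gaussian with mean `μ` and covariance `S`. -/
noncomputable def gaussianPdf (d : ℕ) (μ : Fin d → ℝ) (S : Matrix (Fin d) (Fin d) ℝ)
    (x : Fin d → ℝ) : ℝ :=
  (Real.sqrt ((2 * Real.pi) ^ d * S.det))⁻¹ *
    Real.exp (-(1 / 2) * ((x - μ) ⬝ᵥ (S⁻¹ *ᵥ (x - μ))))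

/-- The family of `d`-dimensional Gaussian measures. -/
noncomputable def Gd (d : ℕ) : Set (Measure (Fin d → ℝ)) :=
  {ν | ∃ (μ : Fin d → ℝ) (S : Matrix (Fin d) (Fin d) ℝ), S.PosDef ∧
    ν = volume.withDensity fun x => ENNReal.ofReal (gaussianPdf d μ S x)}

open scoped ENNReal

namespace SLD

variable {X : Type*} [MeasurableSpace X]

lemma toReal_le_one (μ : Measure X) [IsProbabilityMeasure μ] (E : Set X) : (μ E).toReal ≤ 1 := by
  have := ENNReal.toReal_mono ENNReal.one_ne_top (prob_le_one (μ := μ) (s := E))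
  simpa using this

lemma abs_le_one (μ ν : Measure X) [IsProbabilityMeasure μ] [IsProbabilityMeasure ν] (E : Set X) :
    |(μ E).toReal - (ν E).toReal| ≤ 1 := by
  have h1 := toReal_le_one μ E
  have h2 := toReal_le_one ν E
  have h3 : 0 ≤ (μ E).toReal := ENNReal.toReal_nonneg
  have h4 : 0 ≤ (ν E).toReal := ENNReal.toReal_nonneg
  rw [abs_le]; constructor <;> linarith

lemma le_tvDist (μ ν : Measure X) [IsProbabilityMeasure μ] [IsProbabilityMeasure ν] {E : Set X}
    (hE : MeasurableSet E) : |(μ E).toReal - (ν E).toReal| ≤ tvDist μ ν := by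
  have hb : BddAbove (Set.range fun E : {E : Set X // MeasurableSet E} =>
      |(μ E.1).toReal - (ν E.1).toReal|) := by
    refine ⟨1, ?_⟩
    rintro _ ⟨E, rfl⟩
    exact abs_le_one μ ν E.1
  exact le_ciSup hb ⟨E, hE⟩

lemma tvDist_le {μ ν : Measure X} {B : ℝ}
    (h : ∀ E, MeasurableSet E → |(μ E).toReal - (ν E).toReal| ≤ B) : tvDist μ ν ≤ B := by
  have : Nonempty {E : Set X // MeasurableSet E} := ⟨⟨∅, MeasurableSet.empty⟩⟩
  exact ciSup_le fun E => h E.1 E.2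

lemma tvDist_nonneg (μ ν : Measure X) : 0 ≤ tvDist μ ν :=
  Real.iSup_nonneg fun _ => abs_nonneg _

lemma tvDistSet_nonneg (g : Measure X) (F : Set (Measure X)) : 0 ≤ tvDistSet g F :=
  Real.iInf_nonneg fun _ => tvDist_nonneg _ _

lemma tvDistSet_le (g : Measure X) {F : Set (Measure X)} {f : Measure X} (hf : f ∈ F) :
    tvDistSet g F ≤ tvDist g f := by
  have hb : BddBelow (Set.range fun f : F => tvDist g f.1) :=
    ⟨0, by rintro _ ⟨f, rfl⟩; exact tvDist_nonneg _ _⟩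
  exact ciInf_le hb ⟨f, hf⟩

/-- Binomial upper tail, recursively. -/
noncomputable def qq (p r : ℝ≥0∞) : ℕ → ℕ → ℝ≥0∞
  | _, 0 => 1
  | 0, _ + 1 => 0
  | n + 1, m + 1 => p * qq p r n m + r * qq p r n (m + 1)

lemma qq_zero (p r : ℝ≥0∞) (n : ℕ) : qq p r n 0 = 1 := by cases n <;> simp [qq]

lemma qq_tail (p r h : ℝ≥0∞) (hp : 2 * h = p) (hpr : p + r = 1) :
    ∀ n m, 1 ≤ qq p r n m + 2 ^ m * (r + h) ^ n := by
  intro n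
  induction n with
  | zero =>
    intro m
    cases m with
    | zero => simp [qq]
    | succ m =>
      simp only [qq, pow_zero, mul_one, zero_add]
      exact one_le_pow₀ (by norm_num)
  | succ n ih =>
    intro m
    cases m with
    | zero => simp [qq]
    | succ m =>
      have h1 := ih m
      have h2 := ih (m + 1)
      calc (1 : ℝ≥0∞) = p * 1 + r * 1 := by simp [hpr]
        _ ≤ p * (qq p r n m + 2 ^ m * (r + h) ^ n)
            + r * (qq p r n (m + 1) + 2 ^ (m + 1) * (r + h) ^ n) := by gcongr
        _ = _ := by
          simp only [qq]
          rw [← hp]; ring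

lemma measurable_hit {n m : ℕ} {B : Set (Fin m → X)} (hB : MeasurableSet B) :
    MeasurableSet {S : Fin n → X | ∃ T : Fin m ↪o Fin n, S ∘ T ∈ B} := by
  rw [Set.ofPred_exists]
  refine MeasurableSet.iUnion fun T => ?_
  have : Measurable fun S : Fin n → X => S ∘ T :=
    measurable_pi_lambda _ fun i => measurable_pi_apply _
  exact this hB

lemma pi_succ (g : Measure X) [IsProbabilityMeasure g] (n : ℕ) {E : Set (Fin (n + 1) → X)}
    (hE : MeasurableSet E) :
    Measure.pi (fun _ : Fin (n + 1) => g) E =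
      ∫⁻ x, Measure.pi (fun _ : Fin n => g) {S | (Fin.cons x S : Fin (n + 1) → X) ∈ E} ∂g := by
  have h := (measurePreserving_piFinSuccAbove (fun _ : Fin (n + 1) => g) 0).symm
  rw [← h.measure_preimage hE.nullMeasurableSet, Measure.prod_apply (h.measurable hE)]
  refine lintegral_congr fun x => ?_
  congr 1
  ext S
  simp [MeasurableEquiv.piFinSuccAbove, Fin.insertNthEquiv]

lemma sampling (p r : ℝ≥0∞) (g a b : Measure X) [IsProbabilityMeasure g] [IsProbabilityMeasure a]
    (hg : g = p • a + b) (hb : b Set.univ = r) :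
    ∀ (n m : ℕ) (B : Set (Fin m → X)), MeasurableSet B →
      qq p r n m * Measure.pi (fun _ : Fin m => a) B ≤
        Measure.pi (fun _ : Fin n => g) {S | ∃ T : Fin m ↪o Fin n, S ∘ T ∈ B} := by
  intro n
  have zero_case : ∀ (n : ℕ) (B : Set (Fin 0 → X)), MeasurableSet B →
      qq p r n 0 * Measure.pi (fun _ : Fin 0 => a) B ≤
        Measure.pi (fun _ : Fin n => g) {S | ∃ T : Fin 0 ↪o Fin n, S ∘ T ∈ B} := by
    intro n B hB
    rw [qq_zero, one_mul]
    rcases B.eq_empty_or_nonempty with rfl | ⟨x, hx⟩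
    · simp
    · have : {S : Fin n → X | ∃ T : Fin 0 ↪o Fin n, S ∘ T ∈ B} = Set.univ := by
        ext S
        simp only [Set.mem_ofPred_eq, Set.mem_univ, iff_true]
        refine ⟨OrderEmbedding.ofIsEmpty, ?_⟩
        convert hx
      rw [this, measure_univ]
      exact prob_le_one
  induction n with
  | zero =>
    intro m B hB
    cases m with
    | zero => exact zero_case _ B hB
    | succ m => simp [qq]
  | succ n ih =>
    intro m B hB
    cases m with
    | zero => exact zero_case _ B hB
    | succ m =>
      rw [pi_succ g n (measurable_hit hB)]
      conv_rhs => rw [hg]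
      rw [lintegral_add_measure, lintegral_smul_measure]
      simp only [qq]
      rw [add_mul]
      have hcons : ∀ x : X, Measurable fun S : Fin m → X => (Fin.cons x S : Fin (m + 1) → X) := by
        intro x
        refine measurable_pi_lambda _ fun i => ?_
        refine Fin.cases ?_ (fun j => ?_) i
        · simp
        · simpa using measurable_pi_apply j
      rw [← hg]
      gcongr ?_ + ?_
      · rw [pi_succ a m hB, smul_eq_mul, mul_assoc]
        gcongr
        rw [← lintegral_const_mul']
        · refine lintegral_mono fun x => ?_
          refine (ih m _ (hcons x hB)).trans (measure_mono ?_)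
          rintro S ⟨T, hT⟩
          let T' : Fin (m + 1) ↪o Fin (n + 1) := OrderEmbedding.ofStrictMono
            (Fin.cons 0 (fun i => (T i).succ)) (by
              intro i j hij
              induction i using Fin.cases with
              | zero =>
                induction j using Fin.cases with
                | zero => simp at hij
                | succ j => simp
              | succ i =>
                induction j using Fin.cases with
                | zero => simp at hij
                | succ j => simpa using hij)
          refine ⟨T', ?_⟩
          have hT2 : (Fin.cons x (S ∘ T) : Fin (m + 1) → X) ∈ B := hT
          have : (Fin.cons x S : Fin (n + 1) → X) ∘ T' = Fin.cons x (S ∘ T) := by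
            funext i
            induction i using Fin.cases with
            | zero => rfl
            | succ i => rfl
          change (Fin.cons x S : Fin (n + 1) → X) ∘ T' ∈ B
          rw [this]
          exact hT2
        · have : ∀ n m, qq p r n m ≠ ∞ := by
            have hpr : p + r = 1 := by
              have := congrArg (fun μ : Measure X => μ Set.univ) hg
              simpa [hb] using this.symm
            have hp : p ≠ ∞ := by rintro rfl; simp at hpr
            have hr : r ≠ ∞ := by rintro rfl; simp at hpr
            intro n
            induction n with
            | zero => intro m; cases m <;> simp [qq]
            | succ n ih =>
              intro m
              cases m with
              | zero => simp [qq]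
              | succ m =>
                simp only [qq]
                exact ENNReal.add_ne_top.2
                  ⟨ENNReal.mul_ne_top hp (ih _), ENNReal.mul_ne_top hr (ih _)⟩
          exact this _ _
      · calc r * qq p r n (m + 1) * Measure.pi (fun _ : Fin (m + 1) => a) B
            = ∫⁻ _, qq p r n (m + 1) * Measure.pi (fun _ : Fin (m + 1) => a) B ∂b := by
              rw [lintegral_const, hb]; ring
          _ ≤ _ := by
            refine lintegral_mono fun x => ?_
            refine (ih (m + 1) B hB).trans (measure_mono ?_)
            rintro S ⟨T, hT⟩
            refine ⟨T.trans (Fin.succOrderEmb n), ?_⟩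
            exact hT

lemma sampling_prob (g a b : Measure X) [IsProbabilityMeasure g] [IsProbabilityMeasure a]
    (w β : ℝ) (n m : ℕ) (hβ0 : 0 < β) (hβ1 : β < 1) (hw0 : 0 ≤ w) (hw1 : w ≤ 1)
    (hg : g = ENNReal.ofReal w • a + b)
    (hn : 2 * m + 8 * Real.log (1 / β) ≤ n * w)
    (B : Set (Fin m → X)) (hB : MeasurableSet B)
    (hBa : ENNReal.ofReal (1 - β) ≤ Measure.pi (fun _ : Fin m => a) B) :
    ENNReal.ofReal (1 - 2 * β) ≤
      Measure.pi (fun _ : Fin n => g) {S | ∃ T : Fin m ↪o Fin n, S ∘ T ∈ B} := by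
  have hpr : ENNReal.ofReal w + b Set.univ = 1 := by
    have := congrArg (fun μ : Measure X => μ Set.univ) hg
    simpa using this.symm
  have hb : b Set.univ = ENNReal.ofReal (1 - w) := by
    have h1 : ENNReal.ofReal w + ENNReal.ofReal (1 - w) = 1 := by
      rw [← ENNReal.ofReal_add hw0 (by linarith)]; simp
    rw [← h1] at hpr
    exact (ENNReal.add_right_inj ENNReal.ofReal_ne_top).1 hpr
  rw [hb] at hpr
  have hs := sampling (ENNReal.ofReal w) (ENNReal.ofReal (1 - w)) g a b hg hb n m B hB
  have ht := qq_tail (ENNReal.ofReal w) (ENNReal.ofReal (1 - w)) (ENNReal.ofReal (w / 2))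
    (by rw [show (2 : ℝ≥0∞) = ENNReal.ofReal 2 by simp, ← ENNReal.ofReal_mul (by norm_num)]
        congr 1; ring) hpr n m
  have hl : 0 < Real.log (1 / β) := Real.log_pos (by rw [lt_div_iff₀ hβ0]; linarith)
  have htail : (2 : ℝ) ^ m * (1 - w / 2) ^ n ≤ β := by
    have e1 : (2 : ℝ) ^ m ≤ Real.exp m := by
      rw [← Real.exp_one_pow m]
      have := Real.add_one_le_exp (1 : ℝ)
      gcongr; linarith
    have e2 : (1 - w / 2) ^ n ≤ Real.exp (-(n * w / 2)) := by
      have := Real.add_one_le_exp (-(w / 2))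
      calc (1 - w / 2) ^ n ≤ (Real.exp (-(w / 2))) ^ n := by
            gcongr
            · linarith
            · linarith
        _ = _ := by rw [← Real.exp_nat_mul]; congr 1; ring
    have e3 : β = Real.exp (- Real.log (1 / β)) := by
      rw [one_div, Real.log_inv, neg_neg, Real.exp_log hβ0]
    calc (2 : ℝ) ^ m * (1 - w / 2) ^ n ≤ Real.exp m * Real.exp (-(n * w / 2)) := by
          have : 0 ≤ (1 - w / 2) ^ n := pow_nonneg (by linarith) _
          gcongr
      _ = Real.exp (m - n * w / 2) := by rw [← Real.exp_add]; congr 1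
      _ ≤ Real.exp (- Real.log (1 / β)) := by
          apply Real.exp_le_exp.2; linarith
      _ = β := e3.symm
  have ht2 : (2 : ℝ≥0∞) ^ m * (ENNReal.ofReal (1 - w) + ENNReal.ofReal (w / 2)) ^ n
      ≤ ENNReal.ofReal β := by
    rw [← ENNReal.ofReal_add (by linarith) (by linarith),
      show (2 : ℝ≥0∞) = ENNReal.ofReal 2 by simp, ← ENNReal.ofReal_pow (by norm_num),
      ← ENNReal.ofReal_pow (by linarith), ← ENNReal.ofReal_mul (by positivity)]
    apply ENNReal.ofReal_le_ofReal
    convert htail using 3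
    ring
  have hq : ENNReal.ofReal (1 - β) ≤ qq (ENNReal.ofReal w) (ENNReal.ofReal (1 - w)) n m := by
    rw [ENNReal.ofReal_sub _ hβ0.le, ENNReal.ofReal_one]
    exact tsub_le_iff_right.2 (ht.trans (by gcongr))
  calc ENNReal.ofReal (1 - 2 * β) ≤ ENNReal.ofReal ((1 - β) * (1 - β)) := by
        apply ENNReal.ofReal_le_ofReal; nlinarith
    _ = ENNReal.ofReal (1 - β) * ENNReal.ofReal (1 - β) := by
        rw [ENNReal.ofReal_mul (by linarith)]
    _ ≤ _ := (mul_le_mul' hq hBa).trans hs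

lemma card_orderEmb (m n : ℕ) : Nat.card (Fin m ↪o Fin n) = n.choose m := by
  rw [Nat.card_congr Set.powersetCard.ofFinEmbEquiv, Set.powersetCard.card]
  simp

lemma choose_bound (m k n : ℕ) (hm : 0 < m) (hk : 0 < k) (l α : ℝ) (hl : 1 ≤ l)
    (hα : α ∈ Set.Ioo (0 : ℝ) 1)
    (hn : n = ⌈(2 * (m : ℝ) * k + 8 * k * l) / α⌉₊) :
    (n.choose m : ℝ) ≤ (10 * Real.exp 1 * k * l / α) ^ m := by
  obtain ⟨hα0, hα1⟩ := hα
  have hk1 : (1 : ℝ) ≤ k := by exact_mod_cast hk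
  have hm1 : (1 : ℝ) ≤ m := by exact_mod_cast hm
  set x : ℝ := k * l / α with hx
  have hx1 : 1 ≤ x := by
    rw [hx, le_div_iff₀ hα0]; nlinarith
  have he : (2 : ℝ) ≤ Real.exp 1 := by
    have := Real.add_one_le_exp (1 : ℝ); linarith
  have hnle : (n : ℝ) ≤ 2 * m * x + 8 * x + x := by
    have h0 : (n : ℝ) < (2 * (m : ℝ) * k + 8 * k * l) / α + 1 := by
      rw [hn]; apply Nat.ceil_lt_add_one; positivity
    have h1 : (2 * (m : ℝ) * k + 8 * k * l) / α ≤ 2 * m * x + 8 * x := by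
      rw [div_le_iff₀ hα0]
      have : x * α = k * l := by rw [hx]; field_simp
      have e : (2 * m * x + 8 * x) * α = 2 * m * (k * l) + 8 * (k * l) := by rw [← this]; ring
      rw [e]
      have : (m : ℝ) * k * 1 ≤ m * k * l := by gcongr
      nlinarith
    linarith
  have hrw : 10 * Real.exp 1 * k * l / α = Real.exp 1 * (10 * x) := by rw [hx]; ring
  rw [hrw]
  rcases Nat.lt_or_ge m 2 with h | h
  · have : m = 1 := by omega
    subst this
    simp only [Nat.choose_one_right, pow_one, Nat.cast_one] at *
    nlinarith
  · have hm2 : (2 : ℝ) ≤ m := by exact_mod_cast h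
    have hn2 : (n : ℝ) ≤ m * (10 * x) := by nlinarith
    have h1 := Nat.choose_le_pow_div (α := ℝ) m n
    have h2 := Real.pow_div_factorial_le_exp (x := (m : ℝ)) (by positivity) m
    calc (n.choose m : ℝ) ≤ (n : ℝ) ^ m / m.factorial := h1
      _ ≤ (m * (10 * x)) ^ m / m.factorial := by gcongr
      _ = ((m : ℝ) ^ m / m.factorial) * (10 * x) ^ m := by rw [mul_pow]; ring
      _ ≤ Real.exp m * (10 * x) ^ m := by gcongr
      _ = _ := by rw [mul_pow (Real.exp 1), Real.exp_one_pow]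

lemma withDensity_finset_sum {ι : Type*} (s : Finset ι) (w : ι → ℝ≥0∞) (f : ι → Measure X)
    (ρ : X → ℝ≥0∞) :
    (∑ i ∈ s, w i • f i).withDensity ρ = ∑ i ∈ s, w i • (f i).withDensity ρ := by
  classical
  induction s using Finset.induction_on with
  | empty => simp
  | insert a s ha ih =>
    rw [Finset.sum_insert ha, Finset.sum_insert ha, withDensity_add_measure, ih,
      withDensity_smul_measure]

/-- The common part of `g` and `f`. -/
lemma overlap (g f : Measure X) [IsProbabilityMeasure g] [IsProbabilityMeasure f] :
    ∃ ρ : X → ℝ≥0∞, (∀ x, ρ x ≤ 1) ∧ f.withDensity ρ ≤ g ∧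
      1 - (f.withDensity ρ Set.univ).toReal ≤ tvDist g f := by
  set r := g.rnDeriv f with hr
  have hrm : Measurable r := Measure.measurable_rnDeriv g f
  refine ⟨fun x => min 1 (r x), fun x => min_le_left _ _, ?_, ?_⟩
  · exact (withDensity_mono (Filter.Eventually.of_forall fun x => min_le_right _ _)).trans
      (Measure.withDensity_rnDeriv_le g f)
  · obtain ⟨N, hN, hN1, hN2⟩ := Measure.mutuallySingular_singularPart g f
    -- singular part vanishes on N, f vanishes on Nᶜ
    set E : Set X := {x | r x < 1} ∩ N with hE
    have hlt : MeasurableSet {x | r x < 1} := measurableSet_lt hrm measurable_const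
    have hEm : MeasurableSet E := hlt.inter hN
    have hgE : g E = f.withDensity r E := by
      conv_lhs => rw [Measure.haveLebesgueDecomposition_add g f]
      rw [Measure.add_apply, measure_mono_null (Set.inter_subset_right) hN1, zero_add]
    have hcE : f.withDensity (fun x => min 1 (r x)) E = g E := by
      rw [hgE, withDensity_apply _ hEm, withDensity_apply _ hEm]
      refine setLIntegral_congr_fun hEm fun x hx => ?_
      exact min_eq_right (le_of_lt hx.1)
    have hcEc : f.withDensity (fun x => min 1 (r x)) Eᶜ = f Eᶜ := by
      rw [withDensity_apply _ hEm.compl]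
      have : ∫⁻ x in Eᶜ, min 1 (r x) ∂f = ∫⁻ x in Eᶜ, 1 ∂f := by
        apply lintegral_congr_ae
        rw [Filter.EventuallyEq, ae_restrict_iff' hEm.compl]
        have : ∀ᵐ x ∂f, x ∈ N := by
          rw [ae_iff]; exact hN2
        filter_upwards [this] with x hx hxE
        apply min_eq_left
        by_contra hcon
        exact hxE ⟨not_le.1 hcon, hx⟩
      rw [this]; simp
    have htot : f.withDensity (fun x => min 1 (r x)) Set.univ = g E + f Eᶜ := by
      rw [← measure_add_measure_compl hEm, hcE, hcEc]
    have h1 := le_tvDist g f hEm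
    have h2 : (f E).toReal + (f Eᶜ).toReal = 1 := by
      rw [← ENNReal.toReal_add (measure_ne_top _ _) (measure_ne_top _ _),
        measure_add_measure_compl hEm, measure_univ, ENNReal.toReal_one]
    rw [htot, ENNReal.toReal_add (measure_ne_top _ _) (measure_ne_top _ _)]
    have h3 := neg_abs_le ((g E).toReal - (f E).toReal)
    linarith

lemma sum_apply_toReal {k : ℕ} (w : Fin k → ℝ) (hw : ∀ i, 0 ≤ w i) (f : Fin k → Measure X)
    [∀ i, IsFiniteMeasure (f i)] (E : Set X) :
    ((∑ i, ENNReal.ofReal (w i) • f i : Measure X) E).toReal = ∑ i, w i * (f i E).toReal := by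
  rw [Measure.finsetSum_apply, ENNReal.toReal_sum]
  · refine Finset.sum_congr rfl fun i _ => ?_
    rw [Measure.smul_apply, smul_eq_mul, ENNReal.toReal_mul, ENNReal.toReal_ofReal (hw i)]
  · intro i _
    rw [Measure.smul_apply, smul_eq_mul]
    exact ENNReal.mul_ne_top ENNReal.ofReal_ne_top (measure_ne_top _ _)

lemma sum_isProb {k : ℕ} (w : Fin k → ℝ) (hw : ∀ i, 0 ≤ w i) (hw1 : ∑ i, w i = 1)
    (f : Fin k → Measure X) [∀ i, IsProbabilityMeasure (f i)] :
    IsProbabilityMeasure (∑ i, ENNReal.ofReal (w i) • f i) := by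
  constructor
  rw [Measure.finsetSum_apply]
  simp only [Measure.smul_apply, smul_eq_mul, measure_univ, mul_one]
  rw [← ENNReal.ofReal_sum_of_nonneg fun i _ => hw i, hw1, ENNReal.ofReal_one]

lemma decomp {k : ℕ} (g : Measure X) [IsProbabilityMeasure g] (w : Fin k → ℝ)
    (hw : ∀ i, 0 ≤ w i) (hw1 : ∑ i, w i = 1) (f : Fin k → Measure X)
    [∀ i, IsProbabilityMeasure (f i)] :
    ∃ G : Fin k → Measure X, (∀ i, IsProbabilityMeasure (G i)) ∧
      g = ∑ i, ENNReal.ofReal (w i) • G i ∧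
      ∑ i, w i * tvDist (G i) (f i) ≤ tvDist g (∑ i, ENNReal.ofReal (w i) • f i) := by
  have := sum_isProb w hw hw1 f
  set ff : Measure X := ∑ i, ENNReal.ofReal (w i) • f i with hff
  obtain ⟨ρ, hρ, hle, hmass⟩ := overlap g ff
  set c : Measure X := ff.withDensity ρ with hc
  have hcle : ∀ μ : Measure X, μ.withDensity ρ ≤ μ := by
    intro μ
    calc μ.withDensity ρ ≤ μ.withDensity 1 :=
          withDensity_mono (Filter.Eventually.of_forall fun x => hρ x)
      _ = μ := withDensity_one
  have hcfin : IsFiniteMeasure c := isFiniteMeasure_of_le g hle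
  have hcifin : ∀ i, IsFiniteMeasure ((f i).withDensity ρ) := fun i =>
    isFiniteMeasure_of_le (f i) (hcle _)
  have hci1 : ∀ i, (f i).withDensity ρ Set.univ ≤ 1 := fun i =>
    (hcle (f i) Set.univ).trans prob_le_one
  have hc1 : c Set.univ ≤ 1 := (hle Set.univ).trans prob_le_one
  have hcsum : c = ∑ i, ENNReal.ofReal (w i) • (f i).withDensity ρ := by
    rw [hc, hff, withDensity_finset_sum]
  -- normalized residual
  obtain ⟨d, hdp, hd⟩ : ∃ d : Measure X, IsProbabilityMeasure d ∧
      g = c + (1 - c Set.univ) • d := by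
    have hsub : g - c + c = g := Measure.sub_add_cancel_of_le hle
    have hm : (g - c) Set.univ = 1 - c Set.univ := by
      rw [Measure.sub_apply MeasurableSet.univ hle, measure_univ]
    by_cases h0 : 1 - c Set.univ = 0
    · refine ⟨g, inferInstance, ?_⟩
      rw [h0] at hm
      rw [Measure.measure_univ_eq_zero] at hm
      rw [h0, zero_smul, add_zero]
      conv_lhs => rw [← hsub, hm, zero_add]
    · have ht : 1 - c Set.univ ≠ ∞ := ENNReal.sub_ne_top ENNReal.one_ne_top
      refine ⟨(1 - c Set.univ)⁻¹ • (g - c), ⟨?_⟩, ?_⟩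
      · rw [Measure.smul_apply, hm, smul_eq_mul, ENNReal.inv_mul_cancel h0 ht]
      · rw [smul_smul, ENNReal.mul_inv_cancel h0 ht, one_smul, add_comm, hsub]
  have hkey : ∑ i, ENNReal.ofReal (w i) * (1 - (f i).withDensity ρ Set.univ) = 1 - c Set.univ := by
    have h1 : ∑ i, ENNReal.ofReal (w i) * (1 - (f i).withDensity ρ Set.univ) + c Set.univ = 1 := by
      conv_lhs => rw [hcsum]
      rw [Measure.finsetSum_apply, ← Finset.sum_add_distrib]
      have : ∀ i, ENNReal.ofReal (w i) * (1 - (f i).withDensity ρ Set.univ)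
          + (ENNReal.ofReal (w i) • (f i).withDensity ρ) Set.univ = ENNReal.ofReal (w i) := by
        intro i
        rw [Measure.smul_apply, smul_eq_mul, ← mul_add, tsub_add_cancel_of_le (hci1 i), mul_one]
      rw [Finset.sum_congr rfl fun i _ => this i,
        ← ENNReal.ofReal_sum_of_nonneg fun i _ => hw i, hw1, ENNReal.ofReal_one]
    exact ENNReal.eq_sub_of_add_eq (measure_ne_top _ _) h1
  have hprob : ∀ i, IsProbabilityMeasure
      ((f i).withDensity ρ + (1 - (f i).withDensity ρ Set.univ) • d) := by
    intro i
    constructor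
    rw [Measure.add_apply, Measure.smul_apply, measure_univ (μ := d), smul_eq_mul, mul_one,
      add_tsub_cancel_of_le (hci1 i)]
  refine ⟨fun i => (f i).withDensity ρ + (1 - (f i).withDensity ρ Set.univ) • d, hprob, ?_, ?_⟩
  · simp only [smul_add, Finset.sum_add_distrib, smul_smul]
    rw [← hcsum, ← Finset.sum_smul, hkey]
    exact hd
  · have htv : ∀ i, tvDist ((f i).withDensity ρ + (1 - (f i).withDensity ρ Set.univ) • d) (f i)
        ≤ 1 - ((f i).withDensity ρ Set.univ).toReal := by
      intro i
      apply tvDist_le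
      intro E hE
      have hv : (((f i).withDensity ρ + (1 - (f i).withDensity ρ Set.univ) • d) E).toReal
          = ((f i).withDensity ρ E).toReal
            + (1 - ((f i).withDensity ρ Set.univ).toReal) * (d E).toReal := by
        rw [Measure.add_apply, Measure.smul_apply, smul_eq_mul,
          ENNReal.toReal_add (measure_ne_top _ _)
            (ENNReal.mul_ne_top (ENNReal.sub_ne_top ENNReal.one_ne_top) (measure_ne_top _ _)),
          ENNReal.toReal_mul, ENNReal.toReal_sub_of_le (hci1 i) ENNReal.one_ne_top,
          ENNReal.toReal_one]
      rw [hv]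
      have a1 : ((f i).withDensity ρ E).toReal ≤ (f i E).toReal :=
        ENNReal.toReal_mono (measure_ne_top _ _) (hcle (f i) E)
      have a2 : ((f i).withDensity ρ Eᶜ).toReal ≤ (f i Eᶜ).toReal :=
        ENNReal.toReal_mono (measure_ne_top _ _) (hcle (f i) Eᶜ)
      have a3 : (f i E).toReal + (f i Eᶜ).toReal = 1 := by
        rw [← ENNReal.toReal_add (measure_ne_top _ _) (measure_ne_top _ _),
          measure_add_measure_compl hE, measure_univ, ENNReal.toReal_one]
      have a4 : ((f i).withDensity ρ E).toReal + ((f i).withDensity ρ Eᶜ).toReal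
          = ((f i).withDensity ρ Set.univ).toReal := by
        rw [← ENNReal.toReal_add (measure_ne_top _ _) (measure_ne_top _ _),
          measure_add_measure_compl hE]
      have a5 := toReal_le_one d E
      have a6 : 0 ≤ (d E).toReal := ENNReal.toReal_nonneg
      have a7 : ((f i).withDensity ρ Set.univ).toReal ≤ 1 := by linarith
      rw [abs_le]
      constructor <;> nlinarith
    refine le_trans ?_ hmass
    have : (c Set.univ).toReal = ∑ i, w i * ((f i).withDensity ρ Set.univ).toReal := by
      rw [hcsum, sum_apply_toReal w hw]
    rw [this, ← hw1, ← Finset.sum_sub_distrib]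
    refine Finset.sum_le_sum fun i _ => ?_
    have := mul_le_mul_of_nonneg_left (htv i) (hw i)
    linarith

lemma exists_decomp (F : Set (Measure X)) (hF : ∀ f ∈ F, IsProbabilityMeasure f) (k : ℕ)
    (hk : 0 < k) (g : Measure X) [IsProbabilityMeasure g] (ε : ℝ) (hε : 0 < ε) :
    ∃ (w : Fin k → ℝ) (G : Fin k → Measure X), (∀ i, 0 ≤ w i) ∧ ∑ i, w i = 1 ∧
      (∀ i, IsProbabilityMeasure (G i)) ∧ g = ∑ i, ENNReal.ofReal (w i) • G i ∧
      ∑ i, w i * tvDistSet (G i) F ≤ tvDistSet g (kmix k F) + ε := by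
  have hkR : (0 : ℝ) < k := by exact_mod_cast hk
  rcases F.eq_empty_or_nonempty with rfl | ⟨f0, hf0⟩
  · have hsum : ∑ _i : Fin k, (1 : ℝ) / k = 1 := by
      simp; field_simp
    have h0 : ∀ i : Fin k, (0 : ℝ) ≤ 1 / k := fun i => by positivity
    refine ⟨fun _ => 1 / k, fun _ => g, h0, hsum, fun _ => inferInstance, ?_, ?_⟩
    · rw [← Finset.sum_smul, ← ENNReal.ofReal_sum_of_nonneg fun i _ => h0 i, hsum,
        ENNReal.ofReal_one, one_smul]
    · have : tvDistSet g (∅ : Set (Measure X)) = 0 := by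
        unfold tvDistSet; exact Real.iInf_of_isEmpty _
      simp only [this, mul_zero, Finset.sum_const_zero]
      have := tvDistSet_nonneg g (kmix k (∅ : Set (Measure X)))
      linarith
  · have hne : Nonempty (kmix k F) := by
      refine ⟨⟨_, fun _ => 1 / k, fun _ => f0, fun i => by positivity, ?_, fun _ => hf0, rfl⟩⟩
      simp; field_simp
    obtain ⟨⟨fm, w, f, hw, hw1, hf, rfl⟩, hlt⟩ := exists_lt_of_ciInf_lt
      (f := fun f : kmix k F => tvDist g f.1) (a := tvDistSet g (kmix k F) + ε)
      (by change tvDistSet g (kmix k F) < _; linarith)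
    have : ∀ i, IsProbabilityMeasure (f i) := fun i => hF _ (hf i)
    obtain ⟨G, hG, hg, hs⟩ := decomp g w hw hw1 f
    refine ⟨w, G, hw, hw1, hG, hg, ?_⟩
    refine le_trans ?_ hlt.le
    refine le_trans ?_ hs
    exact Finset.sum_le_sum fun i _ =>
      mul_le_mul_of_nonneg_left (tvDistSet_le _ (hf i)) (hw i)

/-- Probability measures, as a plain subtype. -/
abbrev Pr (X : Type*) [MeasurableSpace X] := {μ : Measure X // IsProbabilityMeasure μ}

/-- Convex combination. -/
noncomputable def cvx (δ : ℝ) (μ ν : Measure X) : Measure X :=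
  ENNReal.ofReal (1 - δ) • μ + ENNReal.ofReal δ • ν

lemma cvx_toReal {δ : ℝ} (h0 : 0 ≤ δ) (h1 : δ ≤ 1) (μ ν : Measure X) [IsFiniteMeasure μ]
    [IsFiniteMeasure ν] (E : Set X) :
    (cvx δ μ ν E).toReal = (1 - δ) * (μ E).toReal + δ * (ν E).toReal := by
  unfold cvx
  rw [Measure.add_apply, Measure.smul_apply, Measure.smul_apply, smul_eq_mul, smul_eq_mul,
    ENNReal.toReal_add (ENNReal.mul_ne_top ENNReal.ofReal_ne_top (measure_ne_top _ _))
      (ENNReal.mul_ne_top ENNReal.ofReal_ne_top (measure_ne_top _ _)),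
    ENNReal.toReal_mul, ENNReal.toReal_mul, ENNReal.toReal_ofReal h0,
    ENNReal.toReal_ofReal (by linarith)]

lemma cvx_prob {δ : ℝ} (h0 : 0 ≤ δ) (h1 : δ ≤ 1) (μ ν : Measure X) [IsProbabilityMeasure μ]
    [IsProbabilityMeasure ν] : IsProbabilityMeasure (cvx δ μ ν) := by
  constructor
  unfold cvx
  rw [Measure.add_apply, Measure.smul_apply, Measure.smul_apply, measure_univ, measure_univ,
    smul_eq_mul, smul_eq_mul, mul_one, mul_one, ← ENNReal.ofReal_add (by linarith) h0]
  simp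

lemma ext_toReal {μ ν : Measure X} [IsFiniteMeasure μ] [IsFiniteMeasure ν]
    (h : ∀ E, MeasurableSet E → (μ E).toReal = (ν E).toReal) : μ = ν := by
  ext E hE
  exact (ENNReal.toReal_eq_toReal_iff' (measure_ne_top _ _) (measure_ne_top _ _)).1 (h E hE)

lemma tvDist_comm (μ ν : Measure X) : tvDist μ ν = tvDist ν μ := by
  unfold tvDist
  simp only [abs_sub_comm]

lemma tvDist_triangle (μ ν ξ : Measure X) [IsProbabilityMeasure μ] [IsProbabilityMeasure ν]
    [IsProbabilityMeasure ξ] : tvDist μ ξ ≤ tvDist μ ν + tvDist ν ξ := by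
  apply tvDist_le
  intro E hE
  exact (abs_sub_le _ (ν E).toReal _).trans (add_le_add (le_tvDist μ ν hE) (le_tvDist ν ξ hE))

lemma tvDist_self (μ : Measure X) : tvDist μ μ = 0 :=
  le_antisymm (tvDist_le fun E _ => by simp) (tvDist_nonneg _ _)

lemma exists_net (δ : ℝ) (hδ : 0 < δ) : ∃ N : Set (Pr X),
    (∀ a ∈ N, ∀ b ∈ N, a ≠ b → 2 * δ < tvDist a.1 b.1) ∧
    ∀ ν : Pr X, ∃ n ∈ N, tvDist n.1 ν.1 ≤ 2 * δ := by
  obtain ⟨N, hN⟩ := zorn_subset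
    {N : Set (Pr X) | ∀ a ∈ N, ∀ b ∈ N, a ≠ b → 2 * δ < tvDist a.1 b.1} (by
      intro c hc hchain
      refine ⟨⋃₀ c, ?_, fun s hs => Set.subset_sUnion_of_mem hs⟩
      rintro a ⟨s, hs, has⟩ b ⟨t, ht, hbt⟩ hab
      rcases hchain.total hs ht with h | h
      · exact hc ht a (h has) b hbt hab
      · exact hc hs a has b (h hbt) hab)
  refine ⟨N, hN.prop, fun ν => ?_⟩
  by_contra hcon
  push Not at hcon
  have hins : insert ν N ∈
      {N : Set (Pr X) | ∀ a ∈ N, ∀ b ∈ N, a ≠ b → 2 * δ < tvDist a.1 b.1} := by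
    rintro a (rfl | ha) b (rfl | hb) hab
    · exact absurd rfl hab
    · rw [tvDist_comm]; exact hcon b hb
    · exact hcon a ha
    · exact hN.prop a ha b hb hab
  have := hN.le_of_ge hins (Set.subset_insert _ _) (Set.mem_insert ν N)
  have h2 := hcon ν this
  rw [tvDist_self] at h2
  linarith

lemma exists_perturb {ι : Type*} (Φ : ι → Pr X) (hΦ : Function.Injective Φ) (mix : ι → Pr X)
    (δ : ℝ) (hδ : 0 < δ) (hδ1 : δ ≤ 1) :
    ∃ ψ : ι → Pr X, Function.Injective ψ ∧ ∀ c, tvDist (ψ c).1 (mix c).1 ≤ 3 * δ := by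
  obtain ⟨N, hsep, hcov⟩ := exists_net (X := X) δ hδ
  choose n hnN hn using hcov
  have inst : ∀ μ : Pr X, IsProbabilityMeasure μ.1 := fun μ => μ.2
  have hconv : ∀ a b : Pr X, tvDist (cvx δ a.1 b.1) a.1 ≤ δ := by
    intro a b
    apply tvDist_le
    intro E hE
    rw [cvx_toReal hδ.le hδ1]
    have h := abs_le_one b.1 a.1 E
    have : (1 - δ) * (a.1 E).toReal + δ * (b.1 E).toReal - (a.1 E).toReal
        = δ * ((b.1 E).toReal - (a.1 E).toReal) := by ring
    rw [this, abs_mul, abs_of_pos hδ]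
    nlinarith
  have inst2 : ∀ a b : Pr X, IsProbabilityMeasure (cvx δ a.1 b.1) := fun a b =>
    cvx_prob hδ.le hδ1 a.1 b.1
  refine ⟨fun c => ⟨cvx δ (n (mix c)).1 (Φ c).1, inst2 _ _⟩, ?_, ?_⟩
  · intro c c' h
    have h' : cvx δ (n (mix c)).1 (Φ c).1 = cvx δ (n (mix c')).1 (Φ c').1 :=
      congrArg Subtype.val h
    have hnn : n (mix c) = n (mix c') := by
      by_contra hne
      have h1 := hsep _ (hnN (mix c)) _ (hnN (mix c')) hne
      have h2 := tvDist_triangle (n (mix c)).1 (cvx δ (n (mix c)).1 (Φ c).1) (n (mix c')).1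
      have h3 := hconv (n (mix c)) (Φ c)
      have h4 := hconv (n (mix c')) (Φ c')
      rw [tvDist_comm] at h3
      rw [← h'] at h4
      linarith
    apply hΦ
    apply Subtype.ext
    apply ext_toReal
    intro E hE
    have h1 := congrArg (fun μ : Measure X => (μ E).toReal) h'
    simp only [cvx_toReal hδ.le hδ1, hnn] at h1
    have h2 : δ * ((Φ c).1 E).toReal = δ * ((Φ c').1 E).toReal := by linarith
    exact mul_left_cancel₀ hδ.ne' h2
  · intro c
    have h2 := tvDist_triangle (cvx δ (n (mix c)).1 (Φ c).1) (n (mix c)).1 (mix c).1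
    have h3 := hconv (n (mix c)) (Φ c)
    have h4 := hn (mix c)
    simp only
    linarith

lemma infinite_Pr (h : Nontrivial (Pr X)) : Infinite (Pr X) := by
  obtain ⟨μ, ν, hne⟩ := h
  have inst : ∀ μ : Pr X, IsProbabilityMeasure μ.1 := fun μ => μ.2
  have hb : ∀ j : ℕ, (0 : ℝ) ≤ 1 / ((j : ℝ) + 1) ∧ 1 / ((j : ℝ) + 1) ≤ 1 := by
    intro j
    refine ⟨by positivity, ?_⟩
    rw [div_le_one (by positivity)]
    have : (0 : ℝ) ≤ j := by positivity
    linarith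
  refine Infinite.of_injective (fun j : ℕ =>
    (⟨cvx (1 / ((j : ℝ) + 1)) μ.1 ν.1, cvx_prob (hb j).1 (hb j).2 _ _⟩ : Pr X)) ?_
  intro i j hij
  have h' : cvx (1 / ((i : ℝ) + 1)) μ.1 ν.1 = cvx (1 / ((j : ℝ) + 1)) μ.1 ν.1 :=
    congrArg Subtype.val hij
  have : ∃ E, MeasurableSet E ∧ (μ.1 E).toReal ≠ (ν.1 E).toReal := by
    by_contra hcon
    push Not at hcon
    exact hne (Subtype.ext (ext_toReal hcon))
  obtain ⟨E, hE, hEne⟩ := this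
  have h1 := congrArg (fun μ : Measure X => (μ E).toReal) h'
  simp only [cvx_toReal (hb i).1 (hb i).2, cvx_toReal (hb j).1 (hb j).2] at h1
  have h2 : (1 / ((i : ℝ) + 1) - 1 / ((j : ℝ) + 1)) * ((μ.1 E).toReal - (ν.1 E).toReal) = 0 := by
    linarith
  rcases mul_eq_zero.1 h2 with h3 | h3
  · have h4 : ((i : ℝ) + 1)⁻¹ = ((j : ℝ) + 1)⁻¹ := by
      rw [← one_div, ← one_div]; linarith
    have h5 := inv_injective h4
    have h6 : (i : ℝ) = j := by linarith
    exact_mod_cast h6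
  · exact absurd (by linarith) hEne

lemma exists_embed {P : Type*} [Infinite P] (k M : ℕ) :
    ∃ Φ : (Fin k → Fin M) × (Fin k → P) → P, Function.Injective Φ := by
  have e0 : Fin M ↪ P := (Fin.valEmbedding).trans (Infinite.natEmbedding P)
  have e1 : (Fin k → P) ↪ P := by
    refine Classical.choice ?_
    rw [← Cardinal.le_def]
    simp only [Cardinal.mk_pi, Cardinal.prod_const, Cardinal.mk_fin, Cardinal.lift_natCast,
      Cardinal.lift_uzero]
    exact Cardinal.power_nat_le (Cardinal.aleph0_le_mk P)
  have e2 : P × P ↪ P := by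
    refine Classical.choice ?_
    rw [← Cardinal.le_def]
    simp only [Cardinal.mk_prod, Cardinal.lift_id]
    rw [Cardinal.mul_eq_self (Cardinal.aleph0_le_mk P)]
  refine ⟨fun c => e2 (e1 (e0 ∘ c.1), e1 c.2), ?_⟩
  rintro ⟨a, b⟩ ⟨a', b'⟩ h
  have h1 := e2.injective h
  simp only [Prod.mk.injEq, EmbeddingLike.apply_eq_iff_eq] at h1
  obtain ⟨h2, rfl⟩ := h1
  have : a = a' := by
    funext i
    exact e0.injective (congrFun h2 i)
  rw [this]

lemma cell_exists (M : ℕ) (hM : 0 < M) : ∃ r : ℝ → Fin M, ∀ x, 0 ≤ x → x ≤ 1 →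
    ((r x : ℕ) : ℝ) ≤ x * M ∧ x * M ≤ (r x : ℕ) + 1 := by
  refine ⟨fun x => ⟨min ⌊x * M⌋₊ (M - 1), by omega⟩, fun x h0 h1 => ?_⟩
  have hMR : (0 : ℝ) < M := by exact_mod_cast hM
  have hx : 0 ≤ x * M := by positivity
  have f1 := Nat.floor_le hx
  have f2 := Nat.lt_floor_add_one (x * M)
  simp only
  rcases le_total ⌊x * M⌋₊ (M - 1) with h | h
  · rw [min_eq_left h]
    exact ⟨f1, f2.le⟩
  · rw [min_eq_right h]
    have h' : ((M - 1 : ℕ) : ℝ) ≤ (⌊x * M⌋₊ : ℕ) := by exact_mod_cast h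
    refine ⟨h'.trans f1, ?_⟩
    have : ((M - 1 : ℕ) : ℝ) + 1 = M := by exact_mod_cast Nat.sub_add_cancel hM
    rw [this]
    nlinarith

lemma cells (k M : ℕ) (hk : 0 < k) (hM : 0 < M) :
    ∃ rep : (Fin k → Fin M) → Fin k → ℝ, (∀ c i, 0 ≤ rep c i) ∧ (∀ c, ∑ i, rep c i = 1) ∧
      ∀ w : Fin k → ℝ, (∀ i, 0 ≤ w i) → ∑ i, w i = 1 → ∃ c, ∀ i, |rep c i - w i| ≤ 1 / M := by
  classical
  obtain ⟨r, hr⟩ := cell_exists M hM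
  have hMR : (0 : ℝ) < M := by exact_mod_cast hM
  have hkR : (0 : ℝ) < k := by exact_mod_cast hk
  have key : ∀ c : Fin k → Fin M, ∃ v : Fin k → ℝ, (∀ i, 0 ≤ v i) ∧ ∑ i, v i = 1 ∧
      ((∃ w : Fin k → ℝ, (∀ i, 0 ≤ w i) ∧ ∑ i, w i = 1 ∧ (fun i => r (w i)) = c) →
        (fun i => r (v i)) = c) := by
    intro c
    by_cases h : ∃ w : Fin k → ℝ, (∀ i, 0 ≤ w i) ∧ ∑ i, w i = 1 ∧ (fun i => r (w i)) = c
    · obtain ⟨w, h1, h2, h3⟩ := h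
      exact ⟨w, h1, h2, fun _ => h3⟩
    · refine ⟨fun _ => 1 / k, fun i => by positivity, ?_, fun h' => absurd h' h⟩
      simp; field_simp
  choose rep h0 h1 h2 using key
  refine ⟨rep, h0, h1, fun w hw hw1 => ⟨fun i => r (w i), fun i => ?_⟩⟩
  have hle : ∀ v : Fin k → ℝ, (∀ i, 0 ≤ v i) → ∑ i, v i = 1 → ∀ i, v i ≤ 1 := by
    intro v hv hv1 i
    rw [← hv1]
    exact Finset.single_le_sum (fun j _ => hv j) (Finset.mem_univ i)
  have h3 := congrFun (h2 _ ⟨w, hw, hw1, rfl⟩) i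
  set v := rep (fun i => r (w i)) with hv
  have a := hr (w i) (hw i) (hle w hw hw1 i)
  have b := hr (v i) (h0 _ i) (hle v (h0 _) (h1 _) i)
  rw [h3] at b
  have h4 : |v i - w i| * M = |(v i - w i) * M| := by rw [abs_mul, abs_of_pos hMR]
  rw [le_div_iff₀ hMR, h4, abs_le]
  constructor <;> nlinarith

end SLD

theorem statement1 {X : Type*} [MeasurableSpace X] (F : Set (Measure X))
    (hF : ∀ f ∈ F, IsProbabilityMeasure f)
    (α β C : ℝ) (hα : α ∈ Set.Ioo (0 : ℝ) 1) (hβ : β ∈ Set.Ioc (0 : ℝ) (Real.exp 1)⁻¹)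
    (hC : 1 < C) (L m k : ℕ) (hL : 0 < L) (hm : 0 < m) (hk : 0 < k)
    (A : (Fin m → X) → Set (Measure X))
    (hA : IsStableListDecoder F C α m (1 - β) L A)
    (m₁ : ℕ) (hm₁ : m₁ = ⌈(2 * (m : ℝ) * k + 8 * k * Real.log (1 / β)) / α⌉₊)
    (L₁ : ℝ)
    (hL₁ : L₁ = ((L : ℝ) * k / α) ^ k *
      (10 * Real.exp 1 * k * Real.log (1 / β) / α) ^ (m * k)) :
    ∃ A₁ : (Fin m₁ → X) → Set (Measure X),
      IsStableListDecoder (kmix k F) C (5 * α) m₁ (1 - 2 * k * β) L₁ A₁ := by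
  classical
  have hα0 := hα.1
  have hα1 := hα.2
  have hβ0 := hβ.1
  have hkR : (1 : ℝ) ≤ k := by exact_mod_cast hk
  have hLR : (1 : ℝ) ≤ L := by exact_mod_cast hL
  have he2 : (2 : ℝ) ≤ Real.exp 1 := by
    have := Real.add_one_le_exp (1 : ℝ); linarith
  have hβ1 : β < 1 := by
    refine lt_of_le_of_lt hβ.2 ?_
    rw [inv_lt_one_iff₀]; right; linarith
  have hl : 1 ≤ Real.log (1 / β) := by
    rw [one_div, Real.log_inv, le_neg]
    have := Real.log_le_log hβ0 hβ.2
    rwa [Real.log_inv, Real.log_exp] at this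
  set l := Real.log (1 / β) with hldef
  have hkα : (1 : ℝ) ≤ k / α := by rw [le_div_iff₀ hα0]; linarith
  have hchoose := SLD.choose_bound m k m₁ hm hk l α hl hα hm₁
  have hbase1 : (1 : ℝ) ≤ 10 * Real.exp 1 * k * l / α := by
    rw [le_div_iff₀ hα0]
    have h1 : (1 : ℝ) ≤ k * l := one_le_mul_of_one_le_of_one_le hkR hl
    nlinarith
  have inst : ∀ μ : SLD.Pr X, IsProbabilityMeasure μ.1 := fun μ => μ.2
  rcases subsingleton_or_nontrivial (SLD.Pr X) with hsub | hnt
  · refine ⟨fun _ => {μ | IsProbabilityMeasure μ}, ?_, ?_⟩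
    · intro S
      have hss : ({μ : Measure X | IsProbabilityMeasure μ}).Subsingleton := by
        intro a ha b hb
        exact congrArg Subtype.val (Subsingleton.elim (⟨a, ha⟩ : SLD.Pr X) ⟨b, hb⟩)
      refine ⟨hss.finite, ?_, fun μ hμ => hμ⟩
      have h1 : ({μ : Measure X | IsProbabilityMeasure μ}).ncard ≤ 1 :=
        (Set.ncard_le_one hss.finite).2 fun a ha b hb => hss ha hb
      have h2 : (1 : ℝ) ≤ L₁ := by
        rw [hL₁]
        apply one_le_mul_of_one_le_of_one_le
        · apply one_le_pow₀
          rw [mul_div_assoc]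
          exact one_le_mul_of_one_le_of_one_le hLR hkα
        · exact one_le_pow₀ hbase1
      exact le_trans (by exact_mod_cast h1) h2
    · intro g hg
      refine ⟨g, hg, ?_, ?_, ?_⟩
      · simp [hg]
      · simp only [Set.mem_ofPred_eq, hg]
        simp only [Set.ofPred_true, measure_univ]
        rw [ENNReal.ofReal_le_one]
        have : 0 ≤ 2 * (k : ℝ) * β := by positivity
        linarith
      · rw [SLD.tvDist_self]
        have := SLD.tvDistSet_nonneg g (kmix k F)
        nlinarith
  have hinf := SLD.infinite_Pr hnt
  set M : ℕ := ⌊(k : ℝ) / α⌋₊ with hM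
  have hMpos : 0 < M := Nat.floor_pos.2 hkα
  have hMR : (1 : ℝ) ≤ M := by exact_mod_cast hMpos
  have hMle : (M : ℝ) ≤ k / α := Nat.floor_le (by positivity)
  have hMge : (k : ℝ) / α ≤ 2 * M := by
    have := Nat.lt_floor_add_one ((k : ℝ) / α)
    rw [← hM] at this
    linarith
  obtain ⟨rep, hrep0, hrep1, hrep⟩ := SLD.cells k M hk hMpos
  obtain ⟨Φ, hΦ⟩ := SLD.exists_embed (P := SLD.Pr X) k M
  obtain ⟨ψ, hψ, hψd⟩ := SLD.exists_perturb Φ hΦ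
    (fun c => ⟨∑ i, ENNReal.ofReal (rep c.1 i) • (c.2 i).1,
      SLD.sum_isProb _ (hrep0 c.1) (hrep1 c.1) _⟩) (α / 6) (by positivity) (by linarith)
  set codes : (Fin m₁ → X) → Set ((Fin k → Fin M) × (Fin k → SLD.Pr X)) :=
    fun S => {c | ∀ i, ∃ T : Fin m ↪o Fin m₁, (c.2 i).1 ∈ A (S ∘ T)} with hcodes
  refine ⟨fun S => (fun c => (ψ c).1) '' codes S, ?_, ?_⟩
  · intro S
    set R : Set (SLD.Pr X) := ⋃ T : Fin m ↪o Fin m₁, Subtype.val ⁻¹' (A (S ∘ T)) with hR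
    have hRT : ∀ T : Fin m ↪o Fin m₁,
        (Subtype.val ⁻¹' (A (S ∘ T)) : Set (SLD.Pr X)).Finite ∧
        (Subtype.val ⁻¹' (A (S ∘ T)) : Set (SLD.Pr X)).ncard ≤ L := by
      intro T
      obtain ⟨hfin, hcard, -⟩ := hA.1 (S ∘ T)
      refine ⟨hfin.preimage Subtype.val_injective.injOn, ?_⟩
      have hcard' : (A (S ∘ T)).ncard ≤ L := by exact_mod_cast hcard
      refine le_trans ?_ hcard'
      exact Set.ncard_le_ncard_of_injOn Subtype.val (fun a ha => ha)
        Subtype.val_injective.injOn hfin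
    have hRfin : R.Finite := Set.finite_iUnion fun T => (hRT T).1
    have hRcard : R.ncard ≤ m₁.choose m * L := by
      calc R.ncard ≤ ∑ T : Fin m ↪o Fin m₁,
            (Subtype.val ⁻¹' (A (S ∘ T)) : Set (SLD.Pr X)).ncard := Set.ncard_iUnion_le_of_fintype _
        _ ≤ ∑ _T : Fin m ↪o Fin m₁, L := Finset.sum_le_sum fun T _ => (hRT T).2
        _ = m₁.choose m * L := by
          rw [Finset.sum_const, smul_eq_mul, Finset.card_univ, ← Nat.card_eq_fintype_card,
            SLD.card_orderEmb]
    set D : Finset ((Fin k → Fin M) × (Fin k → SLD.Pr X)) :=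
      Finset.univ ×ˢ Fintype.piFinset (fun _ => hRfin.toFinset) with hD
    have hcD : codes S = (D : Set _) := by
      ext c
      simp [hcodes, hD, hR]
    have hcfin : (codes S).Finite := by rw [hcD]; exact D.finite_toSet
    refine ⟨hcfin.image _, ?_, ?_⟩
    · have h1 : ((fun c => (ψ c).1) '' codes S).ncard ≤ (codes S).ncard :=
        Set.ncard_image_le hcfin
      have h2 : (codes S).ncard = M ^ k * R.ncard ^ k := by
        rw [hcD, Set.ncard_coe_finset, hD, Finset.card_product, Fintype.card_piFinset,
          Set.ncard_eq_toFinset_card R hRfin]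
        simp
      have h3 : ((m₁.choose m * L : ℕ) : ℝ) ≤ (10 * Real.exp 1 * k * l / α) ^ m * L := by
        push_cast; gcongr
      calc ((((fun c => (ψ c).1) '' codes S).ncard : ℕ) : ℝ)
          ≤ ((M ^ k * R.ncard ^ k : ℕ) : ℝ) := by exact_mod_cast h2 ▸ h1
        _ ≤ ((M ^ k * (m₁.choose m * L) ^ k : ℕ) : ℝ) := by
            exact_mod_cast Nat.mul_le_mul_left _ (Nat.pow_le_pow_left hRcard k)
        _ = (M : ℝ) ^ k * ((m₁.choose m * L : ℕ) : ℝ) ^ k := by push_cast; ring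
        _ ≤ (k / α) ^ k * ((10 * Real.exp 1 * k * l / α) ^ m * L) ^ k := by gcongr
        _ = L₁ := by
            rw [hL₁, mul_pow, ← pow_mul, mul_div_assoc (L : ℝ), mul_pow (L : ℝ)]; ring
    · rintro _ ⟨c, -, rfl⟩
      exact (ψ c).2
  · intro g hg
    obtain ⟨w, G, hw0, hw1, hG, hgG, hGd⟩ := SLD.exists_decomp F hF k hk g (α / (2 * C))
      (by positivity)
    choose gt hgtP hgtM hgtB hgtD using fun i => hA.2 (G i) (hG i)
    obtain ⟨i0, hi0⟩ : ∃ i0, α / k ≤ w i0 := by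
      by_contra hcon
      push Not at hcon
      have : Nonempty (Fin k) := ⟨⟨0, hk⟩⟩
      have h1 : ∑ i, w i < ∑ _i : Fin k, α / k :=
        Finset.sum_lt_sum_of_nonempty Finset.univ_nonempty fun i _ => hcon i
      rw [hw1, Finset.sum_const, Finset.card_univ, Fintype.card_fin, nsmul_eq_mul,
        mul_div_cancel₀ _ (by positivity)] at h1
      linarith
    set σ : Fin k → Fin k := fun i => if α / k ≤ w i then i else i0 with hσ
    have hσw : ∀ i, α / k ≤ w (σ i) := by
      intro i
      by_cases h : α / k ≤ w i
      · simp [hσ, h]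
      · simpa [hσ, h] using hi0
    obtain ⟨cw, hcw⟩ := hrep w hw0 hw1
    set c : (Fin k → Fin M) × (Fin k → SLD.Pr X) :=
      (cw, fun i => ⟨gt (σ i), hgtP (σ i)⟩) with hc
    have hev : {S : Fin m₁ → X | (ψ c).1 ∈ (fun c => (ψ c).1) '' codes S}
        = ⋂ i, {S : Fin m₁ → X | ∃ T : Fin m ↪o Fin m₁, S ∘ T ∈ {S' | gt (σ i) ∈ A S'}} := by
      ext S
      rw [Set.mem_iInter]
      constructor
      · rintro ⟨c', hc', heq⟩
        have : c' = c := hψ (Subtype.ext heq)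
        subst this
        exact hc'
      · intro h
        exact ⟨c, h, rfl⟩
    have hEm : ∀ i, MeasurableSet
        {S : Fin m₁ → X | ∃ T : Fin m ↪o Fin m₁, S ∘ T ∈ {S' | gt (σ i) ∈ A S'}} :=
      fun i => SLD.measurable_hit (hgtM (σ i))
    have hEp : ∀ i, ENNReal.ofReal (1 - 2 * β) ≤ Measure.pi (fun _ : Fin m₁ => g)
        {S : Fin m₁ → X | ∃ T : Fin m ↪o Fin m₁, S ∘ T ∈ {S' | gt (σ i) ∈ A S'}} := by
      intro i
      have hGi := hG (σ i)
      have hwle : w (σ i) ≤ 1 := by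
        rw [← hw1]
        exact Finset.single_le_sum (fun j _ => hw0 j) (Finset.mem_univ (σ i))
      refine SLD.sampling_prob g (G (σ i))
        (∑ j ∈ Finset.univ.erase (σ i), ENNReal.ofReal (w j) • G j) (w (σ i)) β m₁ m hβ0 hβ1
        (hw0 _) hwle ?_ ?_ _ (hgtM (σ i)) (hgtB (σ i))
      · rw [Finset.add_sum_erase Finset.univ (fun j => ENNReal.ofReal (w j) • G j)
          (Finset.mem_univ (σ i))]
        exact hgG
      · have h1 : (2 * (m : ℝ) * k + 8 * k * l) / α ≤ m₁ := by
          rw [hm₁]; exact Nat.le_ceil _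
        rw [div_le_iff₀ hα0] at h1
        have h2 : (m₁ : ℝ) * (α / k) ≤ m₁ * w (σ i) := by gcongr; exact hσw i
        refine le_trans ?_ h2
        rw [← mul_div_assoc, le_div_iff₀ (by linarith)]
        linarith
    refine ⟨(ψ c).1, (ψ c).2, ?_, ?_, ?_⟩
    · rw [hev]
      exact MeasurableSet.iInter hEm
    · rw [hev]
      set E : Set (Fin m₁ → X) := ⋂ i, {S : Fin m₁ → X |
        ∃ T : Fin m ↪o Fin m₁, S ∘ T ∈ {S' | gt (σ i) ∈ A S'}} with hE
      have hEmeas : MeasurableSet E := MeasurableSet.iInter hEm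
      have hcompl : Measure.pi (fun _ : Fin m₁ => g) Eᶜ ≤ ENNReal.ofReal (2 * k * β) := by
        rw [hE, Set.compl_iInter]
        refine (measure_iUnion_fintype_le _ _).trans ?_
        have hi : ∀ i, Measure.pi (fun _ : Fin m₁ => g) {S : Fin m₁ → X |
            ∃ T : Fin m ↪o Fin m₁, S ∘ T ∈ {S' | gt (σ i) ∈ A S'}}ᶜ
            ≤ ENNReal.ofReal (2 * β) := by
          intro i
          rw [prob_compl_eq_one_sub (hEm i), tsub_le_iff_right]
          calc (1 : ENNReal) = ENNReal.ofReal (2 * β + (1 - 2 * β)) := by simp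
            _ ≤ ENNReal.ofReal (2 * β) + ENNReal.ofReal (1 - 2 * β) := ENNReal.ofReal_add_le
            _ ≤ _ := by gcongr; exact hEp i
        refine (Finset.sum_le_sum fun i _ => hi i).trans ?_
        rw [Finset.sum_const, Finset.card_univ, Fintype.card_fin, nsmul_eq_mul,
          ← ENNReal.ofReal_natCast, ← ENNReal.ofReal_mul (by positivity)]
        apply ENNReal.ofReal_le_ofReal
        linarith
      have h1 := prob_add_prob_compl (μ := Measure.pi (fun _ : Fin m₁ => g)) hEmeas
      rw [ENNReal.ofReal_sub _ (by positivity), ENNReal.ofReal_one, ← h1]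
      exact tsub_le_iff_right.2 (by gcongr)
    · apply SLD.tvDist_le
      intro E hE
      have h1 : |((ψ c).1 E).toReal - ∑ i, rep cw i * (gt (σ i) E).toReal| ≤ α / 2 := by
        have hp := hψd c
        have hpr := SLD.sum_isProb _ (hrep0 c.1) (hrep1 c.1) (fun i => (c.2 i).1)
        have hq := SLD.le_tvDist (ψ c).1 (∑ i, ENNReal.ofReal (rep c.1 i) • (c.2 i).1) hE
        rw [SLD.sum_apply_toReal _ (hrep0 c.1)] at hq
        refine (hq.trans hp).trans ?_
        linarith
      have h2 : |∑ i, rep cw i * (gt (σ i) E).toReal - ∑ i, w i * (gt (σ i) E).toReal|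
          ≤ 2 * α := by
        rw [← Finset.sum_sub_distrib]
        calc |∑ i, (rep cw i * (gt (σ i) E).toReal - w i * (gt (σ i) E).toReal)|
            ≤ ∑ i, |rep cw i * (gt (σ i) E).toReal - w i * (gt (σ i) E).toReal| :=
              Finset.abs_sum_le_sum_abs _ _
          _ ≤ ∑ _i : Fin k, (1 : ℝ) / M := by
              refine Finset.sum_le_sum fun i _ => ?_
              rw [← sub_mul, abs_mul, abs_of_nonneg (ENNReal.toReal_nonneg (a := gt (σ i) E))]
              have := hgtP (σ i)
              calc |rep cw i - w i| * (gt (σ i) E).toReal ≤ |rep cw i - w i| * 1 := by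
                    gcongr; exact SLD.toReal_le_one _ _
                _ ≤ 1 / M := by rw [mul_one]; exact hcw i
          _ = k / M := by simp [div_eq_mul_inv]
          _ ≤ 2 * α := by
              rw [div_le_iff₀ (by linarith)]
              rw [div_le_iff₀ hα0] at hMge
              linarith
      have h3 : |∑ i, w i * (gt (σ i) E).toReal - (g E).toReal| ≤
          2 * α + C * (tvDistSet g (kmix k F) + α / (2 * C)) := by
        have hgE : (g E).toReal = ∑ i, w i * (G i E).toReal := by
          conv_lhs => rw [hgG]
          exact SLD.sum_apply_toReal w hw0 G E
        rw [hgE, ← Finset.sum_sub_distrib]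
        calc |∑ i, (w i * (gt (σ i) E).toReal - w i * (G i E).toReal)|
            ≤ ∑ i, |w i * (gt (σ i) E).toReal - w i * (G i E).toReal| :=
              Finset.abs_sum_le_sum_abs _ _
          _ ≤ ∑ i, (w i * α + C * (w i * tvDistSet (G i) F) + α / k) := by
              refine Finset.sum_le_sum fun i _ => ?_
              have i1 := hgtP (σ i)
              have i2 := hG i
              have i3 := SLD.tvDistSet_nonneg (G i) F
              have i4 := hw0 i
              rw [← mul_sub, abs_mul, abs_of_nonneg (hw0 i)]
              by_cases h : α / k ≤ w i
              · have hs : σ i = i := by simp [hσ, h]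
                rw [hs] at i1 ⊢
                have j1 := (SLD.le_tvDist (gt i) (G i) hE).trans (hgtD i)
                have j2 := mul_le_mul_of_nonneg_left j1 i4
                have j3 : 0 ≤ α / k := by positivity
                linarith
              · have j1 := SLD.abs_le_one (gt (σ i)) (G i) E
                have j2 := mul_le_mul_of_nonneg_left j1 i4
                have j3 : 0 ≤ w i * α := by positivity
                have j4 : 0 ≤ C * (w i * tvDistSet (G i) F) := by positivity
                push Not at h
                linarith
          _ = α + C * ∑ i, w i * tvDistSet (G i) F + α := by
              rw [Finset.sum_add_distrib, Finset.sum_add_distrib, ← Finset.sum_mul, hw1,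
                ← Finset.mul_sum, Finset.sum_const, Finset.card_univ, Fintype.card_fin,
                nsmul_eq_mul, mul_div_cancel₀ _ (by positivity), one_mul]
          _ ≤ _ := by
              have := mul_le_mul_of_nonneg_left hGd (by linarith : 0 ≤ C)
              linarith
      have h4 : C * (α / (2 * C)) = α / 2 := by field_simp
      rw [mul_add, h4] at h3
      have t1 := abs_sub_le ((ψ c).1 E).toReal (∑ i, rep cw i * (gt (σ i) E).toReal) (g E).toReal
      have t2 := abs_sub_le (∑ i, rep cw i * (gt (σ i) E).toReal)
        (∑ i, w i * (gt (σ i) E).toReal) (g E).toReal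
      linarith
end

section
/- There is an absolute constant c > 0 such that for all integers d, k ≥ 1 and all α ∈ (0,1), β ∈ (0, 1/e], there exists a (3, 5α)-accurate (m₁, 1−2kβ, L₁)-stable list decoder for the class kmix_k(G_d) of k-mixtures of d-dimensional Gaussian measures, where m = ⌈c·d·log(1/β)⌉, L = ⌈(d·log(1/β))^{c·d²·log(d/α)}⌉, m₁ = ⌈(2mk + 8k·log(1/β))/α⌉, and L₁ = (L·k/α)^k · (10·e·k·log(1/β)/α)^{mk}. -/
open MeasureTheory ProbabilityTheory Matrix

section
/-! ### Total variation -/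

section TV
variable {X : Type*} [MeasurableSpace X]

lemma tv_bdd (μ ν : Measure X) [IsProbabilityMeasure μ] [IsProbabilityMeasure ν] :
    BddAbove (Set.range fun E : {E : Set X // MeasurableSet E} =>
      |(μ E.1).toReal - (ν E.1).toReal|) := by
  refine ⟨1, ?_⟩
  rintro _ ⟨E, rfl⟩
  have h1 : (μ E.1).toReal ≤ 1 := measureReal_le_one
  have h2 : (ν E.1).toReal ≤ 1 := measureReal_le_one
  have h3 : 0 ≤ (μ E.1).toReal := ENNReal.toReal_nonneg
  have h4 : 0 ≤ (ν E.1).toReal := ENNReal.toReal_nonneg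
  rw [abs_le]; constructor <;> linarith

lemma le_tv (μ ν : Measure X) [IsProbabilityMeasure μ] [IsProbabilityMeasure ν] {E : Set X}
    (hE : MeasurableSet E) : |(μ E).toReal - (ν E).toReal| ≤ tvDist μ ν :=
  le_ciSup (tv_bdd μ ν) (⟨E, hE⟩ : {E : Set X // MeasurableSet E})

lemma tv_le {μ ν : Measure X} {a : ℝ}
    (h : ∀ E, MeasurableSet E → |(μ E).toReal - (ν E).toReal| ≤ a) : tvDist μ ν ≤ a := by
  haveI : Nonempty {E : Set X // MeasurableSet E} := ⟨⟨∅, MeasurableSet.empty⟩⟩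
  exact ciSup_le fun E => h E.1 E.2

lemma tv_nonneg (μ ν : Measure X) : 0 ≤ tvDist μ ν :=
  Real.iSup_nonneg fun _ => abs_nonneg _

lemma tv_comm (μ ν : Measure X) : tvDist μ ν = tvDist ν μ := by
  unfold tvDist; congr 1; ext E; rw [abs_sub_comm]

lemma tv_self (μ : Measure X) : tvDist μ μ = 0 :=
  le_antisymm (tv_le fun E _ => by simp) (tv_nonneg _ _)

lemma tv_triangle (μ ν ρ : Measure X) [IsProbabilityMeasure μ] [IsProbabilityMeasure ν]
    [IsProbabilityMeasure ρ] : tvDist μ ρ ≤ tvDist μ ν + tvDist ν ρ := by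
  refine tv_le fun E hE => ?_
  have h1 := le_tv μ ν hE
  have h2 := le_tv ν ρ hE
  have := abs_sub_le (μ E).toReal (ν E).toReal (ρ E).toReal
  linarith

/-- If `f ≤ K p` as measures, then the total variation distance is at most `K - 1`. -/
lemma tv_le_of_dom {f p : Measure X} [IsProbabilityMeasure f] [IsProbabilityMeasure p] {K : ℝ}
    (hK : 1 ≤ K) (h : ∀ E, MeasurableSet E → (f E).toReal ≤ K * (p E).toReal) :
    tvDist f p ≤ K - 1 := by
  refine tv_le fun E hE => ?_
  have h1 := h E hE
  have h2 := h Eᶜ hE.compl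
  have e1 : (f Eᶜ).toReal = 1 - (f E).toReal := probReal_compl_eq_one_sub hE
  have e2 : (p Eᶜ).toReal = 1 - (p E).toReal := probReal_compl_eq_one_sub hE
  rw [e1, e2] at h2
  have h3 : (p E).toReal ≤ 1 := measureReal_le_one
  have h4 : 0 ≤ (p E).toReal := ENNReal.toReal_nonneg
  rw [abs_le]; constructor <;> nlinarith
end TV

/-! ### Gaussians in normal form -/

/-- standard Gaussian density -/
noncomputable def stdDens {d : ℕ} (z : Fin d → ℝ) : ℝ := ∏ a, gaussianPDFReal 0 1 (z a)

/-- standard Gaussian measure -/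
noncomputable def stdG (d : ℕ) : Measure (Fin d → ℝ) := Measure.pi fun _ => gaussianReal 0 1

instance (d : ℕ) : IsProbabilityMeasure (stdG d) := by unfold stdG; infer_instance

/-- The Gaussian measure such that `B x + b` is standard. -/
noncomputable def gm {d : ℕ} (B : Matrix (Fin d) (Fin d) ℝ) (b : Fin d → ℝ) :
    Measure (Fin d → ℝ) :=
  volume.withDensity fun x => ENNReal.ofReal (|B.det| * stdDens (B *ᵥ x + b))

lemma stdDens_nonneg {d : ℕ} (z : Fin d → ℝ) : 0 ≤ stdDens z :=
  Finset.prod_nonneg fun _ _ => gaussianPDFReal_nonneg _ _ _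

lemma stdDens_eq {d : ℕ} (z : Fin d → ℝ) :
    stdDens z = ((Real.sqrt (2 * Real.pi))⁻¹) ^ d * Real.exp (-(1/2) * ∑ a, z a ^ 2) := by
  unfold stdDens gaussianPDFReal
  rw [Finset.prod_mul_distrib, ← Real.exp_sum]
  simp only [NNReal.coe_one, mul_one, sub_zero, Finset.prod_const, Finset.card_univ,
    Fintype.card_fin, Finset.mul_sum]
  congr 2
  exact Finset.sum_congr rfl fun a _ => by ring

lemma measurable_stdDens {d : ℕ} : Measurable (stdDens (d := d)) := by
  unfold stdDens
  exact Finset.measurable_prod _ fun a _ =>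
    (measurable_gaussianPDFReal 0 1).comp (measurable_pi_apply a)

lemma stdG_eq (d : ℕ) : stdG d = volume.withDensity fun z => ENNReal.ofReal (stdDens z) := by
  unfold stdG
  refine Measure.pi_eq fun s hs => ?_
  rw [withDensity_apply _ (MeasurableSet.univ_pi hs), ← lintegral_indicator (MeasurableSet.univ_pi hs)]
  have hi : ∀ i, Integrable ((s i).indicator (gaussianPDFReal 0 1)) volume := fun i =>
    (integrable_gaussianPDFReal 0 1).indicator (hs i)
  have h0 : ∀ i x, 0 ≤ (s i).indicator (gaussianPDFReal 0 1) x := fun i x =>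
    Set.indicator_nonneg (fun _ _ => gaussianPDFReal_nonneg _ _ _) _
  have h1 : ∀ z : Fin d → ℝ, (Set.univ.pi s).indicator (fun z => ENNReal.ofReal (stdDens z)) z
      = ENNReal.ofReal (∏ i, (s i).indicator (gaussianPDFReal 0 1) (z i)) := by
    intro z
    by_cases hz : z ∈ Set.univ.pi s
    · rw [Set.indicator_of_mem hz]
      unfold stdDens
      congr 1
      exact Finset.prod_congr rfl fun i _ => by
        rw [Set.indicator_of_mem (hz i (Set.mem_univ _))]
    · rw [Set.indicator_of_notMem hz]
      simp only [Set.mem_pi, Set.mem_univ, true_implies, not_forall] at hz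
      obtain ⟨i, hi⟩ := hz
      rw [Finset.prod_eq_zero (Finset.mem_univ i) (Set.indicator_of_notMem hi _)]
      simp
  simp_rw [h1]
  rw [← ofReal_integral_eq_lintegral_ofReal, integral_fintype_prod_volume_eq_prod
    (fun i => (s i).indicator (gaussianPDFReal 0 1)),
    ENNReal.ofReal_prod_of_nonneg fun i _ => integral_nonneg (h0 i)]
  · refine Finset.prod_congr rfl fun i _ => ?_
    rw [integral_indicator (hs i), gaussianReal_apply_eq_integral _ one_ne_zero]
  · exact Integrable.fintype_prod hi
  · exact Filter.Eventually.of_forall fun z => Finset.prod_nonneg fun i _ => h0 i _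

lemma measurable_aff {d : ℕ} (B : Matrix (Fin d) (Fin d) ℝ) (b : Fin d → ℝ) :
    Measurable fun x : Fin d → ℝ => B *ᵥ x + b := by
  have : Continuous fun x : Fin d → ℝ => B *ᵥ x + b := by fun_prop
  exact this.measurable

lemma gm_map {d : ℕ} {B : Matrix (Fin d) (Fin d) ℝ} (hB : B.det ≠ 0) (b : Fin d → ℝ) :
    (gm B b).map (fun x => B *ᵥ x + b) = stdG d := by
  have hv : (volume : Measure (Fin d → ℝ)).map (fun x => B *ᵥ x + b)
      = ENNReal.ofReal |B.det⁻¹| • volume := by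
    have h1 := Real.map_matrix_volume_pi_eq_smul_volume_pi hB
    have h2 : (fun x : Fin d → ℝ => B *ᵥ x + b) = (fun y => y + b) ∘ (Matrix.toLin' B) := by
      ext x; simp
    rw [h2, ← Measure.map_map (measurable_add_const b)
      (LinearMap.continuous_of_finiteDimensional _).measurable, h1, Measure.map_smul,
      map_add_right_eq_self]
  rw [stdG_eq]
  ext E hE
  rw [Measure.map_apply (measurable_aff B b) hE, gm,
    withDensity_apply _ (measurable_aff B b hE), withDensity_apply _ hE]
  have hm : Measurable fun z : Fin d → ℝ => ENNReal.ofReal (|B.det| * stdDens z) :=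
    (measurable_stdDens.const_mul _).ennreal_ofReal
  rw [← setLIntegral_map hE hm (measurable_aff B b), hv]
  rw [Measure.restrict_smul, lintegral_smul_measure]
  simp_rw [ENNReal.ofReal_mul (abs_nonneg B.det)]
  rw [lintegral_const_mul _ measurable_stdDens.ennreal_ofReal, smul_eq_mul, ← mul_assoc,
    ← ENNReal.ofReal_mul (abs_nonneg _), ← abs_mul, inv_mul_cancel₀ hB]
  simp

lemma gm_prob {d : ℕ} {B : Matrix (Fin d) (Fin d) ℝ} (hB : B.det ≠ 0) (b : Fin d → ℝ) :
    IsProbabilityMeasure (gm B b) := by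
  have : IsProbabilityMeasure ((gm B b).map (fun x => B *ᵥ x + b)) := by
    rw [gm_map hB]; infer_instance
  exact Measure.isProbabilityMeasure_of_map (fun x => B *ᵥ x + b)

open scoped MatrixOrder in
lemma Gd_rep {d : ℕ} {P : Measure (Fin d → ℝ)} (hP : P ∈ Gd d) :
    ∃ (B : Matrix (Fin d) (Fin d) ℝ) (b : Fin d → ℝ), B.det ≠ 0 ∧ P = gm B b := by
  obtain ⟨μ, S, hS, rfl⟩ := hP
  have hSi := hS.inv
  obtain ⟨B, hB⟩ := CStarAlgebra.nonneg_iff_eq_star_mul_self.mp hSi.posSemidef.nonneg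
  have hdet : S⁻¹.det = B.det ^ 2 := by
    rw [hB, Matrix.det_mul, Matrix.star_eq_conjTranspose, Matrix.det_conjTranspose]; simp [sq]
  have hpos : 0 < S.det := hS.det_pos
  have hdet2 : S.det⁻¹ = B.det ^ 2 := by
    rw [← hdet, Matrix.det_nonsing_inv, Ring.inverse_eq_inv']
  have hB0 : B.det ≠ 0 := by
    intro h
    rw [h] at hdet2
    have := inv_pos.mpr hpos
    rw [hdet2] at this; simp at this
  refine ⟨B, -(B *ᵥ μ), hB0, ?_⟩
  unfold gm
  congr 1; ext x; congr 1
  rw [stdDens_eq, gaussianPdf]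
  have e1 : B *ᵥ x + -(B *ᵥ μ) = B *ᵥ (x - μ) := by rw [Matrix.mulVec_sub, sub_eq_add_neg]
  have e2 : (x - μ) ⬝ᵥ (S⁻¹ *ᵥ (x - μ)) = ∑ a, (B *ᵥ (x - μ)) a ^ 2 := by
    rw [hB, ← Matrix.mulVec_mulVec, Matrix.dotProduct_mulVec, Matrix.star_eq_conjTranspose,
      Matrix.conjTranspose_eq_transpose_of_trivial, Matrix.vecMul_transpose]
    simp [dotProduct, sq]
  rw [e1, e2, ← mul_assoc]
  congr 1
  rw [Real.sqrt_mul (by positivity), mul_inv, mul_comm, ← Real.sqrt_inv, hdet2, Real.sqrt_sq_eq_abs,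
    inv_pow]
  congr 2
  rw [Real.sqrt_eq_iff_mul_self_eq (by positivity) (by positivity), ← mul_pow,
    Real.mul_self_sqrt (by positivity)]
end

section
lemma gm_dom {d : ℕ} {B B' : Matrix (Fin d) (Fin d) ℝ} {b b' : Fin d → ℝ} (hB' : B'.det ≠ 0)
    {K : ℝ} (hK : 0 ≤ K)
    (h : ∀ x, |B.det| * stdDens (B *ᵥ x + b) ≤ K * (|B'.det| * stdDens (B' *ᵥ x + b')))
    (E : Set (Fin d → ℝ)) (hE : MeasurableSet E) :
    (gm B b E).toReal ≤ K * (gm B' b' E).toReal := by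
  have := gm_prob hB' b'
  have h1 : gm B b E ≤ ENNReal.ofReal K * gm B' b' E := by
    unfold gm
    rw [withDensity_apply _ hE, withDensity_apply _ hE, ← lintegral_const_mul]
    · refine lintegral_mono fun x => ?_
      rw [← ENNReal.ofReal_mul hK]
      exact ENNReal.ofReal_le_ofReal (h x)
    · exact ((measurable_stdDens.comp (measurable_aff B' b')).const_mul _).ennreal_ofReal
  have h2 := ENNReal.toReal_mono (ENNReal.mul_ne_top ENNReal.ofReal_ne_top (measure_ne_top _ _)) h1
  rwa [ENNReal.toReal_mul, ENNReal.toReal_ofReal hK] at h2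

lemma abs_det_le {d : ℕ} (M : Matrix (Fin d) (Fin d) ℝ) : |M.det| ≤ ∏ i, ∑ j, |M i j| := by
  rw [← Matrix.det_transpose, Matrix.det_apply]
  refine (Finset.abs_sum_le_sum_abs _ _).trans ?_
  rw [Finset.prod_univ_sum]
  have : ∀ σ : Equiv.Perm (Fin d), |Equiv.Perm.sign σ • ∏ i, Mᵀ (σ i) i| = ∏ i, |M i (σ i)| := by
    intro σ
    rw [← Finset.abs_prod]
    rcases Int.units_eq_one_or (Equiv.Perm.sign σ) with h | h <;> simp [h]
  simp_rw [this]
  refine (Finset.sum_image (s := Finset.univ)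
    (g := fun σ : Equiv.Perm (Fin d) => (σ : Fin d → Fin d))
    (f := fun p => ∏ i, |M i (p i)|) (fun a _ b _ h => DFunLike.coe_injective h)).symm.le.trans ?_
  refine Finset.sum_le_sum_of_subset_of_nonneg (fun p _ => by simp [Fintype.mem_piFinset])
    fun p _ _ => Finset.prod_nonneg fun i _ => abs_nonneg _

/-- main quadratic estimate -/
lemma quad_est {d : ℕ} (hd : 1 ≤ d) {ε : ℝ} (hε : 0 < ε) (hs : (d : ℝ) * ε ≤ 1/10)
    (E : Matrix (Fin d) (Fin d) ℝ) (e : Fin d → ℝ) (hE : ∀ i j, |E i j| ≤ ε) (he : ∀ i, |e i| ≤ ε)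
    (z : Fin d → ℝ) :
    (1 - 4 * (d * ε)) * ∑ a, z a ^ 2 ≤
      (1 + d * ε) * ∑ a, ((1 + E) *ᵥ z + e : Fin d → ℝ) a ^ 2 + 4 * ε := by
  set η : ℝ := d * ε with hη
  have hd' : (1 : ℝ) ≤ d := by exact_mod_cast hd
  have hη0 : 0 < η := by positivity
  set w : Fin d → ℝ := fun a => (E *ᵥ z) a + e a with hw
  have hu : ∀ a, ((1 + E) *ᵥ z + e : Fin d → ℝ) a = z a + w a := by
    intro a; simp [hw, Matrix.add_mulVec, add_assoc]
  simp_rw [hu]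
  set Z := ∑ a, z a ^ 2 with hZ
  have hZ0 : 0 ≤ Z := Finset.sum_nonneg fun a _ => sq_nonneg _
  have hw2 : ∀ a, w a ^ 2 ≤ 2 * (d * ε ^ 2 * Z) + 2 * ε ^ 2 := by
    intro a
    have h1 : (E *ᵥ z) a ^ 2 ≤ d * ε ^ 2 * Z := by
      have := Finset.sum_mul_sq_le_sq_mul_sq Finset.univ (fun j => E a j) z
      refine this.trans ?_
      refine mul_le_mul_of_nonneg_right ?_ hZ0
      calc ∑ j, E a j ^ 2 ≤ ∑ j : Fin d, ε ^ 2 := Finset.sum_le_sum fun j _ => by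
            rw [← sq_abs]; exact pow_le_pow_left₀ (abs_nonneg _) (hE a j) 2
        _ = d * ε ^ 2 := by simp
    have h2 : e a ^ 2 ≤ ε ^ 2 := by
      rw [← sq_abs]; exact pow_le_pow_left₀ (abs_nonneg _) (he a) 2
    have : w a = (E *ᵥ z) a + e a := rfl
    rw [this]
    nlinarith [sq_nonneg ((E *ᵥ z) a - e a)]
  have hW : ∑ a, w a ^ 2 ≤ 2 * η ^ 2 * Z + 2 * η * ε := by
    calc ∑ a, w a ^ 2 ≤ ∑ a : Fin d, (2 * (d * ε ^ 2 * Z) + 2 * ε ^ 2) :=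
          Finset.sum_le_sum fun a _ => hw2 a
      _ = _ := by simp [hη]; ring
  have hpt : ∀ a, z a ^ 2 ≤ (1 + η) * (z a + w a) ^ 2 + 2 / η * w a ^ 2 := by
    intro a
    have key : (1 + η) * (z a + w a) ^ 2 + (1 + 1 / η) * w a ^ 2 - z a ^ 2
        = (η * (z a + w a) + w a) ^ 2 / η := by
      field_simp; ring
    have h3 : 0 ≤ (η * (z a + w a) + w a) ^ 2 / η := by positivity
    have h4 : (1 + 1 / η) ≤ 2 / η := by
      rw [le_div_iff₀ hη0]; field_simp; linarith
    nlinarith [sq_nonneg (w a)]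
  have hsum : Z ≤ (1 + η) * ∑ a, (z a + w a) ^ 2 + 2 / η * ∑ a, w a ^ 2 := by
    rw [Finset.mul_sum, Finset.mul_sum, ← Finset.sum_add_distrib]
    exact Finset.sum_le_sum fun a _ => hpt a
  have h5 : 2 / η * ∑ a, w a ^ 2 ≤ 4 * η * Z + 4 * ε := by
    calc 2 / η * ∑ a, w a ^ 2 ≤ 2 / η * (2 * η ^ 2 * Z + 2 * η * ε) :=
          mul_le_mul_of_nonneg_left hW (by positivity)
      _ = _ := by field_simp; ring
  linarith

lemma gm_perturb {d : ℕ} (hd : 1 ≤ d) {ε : ℝ} (hε : 0 < ε) (hs : (d : ℝ) ^ 2 * ε ≤ 1/100)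
    (E : Matrix (Fin d) (Fin d) ℝ) (e : Fin d → ℝ) (hE : ∀ i j, |E i j| ≤ ε) (he : ∀ i, |e i| ≤ ε)
    (B : Matrix (Fin d) (Fin d) ℝ) (b : Fin d → ℝ) (hB : B.det ≠ 0) (hM : (1 + E).det ≠ 0) :
    tvDist (gm B b) (gm ((1 + E) * B) ((1 + E) *ᵥ b + e)) ≤ 52 * (d ^ 2 * ε) := by
  have hd' : (1 : ℝ) ≤ d := by exact_mod_cast hd
  set η : ℝ := d * ε with hη
  have hη0 : 0 < η := by positivity
  have hdη : (d : ℝ) * η = d ^ 2 * ε := by rw [hη]; ring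
  have hηs : η ≤ 1 / 100 := by nlinarith
  have hεη : ε ≤ d ^ 2 * ε := by nlinarith [one_le_pow₀ hd' (n := 2)]
  set κ : ℝ := (1 - 4 * η) / (1 + η) with hκ
  have hκ0 : 0 < κ := by apply div_pos <;> linarith
  have hκ1 : κ ≤ 1 := by rw [hκ, div_le_one (by linarith)]; linarith
  set t := Real.sqrt κ with ht
  have ht2 : t ^ 2 = κ := Real.sq_sqrt hκ0.le
  have ht0 : 0 < t := Real.sqrt_pos.mpr hκ0
  have ht1 : t ≤ 1 := Real.sqrt_le_one.mpr hκ1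
  have htκ : 1 - 5 * η ≤ t := by
    have : 1 - 5 * η ≤ κ := by rw [hκ, le_div_iff₀ (by linarith)]; nlinarith
    nlinarith
  have htinv : t⁻¹ ≤ Real.exp (10 * η) := by
    have : t⁻¹ ≤ 10 * η + 1 := by
      rw [inv_le_comm₀ ht0 (by linarith)]
      refine le_trans ?_ htκ
      rw [inv_le_iff_one_le_mul₀ (by linarith)]
      nlinarith
    exact this.trans (Real.add_one_le_exp _)
  have htd : (t ^ d)⁻¹ ≤ Real.exp (10 * (d ^ 2 * ε)) := by
    rw [← inv_pow]
    calc t⁻¹ ^ d ≤ Real.exp (10 * η) ^ d := pow_le_pow_left₀ (by positivity) htinv d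
      _ = _ := by rw [← Real.exp_nat_mul, ← hdη]; congr 1; ring
  have hdet : |(1 + E).det| ≤ Real.exp (d ^ 2 * ε) := by
    refine (abs_det_le _).trans ?_
    calc ∏ i, ∑ j, |(1 + E) i j| ≤ ∏ i : Fin d, Real.exp η := by
          refine Finset.prod_le_prod (fun i _ => Finset.sum_nonneg fun j _ => abs_nonneg _)
            fun i _ => ?_
          calc ∑ j, |(1 + E) i j| ≤ ∑ j, ((if i = j then 1 else 0) + ε) := by
                refine Finset.sum_le_sum fun j _ => ?_
                rw [Matrix.add_apply, Matrix.one_apply]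
                refine (abs_add_le _ _).trans (add_le_add ?_ (hE i j))
                split_ifs <;> simp
            _ = η + 1 := by simp [Finset.sum_add_distrib, hη]; ring
            _ ≤ _ := Real.add_one_le_exp _
      _ = _ := by rw [Finset.prod_const, Finset.card_univ, Fintype.card_fin, ← Real.exp_nat_mul, hdη]
  set K := Real.exp (13 * (d ^ 2 * ε)) with hK
  have hK1 : 1 ≤ K := by rw [hK]; apply Real.one_le_exp; positivity
  have hKle : K - 1 ≤ 26 * (d ^ 2 * ε) := by
    have h := Real.abs_exp_sub_one_sub_id_le (x := 13 * (d ^ 2 * ε)) (by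
      rw [abs_of_nonneg (by positivity)]; linarith)
    have h2 := (abs_le.mp h).2
    have h0 : 0 ≤ (d : ℝ) ^ 2 * ε := by positivity
    nlinarith
  -- third measure
  have hdet3 : (t • B).det = t ^ d * B.det := by simp [Matrix.det_smul]
  have hB3 : (t • B).det ≠ 0 := by rw [hdet3]; positivity
  have hB2 : ((1 + E) * B).det ≠ 0 := by rw [Matrix.det_mul]; exact mul_ne_zero hM hB
  have i1 := gm_prob hB b
  have i2 := gm_prob hB2 ((1 + E) *ᵥ b + e)
  have i3 := gm_prob hB3 (t • b)
  have hsq : ∀ x : Fin d → ℝ, ∑ a, ((t • B) *ᵥ x + t • b) a ^ 2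
      = κ * ∑ a, (B *ᵥ x + b) a ^ 2 := by
    intro x
    rw [← ht2, Finset.mul_sum]
    refine Finset.sum_congr rfl fun a _ => ?_
    simp [Matrix.smul_mulVec]; ring
  have D1 : tvDist (gm B b) (gm (t • B) (t • b)) ≤ K - 1 := by
    refine tv_le_of_dom hK1 (gm_dom hB3 (by linarith) fun x => ?_)
    rw [stdDens_eq, stdDens_eq, hsq, hdet3, abs_mul, abs_of_pos (by positivity : 0 < t ^ d)]
    set u := ∑ a, (B *ᵥ x + b) a ^ 2
    have hu0 : 0 ≤ u := Finset.sum_nonneg fun a _ => sq_nonneg _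
    have e1 : Real.exp (-(1/2) * u) ≤ Real.exp (-(1/2) * (κ * u)) :=
      Real.exp_le_exp.mpr (by nlinarith)
    have e2 : 1 ≤ K * t ^ d := by
      have : (t ^ d)⁻¹ ≤ K := htd.trans (Real.exp_le_exp.mpr (by nlinarith))
      rwa [inv_le_iff_one_le_mul₀ (by positivity)] at this
    have c0 : 0 ≤ |B.det| * ((Real.sqrt (2 * Real.pi))⁻¹) ^ d := by positivity
    calc |B.det| * ((Real.sqrt (2 * Real.pi))⁻¹ ^ d * Real.exp (-(1/2) * u))
        = (|B.det| * ((Real.sqrt (2 * Real.pi))⁻¹) ^ d) * (1 * Real.exp (-(1/2) * u)) := by ring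
      _ ≤ (|B.det| * ((Real.sqrt (2 * Real.pi))⁻¹) ^ d) *
          ((K * t ^ d) * Real.exp (-(1/2) * (κ * u))) := by gcongr
      _ = _ := by ring
  have D2 : tvDist (gm ((1 + E) * B) ((1 + E) *ᵥ b + e)) (gm (t • B) (t • b)) ≤ K - 1 := by
    refine tv_le_of_dom hK1 (gm_dom hB3 (by linarith) fun x => ?_)
    rw [stdDens_eq, stdDens_eq, hsq, hdet3, abs_mul, abs_of_pos (by positivity : 0 < t ^ d),
      Matrix.det_mul, abs_mul]
    have hv : ((1 + E) * B) *ᵥ x + ((1 + E) *ᵥ b + e) = (1 + E) *ᵥ (B *ᵥ x + b) + e := by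
      rw [Matrix.mulVec_add, Matrix.mulVec_mulVec, add_assoc]
    rw [hv]
    have hq := quad_est hd hε (by rw [← hη]; linarith) E e hE he (B *ᵥ x + b)
    rw [← hη] at hq
    set u := ∑ a, (B *ᵥ x + b) a ^ 2
    set v := ∑ a, ((1 + E) *ᵥ (B *ᵥ x + b) + e : Fin d → ℝ) a ^ 2
    have hu0 : 0 ≤ u := Finset.sum_nonneg fun a _ => sq_nonneg _
    have hκu : κ * u ≤ v + 4 * ε := by
      rw [hκ, div_mul_eq_mul_div, div_le_iff₀ (by linarith)]
      nlinarith
    have e1 : Real.exp (-(1/2) * v) ≤ Real.exp (2 * (d ^ 2 * ε)) * Real.exp (-(1/2) * (κ * u)) := by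
      rw [← Real.exp_add]
      exact Real.exp_le_exp.mpr (by linarith)
    have e2 : |(1 + E).det| * Real.exp (2 * (d ^ 2 * ε)) ≤ K * t ^ d := by
      have h1 : |(1 + E).det| * Real.exp (2 * (d ^ 2 * ε)) * (t ^ d)⁻¹ ≤ K := by
        calc _ ≤ Real.exp (d ^ 2 * ε) * Real.exp (2 * (d ^ 2 * ε)) * Real.exp (10 * (d ^ 2 * ε)) := by
              gcongr
          _ = K := by rw [hK, ← Real.exp_add, ← Real.exp_add]; congr 1; ring
      rwa [← div_eq_mul_inv, div_le_iff₀ (by positivity)] at h1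
    have c0 : 0 ≤ |B.det| * ((Real.sqrt (2 * Real.pi))⁻¹) ^ d := by positivity
    calc |(1 + E).det| * |B.det| * ((Real.sqrt (2 * Real.pi))⁻¹ ^ d * Real.exp (-(1/2) * v))
        ≤ |(1 + E).det| * |B.det| * ((Real.sqrt (2 * Real.pi))⁻¹ ^ d *
          (Real.exp (2 * (d ^ 2 * ε)) * Real.exp (-(1/2) * (κ * u)))) := by gcongr
      _ = (|B.det| * ((Real.sqrt (2 * Real.pi))⁻¹) ^ d) *
          ((|(1 + E).det| * Real.exp (2 * (d ^ 2 * ε))) * Real.exp (-(1/2) * (κ * u))) := by ring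
      _ ≤ (|B.det| * ((Real.sqrt (2 * Real.pi))⁻¹) ^ d) *
          ((K * t ^ d) * Real.exp (-(1/2) * (κ * u))) := by gcongr
      _ = _ := by ring
  have := tv_triangle (gm B b) (gm (t • B) (t • b)) (gm ((1 + E) * B) ((1 + E) *ᵥ b + e))
  rw [tv_comm] at D2
  linarith

lemma det_one_add_ne {d : ℕ} {ε : ℝ} (hs : (d : ℝ) * ε ≤ 1/10)
    (E : Matrix (Fin d) (Fin d) ℝ) (hE : ∀ i j, |E i j| ≤ ε) : (1 + E).det ≠ 0 := by
  refine det_ne_zero_of_sum_row_lt_diag fun i => ?_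
  have h1 : ∑ j ∈ Finset.univ.erase i, ‖(1 + E) i j‖ ≤ ∑ j ∈ Finset.univ.erase i, |E i j| := by
    refine Finset.sum_le_sum fun j hj => ?_
    rw [Matrix.add_apply, Matrix.one_apply_ne (Finset.ne_of_mem_erase hj).symm]
    simp
  have h2 : ∑ j ∈ Finset.univ.erase i, |E i j| + |E i i| ≤ d * ε := by
    rw [Finset.sum_erase_add _ _ (Finset.mem_univ i)]
    calc ∑ j, |E i j| ≤ ∑ j : Fin d, ε := Finset.sum_le_sum fun j _ => hE i j
      _ = _ := by simp
  have h3 : 1 - |E i i| ≤ ‖(1 + E) i i‖ := by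
    rw [Matrix.add_apply, Matrix.one_apply_eq, Real.norm_eq_abs]
    have := neg_abs_le (E i i)
    exact le_trans (by linarith) (le_abs_self _)
  linarith
end

section
/-- homogeneous coordinates -/
def hom {d : ℕ} (z : Fin d → ℝ) : Fin (d + 1) → ℝ := Fin.snoc (α := fun _ => ℝ) z 1

@[simp] lemma hom_castSucc {d : ℕ} (z : Fin d → ℝ) (a : Fin d) : hom z a.castSucc = z a := by
  simp [hom]
@[simp] lemma hom_last {d : ℕ} (z : Fin d → ℝ) : hom z (Fin.last d) = 1 := by
  simp [hom]

/-- the frame matrix -/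
def Wm {d : ℕ} (B : Matrix (Fin d) (Fin d) ℝ) (b : Fin d → ℝ) (y : Fin (d + 1) → (Fin d → ℝ)) :
    Matrix (Fin (d + 1)) (Fin (d + 1)) ℝ := Matrix.of fun r i => hom (B *ᵥ y i + b) r

lemma coincide {d : ℕ} (hd : 1 ≤ d) {ε : ℝ} (hε : 0 < ε) (hs : (d : ℝ) ^ 2 * ε ≤ 1/100)
    (B₁ B₂ : Matrix (Fin d) (Fin d) ℝ) (b₁ b₂ : Fin d → ℝ) (hB₁ : B₁.det ≠ 0) (hB₂ : B₂.det ≠ 0)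
    (y : Fin (d + 1) → (Fin d → ℝ)) (hW : (Wm B₁ b₁ y).det ≠ 0)
    (F₁ F₂ : Fin d → Fin (d + 1) → ℝ) (h₁ : ∀ a i, |F₁ a i| ≤ ε) (h₂ : ∀ a i, |F₂ a i| ≤ ε)
    (h : ∀ a i, (B₁ *ᵥ y i + b₁) a + (F₁ a ᵥ* Wm B₁ b₁ y) i
      = (B₂ *ᵥ y i + b₂) a + (F₂ a ᵥ* Wm B₂ b₂ y) i) :
    tvDist (gm B₁ b₁) (gm B₂ b₂) ≤ 104 * (d ^ 2 * ε) := by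
  have hd' : (1 : ℝ) ≤ d := by exact_mod_cast hd
  have hs' : (d : ℝ) * ε ≤ 1/10 := by nlinarith [mul_pos (by linarith : (0:ℝ) < d) hε]
  let E₁ : Matrix (Fin d) (Fin d) ℝ := Matrix.of fun a c => F₁ a c.castSucc
  let E₂ : Matrix (Fin d) (Fin d) ℝ := Matrix.of fun a c => F₂ a c.castSucc
  let e₁ : Fin d → ℝ := fun a => F₁ a (Fin.last d)
  let e₂ : Fin d → ℝ := fun a => F₂ a (Fin.last d)
  have hM₁ : (1 + E₁).det ≠ 0 := det_one_add_ne hs' E₁ fun i j => h₁ _ _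
  have hM₂ : (1 + E₂).det ≠ 0 := det_one_add_ne hs' E₂ fun i j => h₂ _ _
  have t₁ := gm_perturb hd hε hs E₁ e₁ (fun i j => h₁ _ _) (fun i => h₁ _ _) B₁ b₁ hB₁ hM₁
  have t₂ := gm_perturb hd hε hs E₂ e₂ (fun i j => h₂ _ _) (fun i => h₂ _ _) B₂ b₂ hB₂ hM₂
  have key : ∀ (B : Matrix (Fin d) (Fin d) ℝ) (b : Fin d → ℝ) (F : Fin d → Fin (d + 1) → ℝ) (a i),
      (B *ᵥ y i + b) a + (F a ᵥ* Wm B b y) i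
      = (((1 + Matrix.of fun a c => F a (Fin.castSucc c)) * B) *ᵥ y i +
        ((1 + Matrix.of fun a c => F a (Fin.castSucc c)) *ᵥ b + fun a => F a (Fin.last d)) : Fin d → ℝ) a := by
    intro B b F a i
    have e : ((1 + Matrix.of fun a c => F a (Fin.castSucc c)) * B) *ᵥ y i +
        ((1 + Matrix.of fun a c => F a (Fin.castSucc c)) *ᵥ b + fun a => F a (Fin.last d))
        = (1 + Matrix.of fun a c => F a (Fin.castSucc c)) *ᵥ (B *ᵥ y i + b)
          + fun a => F a (Fin.last d) := by
      rw [Matrix.mulVec_add, Matrix.mulVec_mulVec, add_assoc]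
    rw [e, Matrix.add_mulVec, Matrix.one_mulVec]
    simp only [Pi.add_apply, add_assoc]
    congr 2
    simp [Matrix.vecMul, Matrix.mulVec, dotProduct, Wm, Fin.sum_univ_castSucc]
  set C₁ := (1 + E₁) * B₁ with hC₁
  set C₂ := (1 + E₂) * B₂ with hC₂
  set c₁ := (1 + E₁) *ᵥ b₁ + e₁ with hc₁
  set c₂ := (1 + E₂) *ᵥ b₂ + e₂ with hc₂
  have heq : ∀ i, C₁ *ᵥ y i + c₁ = C₂ *ᵥ y i + c₂ := by
    intro i; ext a
    have := h a i
    rw [key, key] at this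
    exact this
  have hu : IsUnit B₁.det := isUnit_iff_ne_zero.mpr hB₁
  set G := (C₁ - C₂) * B₁⁻¹ with hG
  set r : Fin d → ℝ := c₁ - c₂ - G *ᵥ b₁ with hr
  have hz : ∀ i, G *ᵥ (B₁ *ᵥ y i + b₁) + r = 0 := by
    intro i
    have : G *ᵥ (B₁ *ᵥ y i + b₁) + r = (C₁ *ᵥ y i + c₁) - (C₂ *ᵥ y i + c₂) := by
      rw [hr, Matrix.mulVec_add, Matrix.mulVec_mulVec, hG, Matrix.mul_assoc,
        Matrix.nonsing_inv_mul _ hu, Matrix.mul_one, Matrix.sub_mulVec]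
      abel
    rw [this, heq i, sub_self]
  have hrow : ∀ a, (Fin.snoc (α := fun _ => ℝ) (G a) (r a) : Fin (d + 1) → ℝ) = 0 := by
    intro a
    refine Matrix.eq_zero_of_vecMul_eq_zero hW ?_
    ext i
    have := congrFun (hz i) a
    simp only [Pi.add_apply, Pi.zero_apply] at this
    simp only [Pi.zero_apply]
    rw [← this]
    simp [Matrix.vecMul, Matrix.mulVec, dotProduct, Wm, Fin.sum_univ_castSucc]
  have hG0 : G = 0 := by
    ext a c
    have := congrFun (hrow a) c.castSucc
    simpa using this
  have hr0 : r = 0 := by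
    ext a
    have := congrFun (hrow a) (Fin.last d)
    simpa using this
  have hCC : C₁ = C₂ := by
    have : G * B₁ = 0 := by rw [hG0, Matrix.zero_mul]
    rw [hG, Matrix.mul_assoc, Matrix.nonsing_inv_mul _ hu, Matrix.mul_one] at this
    exact sub_eq_zero.mp this
  have hcc : c₁ = c₂ := by
    rw [hr, hG0, Matrix.zero_mulVec, sub_zero] at hr0
    exact sub_eq_zero.mp hr0
  have i1 := gm_prob hB₁ b₁
  have i2 := gm_prob hB₂ b₂
  have i3 : IsProbabilityMeasure (gm C₂ c₂) := gm_prob (by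
    rw [hC₂, Matrix.det_mul]; exact mul_ne_zero hM₂ hB₂) c₂
  rw [hCC, hcc] at t₁
  rw [tv_comm] at t₂
  have := tv_triangle (gm B₁ b₁) (gm C₂ c₂) (gm B₂ b₂)
  linarith

/-- the perturbation cell -/
def cell {d : ℕ} (ε : ℝ) (B : Matrix (Fin d) (Fin d) ℝ) (b : Fin d → ℝ)
    (y : Fin (d + 1) → (Fin d → ℝ)) : Set (Fin d → Fin (d + 1) → ℝ) :=
  Set.pi Set.univ fun a => (fun v => (fun i => (B *ᵥ y i + b) a) + v) ''
    ((Matrix.toLin' (Wm B b y)ᵀ) '' (Set.pi Set.univ fun _ => Set.Icc (-ε) ε))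

lemma mem_cell {d : ℕ} {ε : ℝ} {B : Matrix (Fin d) (Fin d) ℝ} {b : Fin d → ℝ}
    {y : Fin (d + 1) → (Fin d → ℝ)} {V} (h : V ∈ cell ε B b y) :
    ∃ F : Fin d → Fin (d + 1) → ℝ, (∀ a i, |F a i| ≤ ε) ∧
      ∀ a i, V a i = (B *ᵥ y i + b) a + (F a ᵥ* Wm B b y) i := by
  have : ∀ a, ∃ v : Fin (d + 1) → ℝ, (∀ i, |v i| ≤ ε) ∧
      ∀ i, V a i = (B *ᵥ y i + b) a + (v ᵥ* Wm B b y) i := by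
    intro a
    obtain ⟨_, ⟨v, hv, rfl⟩, hV⟩ := h a (Set.mem_univ a)
    refine ⟨v, fun i => abs_le.mpr (hv i (Set.mem_univ i)), fun i => ?_⟩
    rw [← hV]
    simp [Matrix.toLin'_apply, Matrix.mulVec_transpose]
  choose F hF using this
  exact ⟨F, fun a => (hF a).1, fun a => (hF a).2⟩

lemma measurableSet_cell {d : ℕ} (ε : ℝ) (B : Matrix (Fin d) (Fin d) ℝ) (b : Fin d → ℝ)
    (y : Fin (d + 1) → (Fin d → ℝ)) : MeasurableSet (cell ε B b y) := by
  refine MeasurableSet.univ_pi fun a => ?_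
  refine IsCompact.measurableSet ?_
  refine IsCompact.image ?_ (by fun_prop)
  refine IsCompact.image ?_ (LinearMap.continuous_of_finiteDimensional _)
  exact isCompact_univ_pi fun _ => isCompact_Icc

lemma volume_cell {d : ℕ} {ε : ℝ} (hε : 0 < ε) (B : Matrix (Fin d) (Fin d) ℝ) (b : Fin d → ℝ)
    (y : Fin (d + 1) → (Fin d → ℝ)) :
    volume (cell ε B b y) = ENNReal.ofReal ((|(Wm B b y).det| * (2 * ε) ^ (d + 1)) ^ d) := by
  unfold cell
  rw [volume_pi_pi]
  have : ∀ a : Fin d, volume ((fun v => (fun i => (B *ᵥ y i + b) a) + v) ''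
    ((Matrix.toLin' (Wm B b y)ᵀ) '' (Set.pi Set.univ fun _ => Set.Icc (-ε) ε)))
      = ENNReal.ofReal (|(Wm B b y).det| * (2 * ε) ^ (d + 1)) := by
    intro a
    rw [Set.image_add_left, measure_preimage_add, Measure.addHaar_image_linearMap, volume_pi_pi,
      LinearMap.det_toLin', Matrix.det_transpose, ENNReal.ofReal_mul (abs_nonneg _)]
    congr 1
    simp only [Real.volume_Icc, Finset.prod_const, Finset.card_univ, Fintype.card_fin]
    rw [← ENNReal.ofReal_pow (by linarith)]
    congr 2; ring
  rw [Finset.prod_congr rfl fun a _ => this a, Finset.prod_const, Finset.card_univ,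
    Fintype.card_fin, ENNReal.ofReal_pow (by positivity)]

lemma cell_subset {d : ℕ} {ε R : ℝ} (hR : 1 ≤ R) (hs : ((d : ℝ) + 1) * ε ≤ 1)
    (B : Matrix (Fin d) (Fin d) ℝ) (b : Fin d → ℝ)
    (y : Fin (d + 1) → (Fin d → ℝ)) (hy : ∀ i a, |(B *ᵥ y i + b) a| < R) :
    cell ε B b y ⊆ Set.pi Set.univ fun _ => Set.pi Set.univ fun _ => Set.Icc (-(2 * R)) (2 * R) := by
  intro V hV a _ i _
  obtain ⟨F, hF, h⟩ := mem_cell hV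
  refine abs_le.mp ?_
  rw [h]
  have h1 : |(F a ᵥ* Wm B b y) i| ≤ R := by
    have hW : ∀ r, |Wm B b y r i| ≤ R := by
      intro r
      refine Fin.lastCases ?_ (fun c => ?_) r
      · simpa [Wm] using hR
      · have := (hy i c).le
        simpa [Wm] using this
    calc |(F a ᵥ* Wm B b y) i| ≤ ∑ r, |F a r * Wm B b y r i| := by
          simp only [Matrix.vecMul, dotProduct]; exact Finset.abs_sum_le_sum_abs _ _
      _ ≤ ∑ r : Fin (d + 1), ε * R := Finset.sum_le_sum fun r _ => by
          rw [abs_mul]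
          exact mul_le_mul (hF a r) (hW r) (abs_nonneg _) ((abs_nonneg _).trans (hF a r))
      _ = ((d : ℝ) + 1) * ε * R := by simp; ring
      _ ≤ 1 * R := by gcongr
      _ = R := one_mul R
  have h2 := (hy i a).le
  have := abs_add_le ((B *ᵥ y i + b) a) ((F a ᵥ* Wm B b y) i)
  linarith

/-- Packing bound. -/
lemma packing {d : ℕ} (hd : 1 ≤ d) {ε R D : ℝ} (hε : 0 < ε) (hs : (d : ℝ) ^ 2 * ε ≤ 1/100)
    (hR : 1 ≤ R) (hD : 0 < D) (y : Fin (d + 1) → (Fin d → ℝ)) {ι : Type*}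
    (B : ι → Matrix (Fin d) (Fin d) ℝ) (b : ι → Fin d → ℝ) (s : Finset ι)
    (hB : ∀ p ∈ s, (B p).det ≠ 0) (hy : ∀ p ∈ s, ∀ i a, |(B p *ᵥ y i + b p) a| < R)
    (hdet : ∀ p ∈ s, D ≤ |(Wm (B p) (b p) y).det|)
    (hsep : ∀ p ∈ s, ∀ q ∈ s, p ≠ q →
      104 * (d ^ 2 * ε) < tvDist (gm (B p) (b p)) (gm (B q) (b q))) :
    (s.card : ℝ) ≤ (2 * R / ε) ^ (d * (d + 1)) / D ^ d := by
  have hd' : (1 : ℝ) ≤ d := by exact_mod_cast hd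
  have hs' : ((d : ℝ) + 1) * ε ≤ 1 := by nlinarith [mul_pos (by linarith : (0:ℝ) < d) hε]
  have hdisj : (s : Set ι).PairwiseDisjoint fun p => cell ε (B p) (b p) y := by
    intro p hp q hq hpq
    refine Set.disjoint_left.mpr fun V h1 h2 => ?_
    obtain ⟨F₁, hF₁, e₁⟩ := mem_cell h1
    obtain ⟨F₂, hF₂, e₂⟩ := mem_cell h2
    have := coincide hd hε hs (B p) (B q) (b p) (b q) (hB p hp) (hB q hq) y
      (abs_pos.mp (hD.trans_le (hdet p hp))) F₁ F₂ hF₁ hF₂ fun a i => by rw [← e₁, ← e₂]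
    exact absurd this (not_le.mpr (hsep p hp q hq hpq))
  have h1 : volume (⋃ p ∈ s, cell ε (B p) (b p) y)
      = ∑ p ∈ s, volume (cell ε (B p) (b p) y) :=
    measure_biUnion_finset hdisj fun p _ => measurableSet_cell _ _ _ _
  have h2 : volume (⋃ p ∈ s, cell ε (B p) (b p) y) ≤
      ENNReal.ofReal ((4 * R) ^ (d * (d + 1))) := by
    refine (measure_mono (Set.iUnion₂_subset fun p hp =>
      cell_subset hR hs' (B p) (b p) y (hy p hp))).trans ?_
    rw [volume_pi_pi]
    simp only [volume_pi_pi, Real.volume_Icc, Finset.prod_const, Finset.card_univ, Fintype.card_fin]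
    rw [← ENNReal.ofReal_pow (by linarith), ← ENNReal.ofReal_pow (pow_nonneg (by linarith) _),
      ← pow_mul, mul_comm (d + 1)]
    apply le_of_eq; congr 2; ring
  have h3 : (s.card : ENNReal) * ENNReal.ofReal ((D * (2 * ε) ^ (d + 1)) ^ d)
      ≤ ∑ p ∈ s, volume (cell ε (B p) (b p) y) := by
    rw [← nsmul_eq_mul]
    refine Finset.card_nsmul_le_sum _ _ _ fun p hp => ?_
    rw [volume_cell hε]
    refine ENNReal.ofReal_le_ofReal ?_
    have := hdet p hp
    gcongr
  have h4 := (h3.trans h1.symm.le).trans h2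
  rw [← ENNReal.ofReal_natCast, ← ENNReal.ofReal_mul (by positivity),
    ENNReal.ofReal_le_ofReal_iff (by positivity)] at h4
  rw [le_div_iff₀ (by positivity)]
  have e : (2 * R / ε) ^ (d * (d + 1)) = (4 * R) ^ (d * (d + 1)) / ((2 * ε) ^ (d + 1)) ^ d := by
    rw [← pow_mul, mul_comm (d + 1) d, ← div_pow]
    congr 1; field_simp; ring
  rw [e, le_div_iff₀ (by positivity)]
  calc _ = (s.card : ℝ) * (D * (2 * ε) ^ (d + 1)) ^ d := by rw [mul_pow]; ring
    _ ≤ _ := h4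
end

section
lemma gauss_tail {R : ℝ} (hR : 0 < R) :
    gaussianReal 0 1 {x | R ≤ |x|} ≤ ENNReal.ofReal (1 / R ^ 2) := by
  have h := meas_ge_le_variance_div_sq (μ := gaussianReal 0 1) (X := id)
    (memLp_id_gaussianReal 2) hR
  rw [variance_id_gaussianReal] at h
  simpa using h

lemma stdG_tail {d : ℕ} {R : ℝ} (hR : 0 < R) (hRd : 16 * (d : ℝ) ≤ R ^ 2) :
    stdG d {z | ∃ a, R ≤ |z a|} ≤ ENNReal.ofReal (1 / 16) := by
  have h1 : {z : Fin d → ℝ | ∃ a, R ≤ |z a|} = ⋃ a, (fun z => z a) ⁻¹' {x | R ≤ |x|} := by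
    ext z; simp
  have hm : MeasurableSet {x : ℝ | R ≤ |x|} := measurableSet_le measurable_const (by fun_prop)
  rw [h1]
  refine (measure_iUnion_fintype_le _ _).trans ?_
  have h2 : ∀ a : Fin d, stdG d ((fun z => z a) ⁻¹' {x | R ≤ |x|}) ≤ ENNReal.ofReal (1 / R ^ 2) := by
    intro a
    have := (measurePreserving_eval (fun _ : Fin d => gaussianReal 0 1) a).measure_preimage
      hm.nullMeasurableSet
    unfold stdG
    exact (this.trans_le (gauss_tail hR))
  refine (Finset.sum_le_sum fun a _ => h2 a).trans ?_
  rw [Finset.sum_const, Finset.card_univ, Fintype.card_fin, nsmul_eq_mul,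
    ← ENNReal.ofReal_natCast, ← ENNReal.ofReal_mul (by positivity)]
  refine ENNReal.ofReal_le_ofReal ?_
  rw [mul_one_div, div_le_div_iff₀ (by positivity) (by norm_num)]
  linarith

lemma gauss_anti {r D c : ℝ} (hr : 0 ≤ r) (hD : D ≠ 0) :
    gaussianReal 0 1 {x | |D * x + c| ≤ r * |D|} ≤ ENNReal.ofReal r := by
  have hsub : {x | |D * x + c| ≤ r * |D|} ⊆ Set.Icc (-c / D - r) (-c / D + r) := by
    intro x hx
    simp only [Set.mem_setOf_eq] at hx
    have e : D * x + c = D * (x - (-c / D)) := by field_simp; ring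
    rw [e, abs_mul, mul_comm r, mul_le_mul_iff_right₀ (abs_pos.mpr hD), abs_le] at hx
    constructor <;> linarith [hx.1, hx.2]
  refine (measure_mono hsub).trans ?_
  rw [gaussianReal_apply _ one_ne_zero]
  have hb : ∀ x, gaussianPDF 0 1 x ≤ ENNReal.ofReal (1 / 2) := by
    intro x
    unfold gaussianPDF
    refine ENNReal.ofReal_le_ofReal ?_
    unfold gaussianPDFReal
    have h1 : Real.exp (-(x - 0) ^ 2 / (2 * ((1 : NNReal) : ℝ))) ≤ 1 := by
      apply Real.exp_le_one_iff.mpr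
      simp only [NNReal.coe_one]
      nlinarith [sq_nonneg (x - 0)]
    have h2 : (Real.sqrt (2 * Real.pi * ((1 : NNReal) : ℝ)))⁻¹ ≤ 1 / 2 := by
      rw [one_div]
      apply inv_anti₀ (by norm_num)
      apply Real.le_sqrt_of_sq_le
      simp only [NNReal.coe_one]
      nlinarith [Real.pi_gt_three]
    calc _ ≤ (1/2 : ℝ) * 1 := mul_le_mul h2 h1 (Real.exp_pos _).le (by norm_num)
      _ = 1 / 2 := by ring
  calc ∫⁻ x in Set.Icc (-c / D - r) (-c / D + r), gaussianPDF 0 1 x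
      ≤ ∫⁻ x in Set.Icc (-c / D - r) (-c / D + r), ENNReal.ofReal (1 / 2) :=
        lintegral_mono hb
    _ = ENNReal.ofReal r := by
        rw [setLIntegral_const, Real.volume_Icc, ← ENNReal.ofReal_mul (by norm_num)]
        congr 1; ring

lemma continuous_hom {d : ℕ} : Continuous (hom (d := d)) := by
  refine continuous_pi fun r => ?_
  refine Fin.lastCases ?_ (fun c => ?_) r
  · simp only [hom_last]; fun_prop
  · simp only [hom_castSucc]; fun_prop

lemma det_step {d : ℕ} (W : Matrix (Fin (d + 1)) (Fin (d + 1)) ℝ) (n : Fin d)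
    (hW : ∀ r, W r n.castSucc = if r = n.castSucc then 1 else 0) (z : Fin d → ℝ) :
    (W.updateCol n.castSucc (hom z)).det
      = W.det * z n + (W.updateCol n.castSucc (hom (Function.update z n 0))).det := by
  have e : hom z = z n • (Pi.single n.castSucc 1 : Fin (d + 1) → ℝ)
      + hom (Function.update z n 0) := by
    ext r
    refine Fin.lastCases ?_ (fun c => ?_) r
    · simp
    · by_cases h : c = n
      · subst h; simp
      · simp [h]
  have e2 : W.updateCol n.castSucc (Pi.single n.castSucc 1 : Fin (d + 1) → ℝ) = W := by
    ext r i
    by_cases h : i = n.castSucc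
    · subst h; simp [hW, Pi.single_apply]
    · simp [h]
  conv_lhs => rw [e, Matrix.det_updateCol_add, Matrix.det_updateCol_smul, e2]
  ring

lemma stdG_anti {d : ℕ} {r : ℝ} (hr : 0 ≤ r) (W : Matrix (Fin (d + 1)) (Fin (d + 1)) ℝ) (n : Fin d)
    (hW : ∀ r, W r n.castSucc = if r = n.castSucc then 1 else 0) (hD : W.det ≠ 0) :
    stdG d {z | |(W.updateCol n.castSucc (hom z)).det| ≤ r * |W.det|} ≤ ENNReal.ofReal r := by
  set A := {z : Fin d → ℝ | |(W.updateCol n.castSucc (hom z)).det| ≤ r * |W.det|} with hA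
  have hAm : MeasurableSet A := by
    refine measurableSet_le (Continuous.measurable ?_) measurable_const
    have := continuous_hom (d := d)
    have h2 : Continuous fun z : Fin d → ℝ => W.updateCol n.castSucc (hom z) :=
      continuous_const.matrix_updateCol _ this
    exact (h2.matrix_det).abs
  obtain ⟨d', rfl⟩ : ∃ d', d = d' + 1 := ⟨d - 1, by have := n.2; omega⟩
  have hmp := (measurePreserving_piFinSuccAbove (fun _ : Fin (d' + 1) => gaussianReal 0 1) n).symm
  have := hmp.measure_preimage hAm.nullMeasurableSet
  unfold stdG
  rw [← this, Measure.prod_apply_symm (hmp.measurable hAm)]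
  calc _ ≤ ∫⁻ w, ENNReal.ofReal r ∂(Measure.pi fun j : Fin d' => gaussianReal 0 1) := by
        refine lintegral_mono fun w => ?_
        refine le_trans (measure_mono ?_) (gauss_anti (r := r) (D := W.det)
          (c := (W.updateCol n.castSucc (hom (Function.update (n.insertNth 0 w) n 0))).det) hr hD)
        intro x hx
        have hx' : n.insertNth x w ∈ A := hx
        rw [hA, Set.mem_setOf_eq, det_step W n hW] at hx'
        have e : Function.update (n.insertNth x w : Fin (d' + 1) → ℝ) n 0
            = Function.update (n.insertNth 0 w) n 0 := by
          simp
        rw [e] at hx'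
        simpa using hx'
    _ = ENNReal.ofReal r := by simp

/-- the acceptance set for one step -/
def accept {d : ℕ} (R : ℝ) (W : Matrix (Fin (d + 1)) (Fin (d + 1)) ℝ) (n : Fin (d + 1)) :
    Set (Fin d → ℝ) :=
  {z | (∀ a, |z a| < R) ∧ 1 / 16 * |W.det| < |(W.updateCol n (hom z)).det|}

lemma accept_prob {d : ℕ} {R : ℝ} (hR : 0 < R) (hRd : 16 * (d : ℝ) ≤ R ^ 2)
    (W : Matrix (Fin (d + 1)) (Fin (d + 1)) ℝ) (n : Fin (d + 1))
    (hW : ∀ r, W r n = if r = n then 1 else 0) (hD : W.det ≠ 0)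
    (hlast : n = Fin.last d → W = 1) :
    stdG d (accept R W n)ᶜ ≤ ENNReal.ofReal (1 / 8) := by
  have hsub : (accept R W n)ᶜ ⊆ {z | ∃ a, R ≤ |z a|} ∪
      {z | |(W.updateCol n (hom z)).det| ≤ 1 / 16 * |W.det|} := by
    intro z hz
    by_contra hc
    simp only [Set.mem_union, Set.mem_setOf_eq, not_or, not_exists, not_le] at hc
    exact hz ⟨hc.1, hc.2⟩
  refine (measure_mono hsub).trans ((measure_union_le _ _).trans ?_)
  have e : ENNReal.ofReal (1 / 8) = ENNReal.ofReal (1 / 16) + ENNReal.ofReal (1 / 16) := by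
    rw [← ENNReal.ofReal_add (by norm_num) (by norm_num)]; norm_num
  rw [e]
  refine add_le_add (stdG_tail hR hRd) ?_
  induction n using Fin.lastCases with
  | cast n => exact stdG_anti (by norm_num) W n hW hD
  | last =>
    have h1 := hlast rfl
    have : {z : Fin d → ℝ | |(W.updateCol (Fin.last d) (hom z)).det| ≤ 1 / 16 * |W.det|} = ∅ := by
      ext z
      simp only [Set.mem_setOf_eq, Set.mem_empty_iff_false, iff_false, not_le]
      have hc : (W.updateCol (Fin.last d) (hom z)).det = 1 := by
        rw [← Matrix.cramer_apply, h1]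
        simp
      rw [hc, h1]
      simp; norm_num
    rw [this]; simp
end

section
/-- there is an increasing selection of sample points driving the state through `n` accepted steps -/
def OK {Ω X : Type*} (G : ℕ → Set (Ω × X)) (st : ℕ → Ω × X → Ω) :
    (N n : ℕ) → Set (Ω × (Fin N → X))
  | _, 0 => Set.univ
  | 0, _ + 1 => ∅
  | N + 1, n + 1 =>
    {p | ((p.1, p.2 0) ∈ G n ∧ (st n (p.1, p.2 0), Fin.tail p.2) ∈ OK G st N n) ∨
      (p.1, Fin.tail p.2) ∈ OK G st N (n + 1)}

lemma continuous_tail' {X : Type*} [TopologicalSpace X] {N : ℕ} :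
    Continuous (fun S : Fin (N + 1) → X => Fin.tail S) :=
  continuous_pi fun i => continuous_apply i.succ

lemma OK_open {Ω X : Type*} [TopologicalSpace Ω] [TopologicalSpace X] {G : ℕ → Set (Ω × X)}
    {st : ℕ → Ω × X → Ω} (hG : ∀ n, IsOpen (G n)) (hst : ∀ n, Continuous (st n)) :
    ∀ N n, IsOpen (OK G st N n)
  | _, 0 => by unfold OK; exact isOpen_univ
  | 0, n + 1 => by unfold OK; exact isOpen_empty
  | N + 1, n + 1 => by
    have h1 := OK_open hG hst N n
    have h2 := OK_open hG hst N (n + 1)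
    have ct := continuous_tail' (X := X) (N := N)
    have c0 : Continuous fun p : Ω × (Fin (N + 1) → X) => (p.1, p.2 0) := by fun_prop
    have c1 : Continuous fun p : Ω × (Fin (N + 1) → X) => (st n (p.1, p.2 0), Fin.tail p.2) :=
      ((hst n).comp c0).prodMk (ct.comp continuous_snd)
    have c2 : Continuous fun p : Ω × (Fin (N + 1) → X) => (p.1, Fin.tail p.2) :=
      continuous_fst.prodMk (ct.comp continuous_snd)
    unfold OK
    exact (((hG n).preimage c0).inter (h1.preimage c1)).union (h2.preimage c2)

lemma OK_reach {Ω X : Type*} {G : ℕ → Set (Ω × X)} {st : ℕ → Ω × X → Ω} (K : Set X)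
    (J : ℕ → Ω → Prop)
    (hJ : ∀ n W x, x ∈ K → J (n + 1) W → (W, x) ∈ G n → J n (st n (W, x))) :
    ∀ N n (W : Ω) (S : Fin N → X), (∀ i, S i ∈ K) → (W, S) ∈ OK G st N n → J n W → ∃ W', J 0 W'
  | _, 0, W, S, _, _, h => ⟨W, h⟩
  | 0, n + 1, W, S, _, h, _ => by unfold OK at h; exact h.elim
  | N + 1, n + 1, W, S, hS, h, hW => by
    unfold OK at h
    rcases h with ⟨h1, h2⟩ | h2
    · exact OK_reach K J hJ N n _ _ (fun i => hS i.succ) h2 (hJ n W _ (hS 0) hW h1)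
    · exact OK_reach K J hJ N (n + 1) _ _ (fun i => hS i.succ) h2 hW

lemma OK_prob {Ω X : Type*} [TopologicalSpace Ω] [TopologicalSpace X] [MeasurableSpace X]
    [BorelSpace X] [SecondCountableTopology X] (g : Measure X) [IsProbabilityMeasure g]
    {G : ℕ → Set (Ω × X)}
    {st : ℕ → Ω × X → Ω} (hG : ∀ n, IsOpen (G n)) (hst : ∀ n, Continuous (st n))
    (I : ℕ → Ω → Prop) (hI : ∀ n W x, I (n + 1) W → (W, x) ∈ G n → I n (st n (W, x)))
    {q : ℝ} (hq1 : q ≤ 1)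
    (hGq : ∀ n W, I (n + 1) W → q ≤ (g {x | (W, x) ∈ G n}).toReal) :
    ∀ N n W, I n W → Measure.pi (fun _ : Fin N => g) {S | (W, S) ∈ OK G st N n}ᶜ ≤
      ENNReal.ofReal (Real.exp n * (1 - q * (1 - Real.exp (-1))) ^ N)
  | _, 0, W, _ => by simp [OK]
  | 0, n + 1, W, _ => by
    refine prob_le_one.trans ?_
    rw [← ENNReal.ofReal_one]
    apply ENNReal.ofReal_le_ofReal
    simp only [pow_zero, mul_one]
    exact Real.one_le_exp (by positivity)
  | N + 1, n + 1, W, hW => by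
    have he1 : Real.exp (-1) < 1 := by rw [Real.exp_lt_one_iff]; norm_num
    have he0 := Real.exp_pos (-1)
    have hρ : 0 ≤ 1 - q * (1 - Real.exp (-1)) := by nlinarith
    have ih2 := OK_prob g hG hst I hI hq1 hGq N (n + 1) W hW
    set a := Real.exp n * (1 - q * (1 - Real.exp (-1))) ^ N with ha
    have ha0 : 0 ≤ a := by positivity
    have hb : Real.exp ((n + 1 : ℕ) : ℝ) * (1 - q * (1 - Real.exp (-1))) ^ N = Real.exp 1 * a := by
      push_cast; rw [Real.exp_add, ha]; ring
    rw [hb] at ih2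
    set F := {S : Fin (N + 1) → X | (W, S) ∈ OK G st (N + 1) (n + 1)}ᶜ with hF
    have hFm : MeasurableSet F := by
      refine IsOpen.measurableSet ?_ |>.compl
      exact (OK_open hG hst (N + 1) (n + 1)).preimage (Continuous.prodMk_right W)
    set Gs := {x | (W, x) ∈ G n} with hGs
    have hGm : MeasurableSet Gs :=
      ((hG n).preimage (Continuous.prodMk_right W)).measurableSet
    have hmp := (measurePreserving_piFinSuccAbove (fun _ : Fin (N + 1) => g) 0).symm
    have h3 := hmp.measure_preimage hFm.nullMeasurableSet
    rw [← h3, Measure.prod_apply (hmp.measurable hFm)]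
    have hsec : ∀ x, Measure.pi (fun _ : Fin N => g)
        (Prod.mk x ⁻¹' ((MeasurableEquiv.piFinSuccAbove (fun _ => X) 0).symm ⁻¹' F)) ≤
        Gs.indicator (fun _ => ENNReal.ofReal a) x
          + Gsᶜ.indicator (fun _ => ENNReal.ofReal (Real.exp 1 * a)) x := by
      intro x
      by_cases hx : x ∈ Gs
      · rw [Set.indicator_of_mem hx, Set.indicator_of_notMem (by simpa using hx), add_zero]
        refine le_trans (measure_mono ?_)
          (OK_prob g hG hst I hI hq1 hGq N n (st n (W, x)) (hI n W x hW hx))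
        intro S hS hS'
        apply hS
        unfold OK
        left
        refine ⟨?_, ?_⟩
        · have hx' : (W, x) ∈ G n := hx
          simpa using hx'
        · simpa [Fin.tail_def] using hS'
      · rw [Set.indicator_of_notMem hx, Set.indicator_of_mem (by simpa using hx), zero_add]
        refine le_trans (measure_mono ?_) ih2
        intro S hS hS'
        apply hS
        unfold OK
        right
        simpa [Fin.tail_def] using hS'
    refine (lintegral_mono hsec).trans ?_
    rw [lintegral_add_left (by fun_prop (disch := assumption)), lintegral_indicator_const hGm,
      lintegral_indicator_const hGm.compl]
    have hqq := hGq n W hW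
    rw [← hGs] at hqq
    rw [prob_compl_eq_one_sub hGm]
    set u := (g Gs).toReal with hu
    have hgu : g Gs = ENNReal.ofReal u := by rw [hu, ENNReal.ofReal_toReal (measure_ne_top _ _)]
    have hu0 : 0 ≤ u := ENNReal.toReal_nonneg
    have hu1 : u ≤ 1 := by
      rw [hu]; exact measureReal_le_one
    rw [hgu, ← ENNReal.ofReal_one, ← ENNReal.ofReal_sub _ hu0, ← ENNReal.ofReal_mul ha0,
      ← ENNReal.ofReal_mul (by positivity), ← ENNReal.ofReal_add (by positivity)
      (mul_nonneg (by positivity) (by linarith))]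
    apply ENNReal.ofReal_le_ofReal
    have hb2 : Real.exp ((n + 1 : ℕ) : ℝ) * (1 - q * (1 - Real.exp (-1))) ^ (N + 1)
        = Real.exp 1 * a * (1 - q * (1 - Real.exp (-1))) := by
      rw [← hb, pow_succ]; ring
    rw [hb2]
    have hee : Real.exp 1 * Real.exp (-1) = 1 := by rw [← Real.exp_add]; simp
    have : a * u + Real.exp 1 * a * (1 - u) = Real.exp 1 * a * (1 - u * (1 - Real.exp (-1))) := by
      linear_combination (-(a * u)) * hee
    rw [this]
    apply mul_le_mul_of_nonneg_left _ (by positivity)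
    nlinarith

/-- invariant of the selection process -/
def StInv {d : ℕ} (n : ℕ) (W : Matrix (Fin (d + 1)) (Fin (d + 1)) ℝ) : Prop :=
  n ≤ d + 1 ∧ (1 / 16 : ℝ) ^ (d + 1 - n) ≤ |W.det| ∧
    ∀ i : Fin (d + 1), i.val < n → ∀ r, W r i = if r = i then 1 else 0

lemma StInv_step {d : ℕ} {R : ℝ} (n : ℕ) (W : Matrix (Fin (d + 1)) (Fin (d + 1)) ℝ) (z : Fin d → ℝ)
    (hW : StInv (n + 1) W) (hz : z ∈ accept R W (Fin.ofNat (d + 1) n)) :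
    StInv n (W.updateCol (Fin.ofNat (d + 1) n) (hom z)) := by
  obtain ⟨h1, h2, h3⟩ := hW
  refine ⟨by omega, ?_, ?_⟩
  · have := hz.2
    have e : d + 1 - n = d + 1 - (n + 1) + 1 := by omega
    rw [e, pow_succ]
    linarith
  · intro i hi r
    have hne : i ≠ Fin.ofNat (d + 1) n := by
      intro h
      have : i.val = n % (d + 1) := by rw [h]; simp [Fin.ofNat]
      rw [Nat.mod_eq_of_lt (by omega)] at this
      omega
    rw [Matrix.updateCol_ne hne]
    exact h3 i (by omega) r

lemma select {d : ℕ} {B : Matrix (Fin d) (Fin d) ℝ} (hB : B.det ≠ 0) (b : Fin d → ℝ)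
    (g : Measure (Fin d → ℝ)) [IsProbabilityMeasure g] {q R : ℝ} (hq1 : q ≤ 1)
    (hq : ∀ E, MeasurableSet E → 7 / 8 ≤ (gm B b E).toReal → q ≤ (g E).toReal)
    (hR : 0 < R) (hRd : 16 * (d : ℝ) ≤ R ^ 2) (N : ℕ) :
    Measure.pi (fun _ : Fin N => g) {S | ∃ t : Fin (d + 1) → Fin N,
      (∀ i a, |(B *ᵥ S (t i) + b : Fin d → ℝ) a| < R) ∧
      (1 / 16 : ℝ) ^ (d + 1) ≤ |(Wm B b (fun i => S (t i))).det|}ᶜ ≤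
      ENNReal.ofReal (Real.exp ((d + 1 : ℕ) : ℝ) * (1 - q * (1 - Real.exp (-1))) ^ N) := by
  have caff : Continuous fun x : Fin d → ℝ => (B *ᵥ x + b : Fin d → ℝ) := by fun_prop
  set G : ℕ → Set (Matrix (Fin (d + 1)) (Fin (d + 1)) ℝ × (Fin d → ℝ)) := fun n =>
    {p | (B *ᵥ p.2 + b : Fin d → ℝ) ∈ accept R p.1 (Fin.ofNat (d + 1) n)} with hG
  set st : ℕ → Matrix (Fin (d + 1)) (Fin (d + 1)) ℝ × (Fin d → ℝ) →
    Matrix (Fin (d + 1)) (Fin (d + 1)) ℝ := fun n p =>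
      p.1.updateCol (Fin.ofNat (d + 1) n) (hom (B *ᵥ p.2 + b)) with hst
  have hstc : ∀ n, Continuous (st n) := fun n =>
    continuous_fst.matrix_updateCol _ (continuous_hom.comp (caff.comp continuous_snd))
  have hGo : ∀ n, IsOpen (G n) := by
    intro n
    have e : G n = (⋂ a, {p | |(B *ᵥ p.2 + b : Fin d → ℝ) a| < R}) ∩
        {p | 1 / 16 * |p.1.det| < |(st n p).det|} := by
      ext p; simp [hG, accept, hst]
    rw [e]
    refine (isOpen_iInter_of_finite fun a => ?_).inter ?_
    · refine isOpen_lt ?_ continuous_const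
      exact ((continuous_apply a).comp (caff.comp continuous_snd)).abs
    · exact isOpen_lt (continuous_const.mul continuous_fst.matrix_det.abs)
        ((hstc n).matrix_det.abs)
  have hprob := OK_prob g hGo hstc StInv (fun n W x h1 h2 => StInv_step n W _ h1 h2) hq1 (by
    intro n W hW
    obtain ⟨h1, h2, h3⟩ := hW
    have hv : (Fin.ofNat (d + 1) n).val = n := by
      simp [Fin.ofNat, Nat.mod_eq_of_lt (show n < d + 1 by omega)]
    have hm : MeasurableSet {x | (W, x) ∈ G n} :=
      ((hGo n).preimage (Continuous.prodMk_right W)).measurableSet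
    refine hq _ hm ?_
    have ha := accept_prob hR hRd W (Fin.ofNat (d + 1) n)
      (fun r => h3 _ (by omega) r)
      (by intro h; rw [h, abs_zero] at h2; exact absurd h2 (not_le.mpr (by positivity)))
      (by
        intro h
        ext r i
        rw [h3 i (by
          have := congrArg Fin.val h
          rw [hv] at this
          simp at this
          have := i.2
          omega) r, Matrix.one_apply])
    have ho : MeasurableSet (accept R W (Fin.ofNat (d + 1) n)) := by
      have : accept R W (Fin.ofNat (d + 1) n) = (⋂ a, {z | |z a| < R}) ∩
        {z | 1 / 16 * |W.det| < |(W.updateCol (Fin.ofNat (d + 1) n) (hom z)).det|} := by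
        ext z; simp [accept]
      rw [this]
      refine IsOpen.measurableSet ((isOpen_iInter_of_finite fun a => ?_).inter ?_)
      · exact isOpen_lt (continuous_apply a).abs continuous_const
      · exact isOpen_lt continuous_const
          ((continuous_const.matrix_updateCol _ continuous_hom).matrix_det.abs)
    rw [← gm_map hB b, Measure.map_apply (measurable_aff B b) ho.compl] at ha
    have e : (fun x => B *ᵥ x + b) ⁻¹' (accept R W (Fin.ofNat (d + 1) n))ᶜ
      = {x | (W, x) ∈ G n}ᶜ := rfl
    have := gm_prob hB b
    rw [e, prob_compl_eq_one_sub hm] at ha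
    have h5 := ENNReal.toReal_mono ENNReal.ofReal_ne_top ha
    rw [ENNReal.toReal_sub_of_le prob_le_one (by simp), ENNReal.toReal_ofReal (by norm_num)] at h5
    simp at h5
    linarith) N (d + 1) 1 (by
      refine ⟨le_rfl, by simp, fun i _ r => by rw [Matrix.one_apply]⟩)
  refine le_trans (measure_mono ?_) hprob
  intro S hS hS'
  apply hS
  obtain ⟨W', hW', hJ⟩ := OK_reach (Set.range S) (fun n W => StInv n W ∧
      ∀ i : Fin (d + 1), n ≤ i.val → ∃ t, (∀ a, |(B *ᵥ S t + b : Fin d → ℝ) a| < R) ∧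
        ∀ r, W r i = hom (B *ᵥ S t + b) r) (by
      rintro n W x ⟨t, rfl⟩ ⟨h1, h2⟩ h3
      refine ⟨StInv_step n W _ h1 h3, fun i hi => ?_⟩
      have hv : (Fin.ofNat (d + 1) n).val = n := by
        have := h1.1
        simp [Fin.ofNat, Nat.mod_eq_of_lt (show n < d + 1 by omega)]
      rcases Nat.eq_or_lt_of_le hi with h | h
      · have hh : i = Fin.ofNat (d + 1) n := Fin.ext (by rw [hv, h])
        refine ⟨t, h3.1, fun r => ?_⟩
        subst hh
        simp [hst]
      · obtain ⟨t', h4, h5⟩ := h2 i h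
        refine ⟨t', h4, fun r => ?_⟩
        have hne : i ≠ Fin.ofNat (d + 1) n := by
          intro hc; rw [hc, hv] at h; omega
        simp only [hst]
        rw [Matrix.updateCol_ne hne, h5]) N (d + 1) 1 S (fun i => ⟨i, rfl⟩) hS'
      ⟨⟨le_rfl, by simp, fun i _ r => by rw [Matrix.one_apply]⟩, fun i hi => by
        have := i.2; omega⟩
  choose t ht1 ht2 using fun i => hJ i (Nat.zero_le _)
  refine ⟨t, ht1, ?_⟩
  have : Wm B b (fun i => S (t i)) = W' := by
    ext r i
    simp [Wm, ht2]
  rw [this]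
  simpa using hW'.2.1
end

section
/-- the mixture -/
noncomputable def mix {X : Type*} [MeasurableSpace X] {k : ℕ} (w : Fin k → ℝ)
    (P : Fin k → Measure X) : Measure X := ∑ i, ENNReal.ofReal (w i) • P i

/-- the simplex -/
def Simp (k : ℕ) : Set (Fin k → ℝ) := {w | (∀ i, 0 ≤ w i) ∧ ∑ i, w i = 1}

lemma mix_apply {X : Type*} [MeasurableSpace X] {k : ℕ} {w : Fin k → ℝ} (hw : ∀ i, 0 ≤ w i)
    (P : Fin k → Measure X) [∀ i, IsProbabilityMeasure (P i)] (E : Set X) :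
    (mix w P E).toReal = ∑ i, w i * (P i E).toReal := by
  unfold mix
  rw [Measure.finsetSum_apply, ENNReal.toReal_sum]
  · refine Finset.sum_congr rfl fun i _ => ?_
    rw [Measure.smul_apply, smul_eq_mul, ENNReal.toReal_mul, ENNReal.toReal_ofReal (hw i)]
  · intro i _
    rw [Measure.smul_apply, smul_eq_mul]
    exact ENNReal.mul_ne_top ENNReal.ofReal_ne_top (measure_ne_top _ _)

lemma mix_prob {X : Type*} [MeasurableSpace X] {k : ℕ} {w : Fin k → ℝ} (hw : w ∈ Simp k)
    (P : Fin k → Measure X) [∀ i, IsProbabilityMeasure (P i)] : IsProbabilityMeasure (mix w P) := by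
  constructor
  unfold mix
  rw [Measure.finsetSum_apply]
  simp only [Measure.smul_apply, smul_eq_mul, measure_univ, mul_one]
  rw [← ENNReal.ofReal_sum_of_nonneg fun i _ => hw.1 i, hw.2, ENNReal.ofReal_one]

lemma prob01 {X : Type*} [MeasurableSpace X] (P : Measure X) [IsProbabilityMeasure P] (E : Set X) :
    0 ≤ (P E).toReal ∧ (P E).toReal ≤ 1 :=
  ⟨ENNReal.toReal_nonneg, measureReal_le_one⟩

lemma tv_mix {X : Type*} [MeasurableSpace X] {k : ℕ} {w w' : Fin k → ℝ} (hw : ∀ i, 0 ≤ w i)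
    (hw' : ∀ i, 0 ≤ w' i) (P P' : Fin k → Measure X) [∀ i, IsProbabilityMeasure (P i)]
    [∀ i, IsProbabilityMeasure (P' i)] :
    tvDist (mix w P) (mix w' P') ≤ ∑ i, |w i - w' i| + ∑ i, w' i * tvDist (P i) (P' i) := by
  refine tv_le fun E hE => ?_
  rw [mix_apply hw, mix_apply hw', ← Finset.sum_sub_distrib, ← Finset.sum_add_distrib]
  refine (Finset.abs_sum_le_sum_abs _ _).trans (Finset.sum_le_sum fun i _ => ?_)
  have e : w i * (P i E).toReal - w' i * (P' i E).toReal
    = (w i - w' i) * (P i E).toReal + w' i * ((P i E).toReal - (P' i E).toReal) := by ring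
  rw [e]
  refine (abs_add_le _ _).trans (add_le_add ?_ ?_)
  · rw [abs_mul, abs_of_nonneg (prob01 (P i) E).1]
    exact mul_le_of_le_one_right (abs_nonneg _) (prob01 (P i) E).2
  · rw [abs_mul, abs_of_nonneg (hw' i)]
    exact mul_le_mul_of_nonneg_left (le_tv _ _ hE) (hw' i)

lemma tv_le_one {X : Type*} [MeasurableSpace X] (P Q : Measure X) [IsProbabilityMeasure P]
    [IsProbabilityMeasure Q] : tvDist P Q ≤ 1 :=
  tv_le fun E _ => by
    have h1 := prob01 P E
    have h2 := prob01 Q E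
    rw [abs_le]; constructor <;> linarith

lemma weights (k T : ℕ) (hT : 1 ≤ T) : ∃ Wt : Finset (Fin k → ℝ), Wt.card ≤ (T + 1) ^ k ∧
    (∀ w ∈ Wt, w ∈ Simp k) ∧ ∀ w ∈ Simp k, ∃ v ∈ Wt, ∀ i, |v i - w i| ≤ 1 / T := by
  classical
  have hT0 : (0 : ℝ) < T := by exact_mod_cast hT
  set φ : (Fin k → ℝ) → (Fin k → Fin (T + 1)) := fun w i => Fin.ofNat (T + 1) ⌊T * w i⌋₊ with hφ
  have hval : ∀ w ∈ Simp k, ∀ i, (φ w i).val = ⌊T * w i⌋₊ := by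
    intro w hw i
    have h1 : w i ≤ 1 := by
      rw [← hw.2]; exact Finset.single_le_sum (fun j _ => hw.1 j) (Finset.mem_univ i)
    have : ⌊T * w i⌋₊ ≤ T := by
      apply Nat.floor_le_of_le
      nlinarith
    simp only [hφ, Fin.ofNat]
    exact Nat.mod_eq_of_lt (by omega)
  have : ∀ c : Fin k → Fin (T + 1), ∃ v : Fin k → ℝ,
      (∃ w ∈ Simp k, φ w = c) → v ∈ Simp k ∧ φ v = c := by
    intro c
    by_cases h : ∃ w ∈ Simp k, φ w = c
    · obtain ⟨w, h1, h2⟩ := h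
      exact ⟨w, fun _ => ⟨h1, h2⟩⟩
    · exact ⟨0, fun h' => (h h').elim⟩
  choose v hv using this
  refine ⟨(Finset.univ.filter fun c => ∃ w ∈ Simp k, φ w = c).image v, ?_, ?_, ?_⟩
  · refine Finset.card_image_le.trans ((Finset.card_filter_le _ _).trans ?_)
    simp
  · intro w hw
    simp only [Finset.mem_image, Finset.mem_filter, Finset.mem_univ, true_and] at hw
    obtain ⟨c, hc, rfl⟩ := hw
    exact (hv c hc).1
  · intro w hw
    refine ⟨v (φ w), ?_, fun i => ?_⟩
    · simp only [Finset.mem_image, Finset.mem_filter, Finset.mem_univ, true_and]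
      exact ⟨φ w, ⟨w, hw, rfl⟩, rfl⟩
    · obtain ⟨h1, h2⟩ := hv (φ w) ⟨w, hw, rfl⟩
      have h3 := hval _ h1 i
      rw [h2, hval _ hw i] at h3
      have a1 := Nat.floor_le (mul_nonneg hT0.le (h1.1 i))
      have a2 := Nat.lt_floor_add_one ((T : ℝ) * v (φ w) i)
      have b1 := Nat.floor_le (mul_nonneg hT0.le (hw.1 i))
      have b2 := Nat.lt_floor_add_one ((T : ℝ) * w i)
      rw [h3] at b1 b2
      rw [le_div_iff₀ hT0, ← abs_of_pos hT0, ← abs_mul, abs_le]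
      constructor <;> nlinarith

lemma net {X : Type*} [MeasurableSpace X] (F : Set (Measure X)) {δ : ℝ} (hδ : 0 ≤ δ) :
    ∃ N ⊆ F, (∀ P ∈ N, ∀ Q ∈ N, P ≠ Q → δ < tvDist P Q) ∧ ∀ P ∈ F, ∃ Q ∈ N, tvDist P Q ≤ δ := by
  obtain ⟨N, hN⟩ := zorn_subset {N : Set (Measure X) | N ⊆ F ∧
      ∀ P ∈ N, ∀ Q ∈ N, P ≠ Q → δ < tvDist P Q} (by
    intro c hc hch
    refine ⟨⋃₀ c, ⟨Set.sUnion_subset fun s hs => (hc hs).1, ?_⟩, fun s hs =>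
      Set.subset_sUnion_of_mem hs⟩
    rintro P ⟨s, hs, hP⟩ Q ⟨s', hs', hQ⟩ hne
    rcases hch.total hs hs' with h | h
    · exact (hc hs').2 P (h hP) Q hQ hne
    · exact (hc hs).2 P hP Q (h hQ) hne)
  refine ⟨N, hN.prop.1, hN.prop.2, fun P hP => ?_⟩
  by_contra! hc
  have hPN : P ∉ N := fun h => by
    have := hc P h
    rw [tv_self] at this
    linarith
  have := hN.le_of_ge (y := insert P N) ⟨Set.insert_subset hP hN.prop.1, by
    rintro A (rfl | hA) B (rfl | hB) hne
    · exact (hne rfl).elim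
    · exact hc B hB
    · rw [tv_comm]; exact hc A hA
    · exact hN.prop.2 A hA B hB hne⟩ (Set.subset_insert _ _)
  exact hPN (this (Set.mem_insert _ _))

lemma finite_of_bound {Y : Type*} (C : Set Y) (n : ℝ)
    (h : ∀ s : Finset Y, (s : Set Y) ⊆ C → (s.card : ℝ) ≤ n) : C.Finite ∧ (C.ncard : ℝ) ≤ n := by
  have hf : C.Finite := by
    by_contra hinf
    obtain ⟨s, hs, hc⟩ := Set.Infinite.exists_subset_card_eq hinf (⌊n⌋₊ + 1)
    have := h s hs
    rw [hc] at this
    have h2 := Nat.lt_floor_add_one n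
    push_cast at this
    linarith
  refine ⟨hf, ?_⟩
  have := h hf.toFinset (by simp)
  rwa [Set.ncard_eq_toFinset_card C hf]

lemma bad_weight {X : Type*} [MeasurableSpace X] {k : ℕ} {w : Fin k → ℝ} (hw : w ∈ Simp k)
    (f : Fin k → Measure X) [∀ i, IsProbabilityMeasure (f i)] (g : Measure X)
    [IsProbabilityMeasure g] (s : Finset (Fin k))
    (hs : ∀ i ∈ s, ∃ E, MeasurableSet E ∧ 3 / 4 ≤ (f i E).toReal ∧ (g E).toReal < w i / 4) :
    ∑ i ∈ s, w i ≤ 2 * tvDist g (mix w f) := by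
  have : ∀ i, ∃ E, i ∈ s → MeasurableSet E ∧ 3 / 4 ≤ (f i E).toReal ∧ (g E).toReal < w i / 4 := by
    intro i
    by_cases hi : i ∈ s
    · obtain ⟨E, hE⟩ := hs i hi
      exact ⟨E, fun _ => hE⟩
    · exact ⟨∅, fun h => (hi h).elim⟩
  choose E hE using this
  set U := ⋃ i ∈ s, E i with hU
  have hUm : MeasurableSet U := Finset.measurableSet_biUnion _ fun i hi => (hE i hi).1
  have := mix_prob hw f
  have h1 := le_tv g (mix w f) hUm
  have h2 : ∑ i ∈ s, w i * (3 / 4) ≤ (mix w f U).toReal := by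
    rw [mix_apply hw.1]
    refine le_trans (Finset.sum_le_sum fun i hi => ?_) (Finset.sum_le_univ_sum_of_nonneg
      (fun i => mul_nonneg (hw.1 i) (prob01 (f i) U).1))
    refine mul_le_mul_of_nonneg_left ((hE i hi).2.1.trans ?_) (hw.1 i)
    exact ENNReal.toReal_mono (measure_ne_top _ _)
      (measure_mono (Set.subset_biUnion_of_mem (u := fun i => E i) hi))
  have h3 : (g U).toReal ≤ ∑ i ∈ s, w i * (1 / 4) := by
    have : g.real U ≤ ∑ i ∈ s, g.real (E i) := measureReal_biUnion_finset_le s E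
    refine this.trans (Finset.sum_le_sum fun i hi => ?_)
    have := (hE i hi).2.2
    change (g (E i)).toReal ≤ _
    linarith
  rw [← Finset.sum_mul] at h2 h3
  have := neg_le_of_abs_le h1
  linarith
end

section
/-- the representable Gaussians -/
def GG (d : ℕ) : Set (Measure (Fin d → ℝ)) := {P | ∃ B b, B.det ≠ 0 ∧ P = gm B b}

/-- candidates from `d+1` points -/
def cand {d : ℕ} (N : Set (Measure (Fin d → ℝ))) (Bf : Measure (Fin d → ℝ) → Matrix (Fin d) (Fin d) ℝ)
    (bf : Measure (Fin d → ℝ) → Fin d → ℝ) (R D : ℝ) (y : Fin (d + 1) → (Fin d → ℝ)) :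
    Set (Measure (Fin d → ℝ)) :=
  {P | P ∈ N ∧ (∀ i a, |(Bf P *ᵥ y i + bf P : Fin d → ℝ) a| < R) ∧ D < |(Wm (Bf P) (bf P) y).det|}

/-- all candidates -/
def cands {d : ℕ} (N : Set (Measure (Fin d → ℝ))) (Bf : Measure (Fin d → ℝ) → Matrix (Fin d) (Fin d) ℝ)
    (bf : Measure (Fin d → ℝ) → Fin d → ℝ) (R D : ℝ) (P0 : Measure (Fin d → ℝ)) {m : ℕ}
    (S : Fin m → (Fin d → ℝ)) : Set (Measure (Fin d → ℝ)) :=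
  {P0} ∪ ⋃ t : Fin (d + 1) → Fin m, cand N Bf bf R D (fun i => S (t i))

lemma cands_open {d : ℕ} (N : Set (Measure (Fin d → ℝ)))
    (Bf : Measure (Fin d → ℝ) → Matrix (Fin d) (Fin d) ℝ)
    (bf : Measure (Fin d → ℝ) → Fin d → ℝ) (R D : ℝ) (P0 : Measure (Fin d → ℝ)) {m : ℕ}
    (P : Measure (Fin d → ℝ)) :
    IsOpen {S : Fin m → (Fin d → ℝ) | P ∈ cands N Bf bf R D P0 S} := by
  by_cases h0 : P = P0
  · convert isOpen_univ
    simp [cands, h0]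
  by_cases hN : P ∈ N
  swap
  · convert isOpen_empty
    ext S
    simp [cands, h0, cand, hN]
  have e : {S : Fin m → (Fin d → ℝ) | P ∈ cands N Bf bf R D P0 S} =
      ⋃ t : Fin (d + 1) → Fin m, ((⋂ i, ⋂ a, {S | |(Bf P *ᵥ S (t i) + bf P : Fin d → ℝ) a| < R}) ∩
        {S | D < |(Wm (Bf P) (bf P) (fun i => S (t i))).det|}) := by
    ext S
    simp [cands, h0, cand, hN]
  rw [e]
  have caff : ∀ j : Fin m, Continuous fun S : Fin m → (Fin d → ℝ) =>
      (Bf P *ᵥ S j + bf P : Fin d → ℝ) := fun j => by fun_prop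
  refine isOpen_iUnion fun t => ((isOpen_iInter_of_finite fun i => isOpen_iInter_of_finite
    fun a => ?_).inter ?_)
  · exact isOpen_lt ((continuous_apply a).comp (caff (t i))).abs continuous_const
  · refine isOpen_lt continuous_const (Continuous.abs (Continuous.matrix_det ?_))
    refine continuous_pi fun r => continuous_pi fun i => ?_
    exact (continuous_apply r).comp (continuous_hom.comp (caff (t i)))

lemma cands_card {d : ℕ} {N : Set (Measure (Fin d → ℝ))}
    {Bf : Measure (Fin d → ℝ) → Matrix (Fin d) (Fin d) ℝ}
    {bf : Measure (Fin d → ℝ) → Fin d → ℝ} {R D : ℝ} (P0 : Measure (Fin d → ℝ)) {m : ℕ}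
    (S : Fin m → (Fin d → ℝ)) {n₀ : ℝ}
    (hc : ∀ y, (cand N Bf bf R D y).Finite ∧ ((cand N Bf bf R D y).ncard : ℝ) ≤ n₀) :
    (cands N Bf bf R D P0 S).Finite ∧
      ((cands N Bf bf R D P0 S).ncard : ℝ) ≤ 1 + (m : ℝ) ^ (d + 1) * n₀ := by
  classical
  have hfU : (⋃ t : Fin (d + 1) → Fin m, cand N Bf bf R D (fun i => S (t i))).Finite :=
    Set.finite_iUnion fun t => (hc _).1
  refine ⟨(Set.finite_singleton _).union hfU, ?_⟩
  have h1 := Set.ncard_union_le {P0} (⋃ t : Fin (d + 1) → Fin m, cand N Bf bf R D (fun i => S (t i)))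
  rw [Set.ncard_singleton] at h1
  have h2 : (((⋃ t : Fin (d + 1) → Fin m, cand N Bf bf R D (fun i => S (t i))).ncard : ℕ) : ℝ)
      ≤ ∑ t : Fin (d + 1) → Fin m, ((cand N Bf bf R D (fun i => S (t i))).ncard : ℝ) := by
    have h3 := Finset.card_biUnion_le (s := (Finset.univ : Finset (Fin (d + 1) → Fin m)))
      (t := fun t => (hc (fun i => S (t i))).1.toFinset)
    have e : (⋃ t : Fin (d + 1) → Fin m, cand N Bf bf R D (fun i => S (t i))) =
      ((Finset.univ.biUnion fun t : Fin (d + 1) → Fin m =>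
        (hc (fun i => S (t i))).1.toFinset : Finset (Measure (Fin d → ℝ))) : Set _) := by
      ext P; simp
    rw [e, Set.ncard_coe_finset]
    refine le_trans (Nat.cast_le.mpr h3) ?_
    push_cast
    refine Finset.sum_le_sum fun t _ => ?_
    exact Nat.cast_le.mpr (Set.ncard_eq_toFinset_card _ (hc (fun i => S (t i))).1).ge
  have h3 : ∑ t : Fin (d + 1) → Fin m, ((cand N Bf bf R D (fun i => S (t i))).ncard : ℝ)
      ≤ (m : ℝ) ^ (d + 1) * n₀ := by
    refine (Finset.sum_le_sum fun t _ => (hc _).2).trans ?_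
    simp
  unfold cands
  have h1' : ((({P0} ∪ ⋃ t : Fin (d + 1) → Fin m, cand N Bf bf R D (fun i => S (t i))).ncard : ℕ) : ℝ)
    ≤ 1 + ((⋃ t : Fin (d + 1) → Fin m, cand N Bf bf R D (fun i => S (t i))).ncard : ℝ) := by
    exact_mod_cast h1
  linarith

/-- the list of mixtures -/
def mixes {X : Type*} [MeasurableSpace X] {k : ℕ} (Wt : Finset (Fin k → ℝ)) (C : Set (Measure X)) :
    Set (Measure X) := {μ | ∃ w ∈ Wt, ∃ P : Fin k → Measure X, (∀ i, P i ∈ C) ∧ μ = mix w P}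

lemma mixes_card {X : Type*} [MeasurableSpace X] {k : ℕ} (Wt : Finset (Fin k → ℝ))
    {C : Set (Measure X)} (hC : C.Finite) :
    (mixes Wt C).Finite ∧ (mixes Wt C).ncard ≤ Wt.card * C.ncard ^ k := by
  classical
  have e : mixes Wt C = (((Wt ×ˢ Fintype.piFinset (fun _ : Fin k => hC.toFinset)).image
      (fun p => mix p.1 p.2) : Finset (Measure X)) : Set (Measure X)) := by
    ext μ
    simp only [mixes, Set.mem_setOf_eq, Finset.coe_image, Set.mem_image, Finset.mem_coe,
      Finset.mem_product, Fintype.mem_piFinset, Set.Finite.mem_toFinset, Prod.exists]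
    constructor
    · rintro ⟨w, hw, P, hP, rfl⟩
      exact ⟨w, P, ⟨hw, hP⟩, rfl⟩
    · rintro ⟨w, P, ⟨hw, hP⟩, rfl⟩
      exact ⟨w, hw, P, hP, rfl⟩
  rw [e]
  refine ⟨Finset.finite_toSet _, ?_⟩
  rw [Set.ncard_coe_finset]
  refine Finset.card_image_le.trans ?_
  rw [Finset.card_product, Fintype.card_piFinset_const, Set.ncard_eq_toFinset_card C hC]

lemma mixes_meas {d k m : ℕ} (Wt : Finset (Fin k → ℝ))
    (C : (Fin m → (Fin d → ℝ)) → Set (Measure (Fin d → ℝ)))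
    (hC : ∀ P, IsOpen {S | P ∈ C S}) (μ : Measure (Fin d → ℝ)) :
    MeasurableSet {S | μ ∈ mixes Wt (C S)} := by
  have e : {S | μ ∈ mixes Wt (C S)} = ⋃ w : (Fin k → ℝ), ⋃ _ : w ∈ Wt,
      ⋃ P : Fin k → Measure (Fin d → ℝ), ⋃ _ : μ = mix w P, ⋂ i, {S | P i ∈ C S} := by
    ext S
    simp only [mixes, Set.mem_setOf_eq, Set.mem_iUnion, Set.mem_iInter]
    constructor
    · rintro ⟨w, hw, P, hP, h⟩
      exact ⟨w, hw, P, h, hP⟩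
    · rintro ⟨w, hw, P, h, hP⟩
      exact ⟨w, hw, P, hP, h⟩
  rw [e]
  exact (isOpen_iUnion fun w => isOpen_iUnion fun _ => isOpen_iUnion fun P => isOpen_iUnion fun _ =>
    isOpen_iInter_of_finite fun i => hC _).measurableSet
end

section
lemma GG_prob {d : ℕ} {P : Measure (Fin d → ℝ)} (h : P ∈ GG d) : IsProbabilityMeasure P := by
  obtain ⟨B, b, hB, rfl⟩ := h
  exact gm_prob hB b

/-- size bound for the candidates of one tuple -/
noncomputable def n0 (d : ℕ) (α : ℝ) : ℝ :=
  (2 * (4 * Real.sqrt d) / (α / (1000 * d ^ 2))) ^ (d * (d + 1)) / ((1 / 16) ^ (d + 1) / 2) ^ d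

lemma decoder {d k m : ℕ} (hd : 1 ≤ d) (hk : 1 ≤ k) {α β L₁ : ℝ} (hα0 : 0 < α) (hα1 : α < 1)
    (hfail : Real.exp ((d + 1 : ℕ) : ℝ) * (1 - α / (4 * k) * (1 - Real.exp (-1))) ^ m ≤ β)
    (hL : ((⌈(k : ℝ) / α⌉₊ : ℝ) + 1) ^ k * (1 + (m : ℝ) ^ (d + 1) * n0 d α) ^ k ≤ L₁) :
    ∃ A₁ : (Fin m → (Fin d → ℝ)) → Set (Measure (Fin d → ℝ)),
      IsStableListDecoder (kmix k (Gd d)) 3 (5 * α) m (1 - 2 * k * β) L₁ A₁ := by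
  classical
  have hd' : (1 : ℝ) ≤ d := by exact_mod_cast hd
  have hk' : (1 : ℝ) ≤ k := by exact_mod_cast hk
  have hsub : Gd d ⊆ GG d := fun P hP => Gd_rep hP
  obtain ⟨N, hNF, hNsep, hNcov⟩ := net (GG d) (δ := α / 8) (by linarith)
  have hrep : ∀ P : Measure (Fin d → ℝ), ∃ (B : Matrix (Fin d) (Fin d) ℝ) (b : Fin d → ℝ),
      P ∈ N → B.det ≠ 0 ∧ P = gm B b := by
    intro P
    by_cases h : P ∈ N
    · obtain ⟨B, b, h1, h2⟩ := hNF h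
      exact ⟨B, b, fun _ => ⟨h1, h2⟩⟩
    · exact ⟨0, 0, fun h' => (h h').elim⟩
  choose Bf bf hBf using hrep
  set R : ℝ := 4 * Real.sqrt d with hR
  have hs1 : 1 ≤ Real.sqrt d := by rw [Real.one_le_sqrt]; exact hd'
  have hRd : 16 * (d : ℝ) ≤ R ^ 2 := by
    rw [hR, mul_pow, Real.sq_sqrt (by linarith)]; linarith
  set ε : ℝ := α / (1000 * d ^ 2) with hε
  have hε0 : 0 < ε := by positivity
  have hεd : (d : ℝ) ^ 2 * ε = α / 1000 := by rw [hε]; field_simp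
  set D : ℝ := (1 / 16) ^ (d + 1) / 2 with hD
  have hD0 : 0 < D := by positivity
  have hcand : ∀ y, (cand N Bf bf R D y).Finite ∧ ((cand N Bf bf R D y).ncard : ℝ) ≤ n0 d α := by
    intro y
    refine finite_of_bound _ _ fun s hs => ?_
    refine packing hd hε0 (by rw [hεd]; linarith) (by linarith) hD0 y Bf bf s
      (fun p hp => (hBf p (hs hp).1).1) (fun p hp => (hs hp).2.1) (fun p hp => (hs hp).2.2.le) ?_
    intro p hp q hq hne
    rw [hεd, ← (hBf p (hs hp).1).2, ← (hBf q (hs hq).1).2]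
    have := hNsep p (hs hp).1 q (hs hq).1 hne
    linarith
  set P0 : Measure (Fin d → ℝ) := gm 1 0 with hP0
  have hP0G : P0 ∈ GG d := ⟨1, 0, by simp, rfl⟩
  set T : ℕ := ⌈(k : ℝ) / α⌉₊ with hT
  have hTk : (k : ℝ) / α ≤ T := Nat.le_ceil _
  have hT0 : (0 : ℝ) < T := lt_of_lt_of_le (by positivity) hTk
  obtain ⟨Wt, hWt1, hWt2, hWt3⟩ := weights k T (by exact_mod_cast hT0)
  set C : (Fin m → (Fin d → ℝ)) → Set (Measure (Fin d → ℝ)) := fun S => cands N Bf bf R D P0 S with hC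
  have hCG : ∀ S, ∀ P ∈ C S, P ∈ GG d := by
    intro S P hP
    rcases hP with hP | hP
    · rw [Set.mem_singleton_iff.mp hP]; exact hP0G
    · obtain ⟨t, ht⟩ := Set.mem_iUnion.mp hP
      exact hNF ht.1
  refine ⟨fun S => mixes Wt (C S), ?_, ?_⟩
  · intro S
    obtain ⟨h1, h2⟩ := cands_card P0 S hcand
    obtain ⟨h3, h4⟩ := mixes_card Wt h1
    refine ⟨h3, ?_, ?_⟩
    · refine le_trans ?_ hL
      calc ((mixes Wt (C S)).ncard : ℝ) ≤ (Wt.card : ℝ) * ((C S).ncard : ℝ) ^ k := by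
            exact_mod_cast h4
        _ ≤ ((T : ℝ) + 1) ^ k * (1 + (m : ℝ) ^ (d + 1) * n0 d α) ^ k := by
            refine mul_le_mul (by exact_mod_cast hWt1) ?_ (by positivity) (by positivity)
            exact pow_le_pow_left₀ (by positivity) h2 _
    · rintro μ ⟨w, hw, P, hP, rfl⟩
      have : ∀ i, IsProbabilityMeasure (P i) := fun i => GG_prob (hCG S _ (hP i))
      exact mix_prob (hWt2 w hw) P
  · intro g hg
    -- near optimal mixture
    have hne : Nonempty (kmix k (Gd d)) := by
      refine ⟨⟨_, fun i => (1 : ℝ) / k, fun _ => volume.withDensity fun x =>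
        ENNReal.ofReal (gaussianPdf d 0 1 x), fun i => by positivity, ?_, fun i =>
        ⟨0, 1, Matrix.PosDef.one, rfl⟩, rfl⟩⟩
      simp; field_simp
    obtain ⟨⟨f', hf'⟩, hclose⟩ := exists_lt_of_ciInf_lt (f := fun f : kmix k (Gd d) => tvDist g f.1)
      (a := tvDistSet g (kmix k (Gd d)) + α / 4) (by unfold tvDistSet; linarith)
    obtain ⟨w, f, hw0, hw1, hf, hf'eq⟩ := hf'
    have hfmix : f' = mix w f := hf'eq
    simp only [hfmix] at hclose
    have hw : w ∈ Simp k := ⟨hw0, hw1⟩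
    have hfp : ∀ i, IsProbabilityMeasure (f i) := fun i => GG_prob (hsub (hf i))
    have hmp := mix_prob hw f
    set η := tvDist g (mix w f) with hη
    set good : Fin k → Prop := fun i => ∀ E, MeasurableSet E → 3 / 4 ≤ (f i E).toReal →
      w i / 4 ≤ (g E).toReal with hgood
    have hbad : ∑ i with ¬ good i, w i ≤ 2 * η := by
      refine bad_weight hw f g _ fun i hi => ?_
      have := (Finset.mem_filter.mp hi).2
      simp only [hgood] at this
      push Not at this
      obtain ⟨E, h1, h2, h3⟩ := this
      exact ⟨E, h1, h2, h3⟩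
    have hlight : ∑ i with w i < α / k, w i ≤ α := by
      calc ∑ i with w i < α / k, w i ≤ ∑ i : Fin k with w i < α / k, α / k :=
            Finset.sum_le_sum fun i hi => (Finset.mem_filter.mp hi).2.le
        _ ≤ ∑ i : Fin k, α / k := Finset.sum_le_univ_sum_of_nonneg fun i => by positivity
        _ = α := by simp; field_simp
    choose Q hQN hQ using fun i => hNcov (f i) (hsub (hf i))
    set P : Fin k → Measure (Fin d → ℝ) := fun i =>
      if good i ∧ α / k ≤ w i then Q i else P0 with hP
    have hPG : ∀ i, P i ∈ GG d := by
      intro i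
      simp only [hP]
      split_ifs
      · exact hNF (hQN i)
      · exact hP0G
    have hPp : ∀ i, IsProbabilityMeasure (P i) := fun i => GG_prob (hPG i)
    obtain ⟨v, hv, hvw⟩ := hWt3 w hw
    have hvS := hWt2 v hv
    refine ⟨mix v P, mix_prob hvS P, mixes_meas Wt C (fun P => cands_open _ _ _ _ _ _ _) _, ?_, ?_⟩
    · -- probability
      set U : Set (Fin m → (Fin d → ℝ)) := {S | mix v P ∈ mixes Wt (C S)} with hU
      have hUm : MeasurableSet U := mixes_meas Wt C (fun P => cands_open _ _ _ _ _ _ _) _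
      have hβ0 : 0 ≤ β := by
        refine le_trans ?_ hfail
        have he0 := Real.exp_pos (-1)
        have he1 : Real.exp (-1) < 1 := by rw [Real.exp_lt_one_iff]; norm_num
        have hq1 : α / (4 * k) ≤ 1 := by
          rw [div_le_one (by positivity)]; linarith
        have : 0 < α / (4 * k) := by positivity
        have : 0 ≤ (1 - α / (4 * k) * (1 - Real.exp (-1))) := by nlinarith
        positivity
      have hcov : Uᶜ ⊆ ⋃ i, {S | P i ∈ C S}ᶜ := by
        intro S hS
        by_contra hc
        simp only [Set.mem_iUnion, Set.mem_compl_iff, not_exists, not_not] at hc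
        exact hS ⟨v, hv, P, hc, rfl⟩
      have hi : ∀ i, Measure.pi (fun _ : Fin m => g) {S | P i ∈ C S}ᶜ ≤ ENNReal.ofReal β := by
        intro i
        by_cases hgi : good i ∧ α / k ≤ w i
        · have hPi : P i = Q i := by simp only [hP, if_pos hgi]
          rw [hPi]
          obtain ⟨hdet, hQe⟩ := hBf (Q i) (hQN i)
          have hQp : IsProbabilityMeasure (Q i) := GG_prob (hNF (hQN i))
          refine le_trans (le_trans (measure_mono ?_) (select hdet (bf (Q i)) g (q := α / (4 * k))
            (R := R) ?_ ?_ (by linarith) hRd m)) (ENNReal.ofReal_le_ofReal hfail)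
          · intro S hS hS'
            obtain ⟨t, h1, h2⟩ := hS'
            apply hS
            refine Or.inr (Set.mem_iUnion.mpr ⟨t, hQN i, h1, lt_of_lt_of_le ?_ h2⟩)
            rw [hD]
            have : (0 : ℝ) < (1 / 16) ^ (d + 1) := by positivity
            linarith
          · rw [div_le_one (by positivity)]; linarith
          · intro E hE h78
            rw [← hQe] at h78
            have h1 := le_tv (f i) (Q i) hE
            have h2 := hQ i
            have h3 := hgi.1 E hE (by
              have := neg_le_of_abs_le h1
              linarith)
            refine le_trans ?_ h3
            have h4 : α / (4 * k) = (α / k) / 4 := by field_simp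
            rw [h4]
            linarith [hgi.2]
        · have hPi : P i = P0 := by simp only [hP, if_neg hgi]
          have : {S : Fin m → (Fin d → ℝ) | P i ∈ C S}ᶜ = ∅ := by
            ext S; simp [hPi, hC, cands]
          rw [this]; simp
      have hUc : Measure.pi (fun _ : Fin m => g) Uᶜ ≤ ENNReal.ofReal (k * β) := by
        refine (measure_mono hcov).trans ((measure_iUnion_fintype_le _ _).trans ?_)
        refine (Finset.sum_le_sum fun i _ => hi i).trans ?_
        rw [ENNReal.ofReal_mul (by positivity)]
        simp
      have h1 : (1 : ENNReal) ≤ Measure.pi (fun _ : Fin m => g) U + ENNReal.ofReal (k * β) := by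
        have : Measure.pi (fun _ : Fin m => g) U + Measure.pi (fun _ : Fin m => g) Uᶜ = 1 := by
          rw [measure_add_measure_compl hUm, measure_univ]
        rw [← this]
        gcongr
      have hkβ : 0 ≤ k * β := by positivity
      calc ENNReal.ofReal (1 - 2 * k * β) ≤ ENNReal.ofReal (1 - k * β) :=
            ENNReal.ofReal_le_ofReal (by linarith)
        _ = 1 - ENNReal.ofReal (k * β) := by rw [ENNReal.ofReal_sub _ hkβ, ENNReal.ofReal_one]
        _ ≤ _ := tsub_le_iff_right.mpr h1
    · have hvp := mix_prob hvS P
      have h1 := tv_triangle (mix v P) (mix w f) g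
      have h2 := tv_mix hvS.1 hw0 P f
      have h3 : ∑ i, |v i - w i| ≤ α := by
        refine (Finset.sum_le_sum fun i _ => hvw i).trans ?_
        simp only [Finset.sum_const, Finset.card_univ, Fintype.card_fin, nsmul_eq_mul]
        rw [mul_one_div, div_le_iff₀ hT0]
        rw [div_le_iff₀ hα0] at hTk
        linarith
      have h4 : ∑ i, w i * tvDist (P i) (f i) ≤ α / 8 + 2 * η + α := by
        have hpt : ∀ i, w i * tvDist (P i) (f i) ≤ w i * (α / 8) + (if ¬ good i then w i else 0)
            + (if w i < α / k then w i else 0) := by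
          intro i
          have ht := tv_le_one (P i) (f i)
          have hwi := hw0 i
          have hwt : w i * tvDist (P i) (f i) ≤ w i := mul_le_of_le_one_right hwi ht
          have hw8 : 0 ≤ w i * (α / 8) := by positivity
          by_cases h5 : good i
          · by_cases h6 : w i < α / k
            · rw [if_pos h6]; simp only [h5]; simp; linarith
            · have hPi : P i = Q i := by
                simp only [hP, if_pos (show good i ∧ α / k ≤ w i from ⟨h5, not_lt.mp h6⟩)]
              rw [if_neg h6, hPi, tv_comm]
              have := mul_le_mul_of_nonneg_left (hQ i) hwi
              simp only [h5]; simp; linarith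
          · rw [if_pos h5]
            have : 0 ≤ (if w i < α / k then w i else 0) := by split_ifs <;> linarith
            linarith
        refine (Finset.sum_le_sum fun i _ => hpt i).trans ?_
        rw [Finset.sum_add_distrib, Finset.sum_add_distrib, ← Finset.sum_mul, hw1,
          ← Finset.sum_filter, ← Finset.sum_filter]
        linarith
      rw [tv_comm (mix w f) g, ← hη] at h1
      linarith
end

section
lemma n0_le {d : ℕ} (hd : 1 ≤ d) {α : ℝ} (hα0 : 0 < α) (hα1 : α < 1) :
    n0 d α ≤ (2 ^ 18 * d ^ 3 / α) ^ (2 * d ^ 2) := by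
  have hd' : (1 : ℝ) ≤ d := by exact_mod_cast hd
  have hs : Real.sqrt d ≤ d := by
    rw [Real.sqrt_le_left (by linarith)]; nlinarith
  have he : d * (d + 1) ≤ 2 * d ^ 2 := by nlinarith
  have hd3 : (1 : ℝ) ≤ d ^ 3 := one_le_pow₀ hd'
  have hb : (1 : ℝ) ≤ 8000 * d ^ 3 / α := by
    rw [le_div_iff₀ hα0]; linarith
  have h1 : (2 * (4 * Real.sqrt d) / (α / (1000 * d ^ 2))) ^ (d * (d + 1))
      ≤ (8000 * (d : ℝ) ^ 3 / α) ^ (2 * d ^ 2) := by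
    refine le_trans (pow_le_pow_left₀ (by positivity) ?_ _) (pow_le_pow_right₀ hb he)
    rw [div_div_eq_mul_div]
    refine div_le_div_of_nonneg_right ?_ hα0.le
    nlinarith [sq_nonneg (d : ℝ), mul_le_mul_of_nonneg_right hs (sq_nonneg (d : ℝ))]
  have h2 : ((((1 : ℝ) / 16) ^ (d + 1) / 2) ^ d)⁻¹ ≤ 32 ^ (2 * d ^ 2) := by
    have : ((((1 : ℝ) / 16) ^ (d + 1) / 2) ^ d)⁻¹ = 2 ^ d * 16 ^ (d * (d + 1)) := by
      rw [← inv_pow, inv_div, one_div, inv_pow, div_inv_eq_mul, mul_pow, ← pow_mul,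
        mul_comm (d + 1) d]
    rw [this]
    have e : (32 : ℝ) ^ (2 * d ^ 2) = 2 ^ (2 * d ^ 2) * 16 ^ (2 * d ^ 2) := by
      rw [← mul_pow]; norm_num
    rw [e]
    gcongr
    · norm_num
    · nlinarith
    · norm_num
  unfold n0
  rw [div_eq_mul_inv]
  calc _ ≤ (8000 * (d : ℝ) ^ 3 / α) ^ (2 * d ^ 2) * 32 ^ (2 * d ^ 2) := by gcongr
    _ = (8000 * (d : ℝ) ^ 3 / α * 32) ^ (2 * d ^ 2) := by rw [mul_pow]
    _ ≤ _ := by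
      refine pow_le_pow_left₀ (by positivity) ?_ _
      rw [div_mul_eq_mul_div]
      refine div_le_div_of_nonneg_right ?_ hα0.le
      nlinarith

/-- numerical core -/
lemma numcore {d : ℕ} (hd : 1 ≤ d) {α ℓ Y L : ℝ} (hα0 : 0 < α) (hα1 : α < 1) (hℓ : 1 ≤ ℓ)
    (hY : 1 / α ≤ Y) {m : ℕ} (hm : 100 * d ≤ m)
    (hL : ((d : ℝ) * ℓ) ^ (100 * (d : ℝ) ^ 2 * Real.log (d / α)) ≤ L) :
    6 * (500 * d * Y) ^ (2 * d) * (2 ^ 18 * d ^ 3 / α) ^ (2 * d ^ 2) ≤ L * (27 * Y) ^ m := by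
  have hd' : (1 : ℝ) ≤ d := by exact_mod_cast hd
  have hα : 1 < 1 / α := by rw [lt_div_iff₀ hα0]; linarith
  have hY1 : 1 ≤ Y := by linarith
  have hlog : 0 ≤ Real.log (d / α) := Real.log_nonneg (by rw [le_div_iff₀ hα0]; linarith)
  rcases Nat.eq_or_lt_of_le hd with h | h
  · subst h
    have hL1 : 1 ≤ L := by
      refine le_trans (Real.one_le_rpow ?_ (by positivity)) hL
      simpa using hℓ
    have h1 : (27 * Y) ^ 100 ≤ (27 * Y) ^ m := pow_le_pow_right₀ (by linarith) (by simpa using hm)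
    have h2 : (2 ^ 18 * ((1 : ℕ) : ℝ) ^ 3 / α) ≤ 2 ^ 18 * Y := by
      rw [mul_div_assoc]
      gcongr
      simpa using hY
    have h3 : 6 * (500 * ((1 : ℕ) : ℝ) * Y) ^ (2 * 1) * (2 ^ 18 * ((1 : ℕ) : ℝ) ^ 3 / α) ^ (2 * 1 ^ 2)
        ≤ 6 * (500 * Y) ^ 2 * (2 ^ 18 * Y) ^ 2 := by
      refine mul_le_mul (le_of_eq (by norm_num)) ?_ (by positivity) (by positivity)
      exact pow_le_pow_left₀ (by positivity) h2 _
    have h4 : 6 * (500 * Y) ^ 2 * (2 ^ 18 * Y) ^ 2 ≤ (27 * Y) ^ 100 := by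
      have e : (27 * Y) ^ 100 = 27 ^ 100 * (Y ^ 4 * Y ^ 96) := by ring
      have e2 : 6 * (500 * Y) ^ 2 * (2 ^ 18 * Y) ^ 2 = 6 * 500 ^ 2 * 2 ^ 36 * Y ^ 4 := by ring
      rw [e, e2]
      have : Y ^ 4 ≤ Y ^ 4 * Y ^ 96 := le_mul_of_one_le_right (by positivity) (one_le_pow₀ hY1)
      exact mul_le_mul (by norm_num) this (by positivity) (by positivity)
    have h5 : (27 * Y) ^ m ≤ L * (27 * Y) ^ m := le_mul_of_one_le_left (by positivity) hL1
    linarith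
  · have h2' : (2 : ℝ) ≤ d := by exact_mod_cast h
    set D : ℝ := d / α with hD
    have hdD : (d : ℝ) ≤ D := by rw [hD, le_div_iff₀ hα0]; nlinarith
    have hD2 : 2 ≤ D := by linarith
    have hLD : D ^ (50 * d ^ 2) ≤ L := by
      refine le_trans ?_ hL
      have hx : 0 ≤ 100 * (d : ℝ) ^ 2 * Real.log D := by positivity
      refine le_trans ?_ (Real.rpow_le_rpow (by norm_num) (show (2 : ℝ) ≤ d * ℓ by nlinarith) hx)
      rw [Real.rpow_def_of_pos (by norm_num)]
      have e : D ^ (50 * d ^ 2) = Real.exp (Real.log D * ((50 * d ^ 2 : ℕ) : ℝ)) := by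
        rw [← Real.rpow_def_of_pos (by linarith), Real.rpow_natCast]
      rw [e]
      apply Real.exp_le_exp.mpr
      have := Real.log_two_gt_d9
      have h3 : 0 ≤ Real.log D * (d : ℝ) ^ 2 := by positivity
      push_cast
      nlinarith
    have a1 : (2 ^ 18 * (d : ℝ) ^ 3 / α) ≤ D ^ 21 := by
      have e1 : (2 ^ 18 * (d : ℝ) ^ 3 / α) = 2 ^ 18 * d ^ 2 * D := by rw [hD]; ring
      have e2 : D ^ 21 = D ^ 18 * D ^ 2 * D := by ring
      rw [e1, e2]
      gcongr
    have a2 : (2 ^ 18 * (d : ℝ) ^ 3 / α) ^ (2 * d ^ 2) ≤ D ^ (42 * d ^ 2) := by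
      refine (pow_le_pow_left₀ (by positivity) a1 _).trans ?_
      rw [← pow_mul]
      exact pow_le_pow_right₀ (by linarith) (by nlinarith)
    have a3 : (d : ℝ) ^ (2 * d) ≤ D ^ (8 * d ^ 2) := by
      refine (pow_le_pow_left₀ (by positivity) hdD _).trans ?_
      exact pow_le_pow_right₀ (by linarith) (by nlinarith)
    have a4 : 6 * (500 * Y) ^ (2 * d) ≤ (27 * Y) ^ m := by
      have b1 : (27 * Y) ^ (100 * d) ≤ (27 * Y) ^ m := pow_le_pow_right₀ (by linarith) hm
      refine le_trans ?_ b1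
      rw [pow_mul, pow_mul]
      have b2 : (6 : ℝ) ≤ 6 ^ d := le_self_pow₀ (by norm_num) (by omega)
      calc 6 * ((500 * Y) ^ 2) ^ d ≤ 6 ^ d * ((500 * Y) ^ 2) ^ d := by gcongr
        _ = (6 * (500 * Y) ^ 2) ^ d := by rw [← mul_pow]
        _ ≤ _ := by
          refine pow_le_pow_left₀ (by positivity) ?_ _
          have e : (27 * Y) ^ 100 = 27 ^ 100 * (Y ^ 2 * Y ^ 98) := by ring
          have e2 : 6 * (500 * Y) ^ 2 = 6 * 500 ^ 2 * Y ^ 2 := by ring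
          rw [e, e2]
          have : Y ^ 2 ≤ Y ^ 2 * Y ^ 98 := le_mul_of_one_le_right (by positivity) (one_le_pow₀ hY1)
          exact mul_le_mul (by norm_num) this (by positivity) (by positivity)
    calc 6 * (500 * d * Y) ^ (2 * d) * (2 ^ 18 * d ^ 3 / α) ^ (2 * d ^ 2)
        = (6 * (500 * Y) ^ (2 * d)) * ((d : ℝ) ^ (2 * d) * (2 ^ 18 * d ^ 3 / α) ^ (2 * d ^ 2)) := by
          rw [show 500 * (d : ℝ) * Y = 500 * Y * d by ring, mul_pow (500 * Y)]; ring
      _ ≤ (27 * Y) ^ m * (D ^ (8 * d ^ 2) * D ^ (42 * d ^ 2)) := by gcongr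
      _ = D ^ (50 * d ^ 2) * (27 * Y) ^ m := by rw [← pow_add]; ring_nf
      _ ≤ _ := by gcongr
end

set_option maxHeartbeats 1000000 in
theorem statement3 :
    ∃ c : ℝ, 0 < c ∧ ∀ d k : ℕ, 1 ≤ d → 1 ≤ k → ∀ α β : ℝ, α ∈ Set.Ioo (0 : ℝ) 1 →
      β ∈ Set.Ioc (0 : ℝ) (Real.exp 1)⁻¹ →
      ∀ m L : ℕ, m = ⌈c * d * Real.log (1 / β)⌉₊ →
        L = ⌈((d : ℝ) * Real.log (1 / β)) ^ (c * (d : ℝ) ^ 2 * Real.log (d / α))⌉₊ →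
        ∀ m₁ : ℕ, m₁ = ⌈(2 * (m : ℝ) * k + 8 * k * Real.log (1 / β)) / α⌉₊ →
        ∀ L₁ : ℝ, L₁ = ((L : ℝ) * k / α) ^ k *
            (10 * Real.exp 1 * k * Real.log (1 / β) / α) ^ (m * k) →
        ∃ A₁ : (Fin m₁ → (Fin d → ℝ)) → Set (Measure (Fin d → ℝ)),
          IsStableListDecoder (kmix k (Gd d)) 3 (5 * α) m₁ (1 - 2 * k * β) L₁ A₁ := by
  refine ⟨100, by norm_num, ?_⟩
  intro d k hd hk α β hα hβ m L hm hL m₁ hm₁ L₁ hL₁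
  obtain ⟨hα0, hα1⟩ := hα
  obtain ⟨hβ0, hβ1⟩ := hβ
  have hd' : (1 : ℝ) ≤ d := by exact_mod_cast hd
  have hk' : (1 : ℝ) ≤ k := by exact_mod_cast hk
  set ℓ := Real.log (1 / β) with hℓ
  have hβe : β = Real.exp (-ℓ) := by
    rw [hℓ, one_div, Real.log_inv, neg_neg, Real.exp_log hβ0]
  have hℓ1 : 1 ≤ ℓ := by
    rw [hβe, ← Real.exp_neg, Real.exp_le_exp] at hβ1
    linarith
  have hdℓ : 1 ≤ d * ℓ := by nlinarith
  have hm_lo : 100 * d * ℓ ≤ m := by rw [hm]; exact Nat.le_ceil _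
  have hm_hi : (m : ℝ) ≤ 100 * d * ℓ + 1 := by
    rw [hm]; exact (Nat.ceil_lt_add_one (by positivity)).le
  have hm1_lo : (2 * (m : ℝ) * k + 8 * k * ℓ) / α ≤ m₁ := by rw [hm₁]; exact Nat.le_ceil _
  have hm1_hi : (m₁ : ℝ) ≤ (2 * (m : ℝ) * k + 8 * k * ℓ) / α + 1 := by
    rw [hm₁]; exact (Nat.ceil_lt_add_one (by positivity)).le
  have hLlo : ((d : ℝ) * ℓ) ^ (100 * (d : ℝ) ^ 2 * Real.log (d / α)) ≤ L := by
    rw [hL]; exact Nat.le_ceil _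
  have hα : 1 < 1 / α := by rw [lt_div_iff₀ hα0]; linarith
  set Y := k * ℓ / α with hY
  have hkℓ : 1 ≤ k * ℓ := by nlinarith
  have hYα : 1 / α ≤ Y := by rw [hY]; gcongr
  have hm100 : 100 * d ≤ m := by
    have : (100 : ℝ) * d ≤ m := by nlinarith
    exact_mod_cast this
  refine decoder hd hk hα0 hα1 ?_ ?_
  · -- failure probability
    set q := α / (4 * k) with hq
    have hq0 : 0 < q := by positivity
    have he1 : Real.exp (-1) ≤ 1 / 2 := by
      have h2 := Real.add_one_le_exp (1 : ℝ)
      rw [Real.exp_neg, one_div]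
      exact inv_anti₀ (by norm_num) (by linarith)
    have he0 := Real.exp_pos (-1)
    have hq1 : q ≤ 1 := by rw [hq, div_le_one (by positivity)]; linarith
    have h0 : 0 ≤ 1 - q * (1 - Real.exp (-1)) := by nlinarith
    have h1 : 1 - q * (1 - Real.exp (-1)) ≤ Real.exp (-(q / 2)) := by
      have := Real.add_one_le_exp (-(q / 2))
      nlinarith
    have h2 : (1 - q * (1 - Real.exp (-1))) ^ m₁ ≤ Real.exp (m₁ * (-(q / 2))) := by
      rw [Real.exp_nat_mul]
      exact pow_le_pow_left₀ h0 h1 _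
    have h3 : q * ((2 * (m : ℝ) * k + 8 * k * ℓ) / α) ≤ q * m₁ := by gcongr
    have h4 : q * ((2 * (m : ℝ) * k + 8 * k * ℓ) / α) = m / 2 + 2 * ℓ := by
      rw [hq]; field_simp; ring
    rw [hβe]
    refine (mul_le_mul_of_nonneg_left h2 (Real.exp_pos _).le).trans ?_
    rw [← Real.exp_add]
    apply Real.exp_le_exp.mpr
    push_cast
    nlinarith
  · -- list size
    have hT : ((⌈(k : ℝ) / α⌉₊ : ℝ) + 1) ≤ 3 * (k / α) := by
      have h1 := (Nat.ceil_lt_add_one (show 0 ≤ (k : ℝ) / α by positivity)).le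
      have h2 : 1 ≤ (k : ℝ) / α := by rw [le_div_iff₀ hα0]; linarith
      linarith
    have hm1 : (m₁ : ℝ) ≤ 500 * d * Y := by
      refine hm1_hi.trans ?_
      have h1 : 1 ≤ Y := by linarith
      have h2 : (2 * (m : ℝ) * k + 8 * k * ℓ) / α ≤ 400 * d * Y := by
        rw [hY, mul_div_assoc', div_le_div_iff_of_pos_right hα0]
        have h3 : (m : ℝ) * k ≤ (100 * d * ℓ + 1) * k := by gcongr
        have h5 : (k : ℝ) ≤ k * ℓ := le_mul_of_one_le_right (by linarith) hℓ1
        have h6 : k * ℓ ≤ d * (k * ℓ) := le_mul_of_one_le_left (by linarith) hd'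
        linarith
      have h7 : 1 ≤ d * Y := one_le_mul_of_one_le_of_one_le hd' h1
      linarith
    have hm1one : (1 : ℝ) ≤ m₁ := by
      refine le_trans ?_ hm1_lo
      rw [le_div_iff₀ hα0]
      have : (0 : ℝ) ≤ 2 * (m : ℝ) * k := by positivity
      nlinarith
    set Z := (2 ^ 18 * (d : ℝ) ^ 3 / α) ^ (2 * d ^ 2) with hZ
    have hZ1 : 1 ≤ Z := by
      apply one_le_pow₀
      rw [le_div_iff₀ hα0]
      have : (1 : ℝ) ≤ d ^ 3 := one_le_pow₀ hd'
      linarith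
    have hn0 := n0_le hd hα0 hα1
    rw [← hZ] at hn0
    have h1 : 1 + (m₁ : ℝ) ^ (d + 1) * n0 d α ≤ 2 * ((500 * d * Y) ^ (2 * d) * Z) := by
      have a1 : (m₁ : ℝ) ^ (d + 1) ≤ (500 * d * Y) ^ (2 * d) :=
        (pow_le_pow_right₀ hm1one (by omega)).trans (pow_le_pow_left₀ (by positivity) hm1 _)
      have a2 : (1 : ℝ) ≤ (500 * d * Y) ^ (2 * d) := one_le_pow₀ (hm1one.trans hm1)
      have a3 : (m₁ : ℝ) ^ (d + 1) * n0 d α ≤ (500 * d * Y) ^ (2 * d) * Z := by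
        refine (mul_le_mul_of_nonneg_left hn0 (by positivity)).trans ?_
        gcongr
      have a4 : 1 ≤ (500 * d * Y) ^ (2 * d) * Z := one_le_mul_of_one_le_of_one_le a2 hZ1
      linarith
    have h2 := numcore hd hα0 hα1 hℓ1 hYα hm100 hLlo
    rw [← hZ] at h2
    have h3 : 27 * Y ≤ 10 * Real.exp 1 * k * ℓ / α := by
      have := Real.exp_one_gt_d9
      have e : 10 * Real.exp 1 * k * ℓ / α = 10 * Real.exp 1 * Y := by rw [hY]; ring
      rw [e]
      gcongr
      linarith
    have hn00 : 0 ≤ n0 d α := by unfold n0; positivity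
    have hY0 : 0 ≤ Y := by positivity
    rw [hL₁, pow_mul, ← mul_pow, ← mul_pow]
    refine pow_le_pow_left₀ (by positivity) ?_ _
    calc ((⌈(k : ℝ) / α⌉₊ : ℝ) + 1) * (1 + (m₁ : ℝ) ^ (d + 1) * n0 d α)
        ≤ 3 * (k / α) * (2 * ((500 * d * Y) ^ (2 * d) * Z)) := by gcongr
      _ = (k / α) * (6 * (500 * d * Y) ^ (2 * d) * Z) := by ring
      _ ≤ (k / α) * (L * (27 * Y) ^ m) := by gcongr
      _ ≤ (k / α) * (L * (10 * Real.exp 1 * k * ℓ / α) ^ m) := by gcongr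
      _ = _ := by ring
end
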